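/- arXiv:1610.05406 — 2 statements merged into one kernel-verified Lean document; each statement's English description precedes it below -/
import Mathlib

section
/- Let Δ ≥ 7 be an integer and let G be a finite simple graph with no 3-regular subgraph. If the maximum degree of G is at most Δ and Mad(G) ≤ 3, then χ'_s(G) ≤ 3Δ. -/
open scoped Classical

namespace StrongEC

/-- Two edges of `G` conflict for strong edge-coloring: they are distinct and either share
an endpoint or are both adjacent to a common edge of `G`. -/
def Conflict {V : Type*} (G : SimpleGraph V) (e e' : Sym2 V) : Prop :=
  e ≠ e' ∧ ((∃ v, v ∈ e ∧ v ∈ e') ∨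
    ∃ f ∈ G.edgeSet, (∃ v, v ∈ e ∧ v ∈ f) ∧ (∃ w, w ∈ e' ∧ w ∈ f))

/-- `C` is a strong edge-coloring of `G` with `k` colors. -/
def IsStrongColoring {V : Type*} (G : SimpleGraph V) {k : ℕ} (C : Sym2 V → Fin k) : Prop :=
  ∀ e ∈ G.edgeSet, ∀ e' ∈ G.edgeSet, Conflict G e e' → C e ≠ C e'

/-- `G` admits a strong `k`-edge-coloring. -/
def HasStrongColoring {V : Type*} (G : SimpleGraph V) (k : ℕ) : Prop :=
  ∃ C : Sym2 V → Fin k, IsStrongColoring G C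

/-- The strong chromatic index of `G`: the least `k` such that `G` admits a strong
`k`-edge-coloring. -/
noncomputable def strongChromaticIndex {V : Type*} (G : SimpleGraph V) : ℕ :=
  sInf {k | HasStrongColoring G k}

/-- The maximum average degree of a finite graph `G`: the supremum over nonempty vertex
subsets `A` of `2 * e(A) / |A|`, where `e(A)` is the number of edges of `G` inside `A`
(this equals the maximum of `2|E(H)|/|V(H)|` over all subgraphs `H` with at least one
vertex). -/
noncomputable def mad {V : Type*} (G : SimpleGraph V) : ℝ :=
  sSup {x : ℝ | ∃ A : Finset V, A.Nonempty ∧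
    x = 2 * ({e ∈ G.edgeSet | ∀ v ∈ e, v ∈ A}.ncard : ℝ) / (A.card : ℝ)}

/-- `G` has a 3-regular subgraph: a subgraph on a nonempty vertex set all of whose
vertices have degree exactly 3 in it. -/
def Has3RegularSubgraph {V : Type*} (G : SimpleGraph V) : Prop :=
  ∃ H : SimpleGraph V, H ≤ G ∧ H.support.Nonempty ∧
    ∀ v ∈ H.support, (H.neighborSet v).ncard = 3

set_option linter.all false

/-- Neighbours as a finset. -/
noncomputable def nb {V : Type*} [Fintype V] (G : SimpleGraph V) (v : V) : Finset V :=
  Finset.univ.filter (fun u => G.Adj v u)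

theorem mem_nb {V : Type*} [Fintype V] {G : SimpleGraph V} {v u : V} :
    u ∈ nb G v ↔ G.Adj v u := by simp [nb]

/-- Degree. -/
noncomputable def dg {V : Type*} [Fintype V] (G : SimpleGraph V) (v : V) : ℕ := (nb G v).card

theorem nb_mono {V : Type*} [Fintype V] {G G' : SimpleGraph V} (h : G ≤ G') (v : V) :
    nb G v ⊆ nb G' v := by
  intro u hu
  rw [mem_nb] at *
  exact h hu

theorem dg_mono {V : Type*} [Fintype V] {G G' : SimpleGraph V} (h : G ≤ G') (v : V) :
    dg G v ≤ dg G' v := Finset.card_le_card (nb_mono h v)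

theorem dg_pos {V : Type*} [Fintype V] {G : SimpleGraph V} {u v : V} (h : G.Adj u v) :
    1 ≤ dg G u := Finset.card_pos.2 ⟨v, mem_nb.2 h⟩

/-- Delete edges given by a relation. -/
def dl {V : Type*} (G : SimpleGraph V) (P : V → V → Prop) : SimpleGraph V where
  Adj a b := G.Adj a b ∧ ¬ P a b ∧ ¬ P b a
  symm := ⟨fun a b h => ⟨h.1.symm, h.2.2, h.2.1⟩⟩
  loopless := ⟨fun a h => G.loopless.irrefl a h.1⟩

theorem dl_adj {V : Type*} {G : SimpleGraph V} {P : V → V → Prop} {a b : V} :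
    (dl G P).Adj a b ↔ G.Adj a b ∧ ¬ P a b ∧ ¬ P b a := Iff.rfl

theorem dl_le {V : Type*} (G : SimpleGraph V) (P : V → V → Prop) : dl G P ≤ G :=
  fun _ _ h => h.1

/-- Local colour systems. -/
structure Sys {V : Type*} {D : ℕ} (G : SimpleGraph V) (M : V → Finset (Fin (3 * D))) : Prop where
  one : ∀ p q, G.Adj p q → (M p ∩ M q).card = 1
  inj : ∀ p q r x, G.Adj p q → G.Adj p r → q ≠ r → x ∈ M p → x ∈ M q → x ∉ M r

def Tight {V : Type*} {D : ℕ} (G : SimpleGraph V) (M : V → Finset (Fin (3 * D))) (p : V) : Prop :=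
  ∀ x ∈ M p, ∃ r, G.Adj p r ∧ x ∈ M r

structure St {V : Type*} {D : ℕ} (G : SimpleGraph V) (R : Finset V)
    (M : V → Finset (Fin (3 * D))) : Prop where
  sys : Sys G M
  full : ∀ p, p ∉ R → (M p).card = D
  tight : ∀ p, p ∈ R → Tight G M p

def Good {V : Type*} (D : ℕ) (G : SimpleGraph V) : Prop :=
  ∃ M : V → Finset (Fin (3 * D)), St G ∅ M

section
variable {V : Type*} [Fintype V] {D : ℕ}

theorem Sys.eqs {G : SimpleGraph V} {M : V → Finset (Fin (3 * D))} (h : Sys G M) {p q : V} {x y}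
    (a : G.Adj p q) (hx : x ∈ M p) (hx' : x ∈ M q) (hy : y ∈ M p) (hy' : y ∈ M q) : x = y := by
  have := h.one p q a
  exact Finset.card_le_one.1 this.le x (Finset.mem_inter.2 ⟨hx, hx'⟩) y (Finset.mem_inter.2 ⟨hy, hy'⟩)

theorem Sys.ex {G : SimpleGraph V} {M : V → Finset (Fin (3 * D))} (h : Sys G M) {p q : V}
    (a : G.Adj p q) : ∃ x, x ∈ M p ∧ x ∈ M q := by
  have := h.one p q a
  obtain ⟨x, hx⟩ := Finset.card_pos.1 (by omega : 0 < (M p ∩ M q).card)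
  exact ⟨x, Finset.mem_inter.1 hx⟩

theorem Sys.mono {G G' : SimpleGraph V} {M : V → Finset (Fin (3 * D))} (h : Sys G M)
    (hle : G' ≤ G) : Sys G' M :=
  ⟨fun p q a => h.one p q (hle a), fun p q r x a b => h.inj p q r x (hle a) (hle b)⟩

/-- used colours -/
noncomputable def used (G : SimpleGraph V) (M : V → Finset (Fin (3 * D))) (p : V) :
    Finset (Fin (3 * D)) := (nb G p).biUnion (fun r => M p ∩ M r)

theorem mem_used {G : SimpleGraph V} {M : V → Finset (Fin (3 * D))} {p : V} {x} :
    x ∈ used G M p ↔ x ∈ M p ∧ ∃ r, G.Adj p r ∧ x ∈ M r := by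
  simp only [used, Finset.mem_biUnion, mem_nb, Finset.mem_inter]
  tauto

theorem card_used {G : SimpleGraph V} {M : V → Finset (Fin (3 * D))} (h : Sys G M) (p : V) :
    (used G M p).card = dg G p := by
  unfold used
  rw [Finset.card_biUnion]
  · rw [dg, Finset.card_eq_sum_ones]
    exact Finset.sum_congr rfl (fun r hr => h.one p r (mem_nb.1 hr))
  · intro a ha b hb hab
    change Disjoint _ _
    rw [Finset.disjoint_left]
    intro x hx hx'
    rw [Finset.mem_inter] at hx hx'
    exact h.inj p a b x (mem_nb.1 ha) (mem_nb.1 hb) hab hx.1 hx.2 hx'.2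

theorem Tight.card {G : SimpleGraph V} {M : V → Finset (Fin (3 * D))} (h : Sys G M) {p : V}
    (t : Tight G M p) : (M p).card = dg G p := by
  rw [← card_used h p]
  congr 1
  ext x
  rw [mem_used]
  exact ⟨fun hx => ⟨hx, t x hx⟩, fun hx => hx.1⟩

theorem St.card_tight {G : SimpleGraph V} {R} {M : V → Finset (Fin (3 * D))} (h : St G R M) {p : V}
    (hp : p ∈ R) : (M p).card = dg G p := (h.tight p hp).card h.sys

theorem St.card_le {G : SimpleGraph V} {R} {M : V → Finset (Fin (3 * D))} (h : St G R M) 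
    (hd : ∀ p, dg G p ≤ D) (p : V) : (M p).card ≤ D := by
  by_cases hp : p ∈ R
  · rw [h.card_tight hp]; exact hd p
  · exact (h.full p hp).le

/-- a free colour at a full vertex -/
theorem St.free {G : SimpleGraph V} {R} {M : V → Finset (Fin (3 * D))} (h : St G R M) {q : V}
    (hq : q ∉ R) (F : Finset (Fin (3 * D))) (hF : F.card + dg G q < D) :
    ∃ c ∈ M q, c ∉ F ∧ ∀ r, G.Adj q r → c ∉ M r := by
  have h1 : (F ∪ used G M q).card < (M q).card := by
    refine lt_of_le_of_lt (Finset.card_union_le _ _) ?_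
    rw [card_used h.sys, h.full q hq]; exact hF
  obtain ⟨c, hc, hc'⟩ := Finset.exists_mem_notMem_of_card_lt_card h1
  rw [Finset.mem_union, mem_used] at hc'
  push Not at hc'
  exact ⟨c, hc, hc'.1, fun r hr => hc'.2 hc r hr⟩

theorem exists_col (F : Finset (Fin (3 * D))) (hF : F.card < 3 * D) : ∃ x, x ∉ F := by
  by_contra hcon
  push Not at hcon
  have : F = Finset.univ := Finset.eq_univ_iff_forall.2 hcon
  rw [this] at hF
  simp at hF

theorem St.reset {G0 G1 : SimpleGraph V} {R0 R : Finset V} {M0 : V → Finset (Fin (3 * D))}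
    (h : St G0 R0 M0) (hle : G1 ≤ G0) (hR : R0 ⊆ R) :
    ∃ M, St G1 R M ∧ (∀ p, M p ⊆ M0 p) ∧ (∀ p, p ∉ R → M p = M0 p) ∧
      (∀ p q, G0.Adj p q → ¬ G1.Adj p q → p ∈ R → Disjoint (M p) (M q)) := by
  have h1 := h.sys.mono hle
  have hsub : ∀ p, (if p ∈ R then used G1 M0 p else M0 p) ⊆ M0 p := by
    intro p
    split_ifs
    · intro x hx; exact (mem_used.1 hx).1
    · exact Finset.Subset.refl _
  have hmem : ∀ p q x, G1.Adj p q → x ∈ M0 p → x ∈ M0 q →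
      x ∈ (if p ∈ R then used G1 M0 p else M0 p) := by
    intro p q x a hx hy
    split_ifs
    · exact mem_used.2 ⟨hx, q, a, hy⟩
    · exact hx
  refine ⟨fun p => if p ∈ R then used G1 M0 p else M0 p, ⟨⟨?_, ?_⟩, ?_, ?_⟩, hsub, ?_, ?_⟩
  · intro p q a
    rw [← h1.one p q a]
    congr 1
    ext x
    simp only [Finset.mem_inter]
    constructor
    · intro hx
      exact ⟨hsub p hx.1, hsub q hx.2⟩
    · intro hx
      exact ⟨hmem p q x a hx.1 hx.2, hmem q p x a.symm hx.2 hx.1⟩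
  · intro p q r x a b n hp hq hr
    exact h1.inj p q r x a b n (hsub p hp) (hsub q hq) (hsub r hr)
  · intro p hp
    simp only [hp, if_false]
    exact h.full p (fun hh => hp (hR hh))
  · intro p hp x hx
    simp only [hp, if_true] at hx
    obtain ⟨hx, r, a, hr⟩ := mem_used.1 hx
    exact ⟨r, a, hmem r p x a.symm hr hx⟩
  · intro p hp
    simp only [hp, if_false]
  · intro p q a na hp
    rw [Finset.disjoint_left]
    intro x hx hx'
    simp only [hp, if_true] at hx
    obtain ⟨hx, r, b, hr⟩ := mem_used.1 hx
    have hrq : r ≠ q := by rintro rfl; exact na b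
    exact h.sys.inj p r q x (hle b) a hrq hx hr (hsub q hx')

theorem St.add {G1 G2 : SimpleGraph V} {R : Finset V} {M : V → Finset (Fin (3 * D))}
    (h : St G1 R M) {p q : V} (hpq : p ≠ q)
    (hG : ∀ a b, G2.Adj a b ↔ G1.Adj a b ∨ (a = p ∧ b = q) ∨ (a = q ∧ b = p))
    (c : Fin (3 * D)) (hc : ∀ x, x ∈ M p → x ∈ M q → x = c)
    (hp : ∀ r, G1.Adj p r → c ∉ M r) (hq : ∀ r, G1.Adj q r → c ∉ M r)
    (hpR : p ∈ R ∨ c ∈ M p) (hqR : q ∈ R ∨ c ∈ M q) :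
    ∃ M', St G2 R M' ∧ (∀ r, r ≠ p → r ≠ q → M' r = M r) ∧ M' p = insert c (M p) ∧
      M' q = insert c (M q) := by
  set M' : V → Finset (Fin (3 * D)) := fun r => if r = p ∨ r = q then insert c (M r) else M r
    with hM'
  have e1 : M' p = insert c (M p) := by simp [hM']
  have e2 : M' q = insert c (M q) := by simp [hM']
  have e3 : ∀ r, r ≠ p → r ≠ q → M' r = M r := by
    intro r a b; simp [hM', a, b]
  have sub : ∀ r, M r ⊆ M' r := by
    intro r x hx
    by_cases hr : r = p ∨ r = q
    · simp [hM', hr, hx]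
    · simp [hM', hr, hx]
  have mem : ∀ r x, x ∈ M' r → x ∈ M r ∨ (x = c ∧ (r = p ∨ r = q)) := by
    intro r x hx
    by_cases hr : r = p ∨ r = q
    · simp only [hM', hr, if_true, Finset.mem_insert] at hx
      tauto
    · simp only [hM', hr, if_false] at hx
      exact Or.inl hx
  have nc : ∀ a b, G1.Adj a b → (a = p ∨ a = q) → c ∉ M b := by
    rintro a b hab (rfl | rfl)
    · exact hp b hab
    · exact hq b hab
  -- key: for a G1 edge
  by_cases hadj : G1.Adj p q
  · -- then nothing really new
    exfalso
    obtain ⟨x, hx, hy⟩ := h.sys.ex hadj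
    have := hc x hx hy
    subst this
    exact hp q hadj hy
  have key : ∀ a b x, G1.Adj a b → x ∈ M' a → x ∈ M' b → x ∈ M a ∧ x ∈ M b := by
    intro a b x hab ha hb
    rcases mem a x ha with ha1 | ⟨hxc, ha1⟩
    · rcases mem b x hb with hb1 | ⟨hxc, hb1⟩
      · exact ⟨ha1, hb1⟩
      · exact absurd (hxc ▸ ha1) (nc b a hab.symm hb1)
    · rcases mem b x hb with hb1 | ⟨_, hb1⟩
      · exact absurd (hxc ▸ hb1) (nc a b hab ha1)
      · rcases ha1 with rfl | rfl <;> rcases hb1 with rfl | rfl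
        · exact absurd hab (G1.loopless.irrefl _)
        · exact absurd hab hadj
        · exact absurd hab.symm hadj
        · exact absurd hab (G1.loopless.irrefl _)
  have keyn : ∀ x, x ∈ M' p → x ∈ M' q → x = c := by
    intro x hx hy
    rw [e1, Finset.mem_insert] at hx
    rw [e2, Finset.mem_insert] at hy
    rcases hx with rfl | hx
    · rfl
    · rcases hy with rfl | hy
      · rfl
      · exact hc x hx hy
  have cp : c ∈ M' p := by rw [e1]; exact Finset.mem_insert_self _ _
  have cq : c ∈ M' q := by rw [e2]; exact Finset.mem_insert_self _ _
  refine ⟨M', ⟨⟨?_, ?_⟩, ?_, ?_⟩, e3, e1, e2⟩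
  · intro a b hab
    rcases (hG a b).1 hab with hab | ⟨rfl, rfl⟩ | ⟨rfl, rfl⟩
    · rw [← h.sys.one a b hab]
      congr 1
      ext x
      simp only [Finset.mem_inter]
      exact ⟨fun hx => key a b x hab hx.1 hx.2, fun hx => ⟨sub a hx.1, sub b hx.2⟩⟩
    · rw [Finset.card_eq_one]
      refine ⟨c, ?_⟩
      ext x
      simp only [Finset.mem_inter, Finset.mem_singleton]
      exact ⟨fun hx => keyn x hx.1 hx.2, by rintro rfl; exact ⟨cp, cq⟩⟩
    · rw [Finset.card_eq_one]
      refine ⟨c, ?_⟩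
      ext x
      simp only [Finset.mem_inter, Finset.mem_singleton]
      exact ⟨fun hx => keyn x hx.2 hx.1, by rintro rfl; exact ⟨cq, cp⟩⟩
  · intro a b r x hab har hbr ha hb hr
    -- new edge cases
    have new : ∀ a b r, (a = p ∧ b = q ∨ a = q ∧ b = p) → G1.Adj a r → b ≠ r → x ∈ M' a →
        x ∈ M' b → x ∈ M' r → False := by
      intro a b r hab har hbr ha hb hr
      have hx : x = c := by
        rcases hab with ⟨rfl, rfl⟩ | ⟨rfl, rfl⟩
        · exact keyn x ha hb
        · exact keyn x hb ha
      have := (key a r x har ha hr).2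
      rw [hx] at this
      exact nc a r har (by tauto) this
    rcases (hG a b).1 hab with hab1 | hab1
    · rcases (hG a r).1 har with har1 | har1
      · have k1 := key a b x hab1 ha hb
        have k2 := key a r x har1 ha hr
        exact h.sys.inj a b r x hab1 har1 hbr k1.1 k1.2 k2.2
      · exact new a r b har1 hab1 (Ne.symm hbr) ha hr hb
    · rcases (hG a r).1 har with har1 | har1
      · exact new a b r hab1 har1 hbr ha hb hr
      · rcases hab1 with ⟨rfl, rfl⟩ | ⟨rfl, rfl⟩
        · rcases har1 with ⟨_, rfl⟩ | ⟨h1, rfl⟩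
          · exact hbr rfl
          · exact hpq h1
        · rcases har1 with ⟨h1, rfl⟩ | ⟨h1, rfl⟩
          · exact hpq h1.symm
          · exact hbr rfl
  · intro r hr
    by_cases h1 : r = p
    · subst h1
      rw [e1, Finset.insert_eq_of_mem (hpR.resolve_left hr)]
      exact h.full r hr
    · by_cases h2 : r = q
      · subst h2
        rw [e2, Finset.insert_eq_of_mem (hqR.resolve_left hr)]
        exact h.full r hr
      · rw [e3 r h1 h2]; exact h.full r hr
  · intro r hr x hx
    rcases mem r x hx with hx | ⟨rfl, rfl | rfl⟩
    · obtain ⟨s, hs, hxs⟩ := h.tight r hr x hx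
      exact ⟨s, (hG r s).2 (Or.inl hs), sub s hxs⟩
    · exact ⟨q, (hG r q).2 (by tauto), cq⟩
    · exact ⟨p, (hG r p).2 (by tauto), cp⟩

/-- filling a vertex -/
theorem St.fill {G : SimpleGraph V} {R : Finset V} {M : V → Finset (Fin (3 * D))}
    (h : St G R M) {p : V} (hp : p ∈ R) (hd : dg G p ≤ D)
    (hs : ∑ q ∈ nb G p, (M q).card ≤ 2 * D + dg G p) :
    ∃ M', St G (R.erase p) M' ∧ ∀ r, r ≠ p → M' r = M r := by
  set U := (nb G p).biUnion M with hU
  have hUc : U.card ≤ 2 * D + dg G p := le_trans Finset.card_biUnion_le hs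
  have hMp : (M p).card = dg G p := h.card_tight hp
  have hsub : M p ⊆ U := by
    intro x hx
    obtain ⟨r, hr, hxr⟩ := h.tight p hp x hx
    exact Finset.mem_biUnion.2 ⟨r, mem_nb.2 hr, hxr⟩
  have hc : D - dg G p ≤ (Uᶜ).card := by
    rw [Finset.card_compl, Fintype.card_fin]; omega
  obtain ⟨W, hW, hWc⟩ := Finset.exists_subset_card_eq hc
  have hWU : ∀ x ∈ W, x ∉ U := fun x hx => Finset.mem_compl.1 (hW hx)
  have hWr : ∀ x ∈ W, ∀ r, G.Adj p r → x ∉ M r := fun x hx r hr hxr =>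
    hWU x hx (Finset.mem_biUnion.2 ⟨r, mem_nb.2 hr, hxr⟩)
  set M' := Function.update M p (M p ∪ W) with hM'
  have e1 : M' p = M p ∪ W := by simp [hM']
  have e2 : ∀ r, r ≠ p → M' r = M r := fun r hr => by simp [hM', hr]
  have sub : ∀ r, M r ⊆ M' r := by
    intro r
    by_cases hr : r = p
    · subst hr; rw [e1]; exact Finset.subset_union_left
    · rw [e2 r hr]
  have mem : ∀ r x, x ∈ M' r → x ∈ M r ∨ (r = p ∧ x ∈ W) := by
    intro r x hx
    by_cases hr : r = p
    · subst hr; rw [e1, Finset.mem_union] at hx; tauto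
    · rw [e2 r hr] at hx; exact Or.inl hx
  have key : ∀ a b x, G.Adj a b → x ∈ M' a → x ∈ M' b → x ∈ M a ∧ x ∈ M b := by
    intro a b x hab ha hb
    rcases mem a x ha with ha1 | ⟨rfl, ha1⟩
    · rcases mem b x hb with hb1 | ⟨rfl, hb1⟩
      · exact ⟨ha1, hb1⟩
      · exact absurd ha1 (hWr x hb1 a hab.symm)
    · rcases mem b x hb with hb1 | ⟨rfl, hb1⟩
      · exact absurd hb1 (hWr x ha1 b hab)
      · exact absurd hab (G.loopless.irrefl _)
  refine ⟨M', ⟨⟨?_, ?_⟩, ?_, ?_⟩, e2⟩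
  · intro a b hab
    rw [← h.sys.one a b hab]
    congr 1
    ext x
    simp only [Finset.mem_inter]
    exact ⟨fun hx => key a b x hab hx.1 hx.2, fun hx => ⟨sub a hx.1, sub b hx.2⟩⟩
  · intro a b r x hab har hbr ha hb hr
    have k1 := key a b x hab ha hb
    have k2 := key a r x har ha hr
    exact h.sys.inj a b r x hab har hbr k1.1 k1.2 k2.2
  · intro r hr
    by_cases h1 : r = p
    · subst h1
      rw [e1, Finset.card_union_of_disjoint, hWc, hMp]
      · omega
      · rw [Finset.disjoint_left]
        intro x hx hx'
        exact hWU x hx' (hsub hx)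
    · rw [e2 r h1]
      exact h.full r (fun hh => hr (Finset.mem_erase.2 ⟨h1, hh⟩))
  · intro r hr x hx
    obtain ⟨h1, h2⟩ := Finset.mem_erase.1 hr
    rw [e2 r h1] at hx
    obtain ⟨s, hs, hxs⟩ := h.tight r h2 x hx
    exact ⟨s, hs, sub s hxs⟩

end

section
variable {V : Type*} [Fintype V] {D : ℕ}

/-- number of big neighbours -/
noncomputable def aN (G : SimpleGraph V) (p : V) : ℕ := ((nb G p).filter (fun r => 3 ≤ dg G r)).card
/-- number of two-neighbours -/
noncomputable def tN (G : SimpleGraph V) (p : V) : ℕ := ((nb G p).filter (fun r => dg G r ≤ 2)).card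

noncomputable def Rtwo (G : SimpleGraph V) : Finset V := Finset.univ.filter (fun r => dg G r ≤ 2)

theorem mem_Rtwo {G : SimpleGraph V} {p : V} : p ∈ Rtwo G ↔ dg G p ≤ 2 := by simp [Rtwo]

theorem aN_add_tN (G : SimpleGraph V) (p : V) : aN G p + tN G p = dg G p := by
  unfold aN tN dg
  rw [← Finset.card_filter_add_card_filter_not (s := nb G p) (fun r => 3 ≤ (nb G r).card)]
  congr 2
  ext r
  simp only [Finset.mem_filter]
  constructor
  · rintro ⟨h1, h2⟩; exact ⟨h1, by omega⟩
  · rintro ⟨h1, h2⟩; exact ⟨h1, by omega⟩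

def isLeaf (G : SimpleGraph V) (p : V) : Prop := dg G p = 3 ∧ aN G p = 2
def isK3 (G : SimpleGraph V) (p : V) : Prop := dg G p = 3 ∧ aN G p = 1

noncomputable def bN (G : SimpleGraph V) (p : V) : ℕ := ((nb G p).filter (fun r => isLeaf G r)).card
noncomputable def kN (G : SimpleGraph V) (p : V) : ℕ := ((nb G p).filter (fun r => isK3 G r)).card
noncomputable def oN (G : SimpleGraph V) (p : V) : ℕ :=
  ((nb G p).filter (fun r => 3 ≤ dg G r ∧ ¬ isLeaf G r ∧ ¬ isK3 G r)).card

theorem sum_class (G : SimpleGraph V) (w : V) (x2 x3 xk xo : ℕ) :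
    ∑ r ∈ nb G w, (if dg G r ≤ 2 then x2 else if isLeaf G r then x3 else if isK3 G r then xk else xo)
      = oN G w * xo + bN G w * x3 + kN G w * xk + tN G w * x2 := by
  unfold oN bN kN tN
  have : ∀ r ∈ nb G w, (if dg G r ≤ 2 then x2 else if isLeaf G r then x3 else
      if isK3 G r then xk else xo) =
      (if 3 ≤ dg G r ∧ ¬ isLeaf G r ∧ ¬ isK3 G r then xo else 0) + (if isLeaf G r then x3 else 0)
      + (if isK3 G r then xk else 0) + (if dg G r ≤ 2 then x2 else 0) := by
    intro r _
    by_cases h1 : dg G r ≤ 2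
    · have h2 : ¬ isLeaf G r := fun h => by have := h.1; omega
      have h3 : ¬ isK3 G r := fun h => by have := h.1; omega
      have h4 : ¬ 3 ≤ dg G r := by omega
      simp [h1, h2, h3, h4]
    · have h4 : 3 ≤ dg G r := by omega
      by_cases h2 : isLeaf G r
      · have h3 : ¬ isK3 G r := fun h => by have := h.2; have := h2.2; omega
        simp [h1, h2, h3, h4]
      · by_cases h3 : isK3 G r
        · simp [h1, h2, h3, h4]
        · simp [h1, h2, h3, h4]
  rw [Finset.sum_congr rfl this]
  simp only [Finset.sum_add_distrib, ← Finset.sum_filter, Finset.sum_const, smul_eq_mul]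

theorem aN_eq (G : SimpleGraph V) (w : V) : aN G w = oN G w + bN G w + kN G w := by
  have h1 := sum_class G w 1 1 1 1
  have h2 := aN_add_tN G w
  simp only [ite_self, Finset.sum_const, smul_eq_mul, mul_one] at h1
  change dg G w = _ at h1
  omega

theorem sum_bd (G : SimpleGraph V) (w : V) (xk : ℕ) (f : V → ℕ)
    (hD : ∀ r ∈ nb G w, f r ≤ D) (h2 : ∀ r ∈ nb G w, dg G r ≤ 2 → f r ≤ 2)
    (h3 : ∀ r ∈ nb G w, isLeaf G r → f r ≤ 3) (hk : ∀ r ∈ nb G w, isK3 G r → f r ≤ xk) :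
    ∑ r ∈ nb G w, f r ≤ oN G w * D + bN G w * 3 + kN G w * xk + tN G w * 2 := by
  rw [← sum_class]
  refine Finset.sum_le_sum (fun r hr => ?_)
  split_ifs with a b c
  · exact h2 r hr a
  · exact h3 r hr b
  · exact hk r hr c
  · exact hD r hr

theorem sum_bd2 (G : SimpleGraph V) (w : V) (f : V → ℕ)
    (hD : ∀ r ∈ nb G w, f r ≤ D) (h2 : ∀ r ∈ nb G w, dg G r ≤ 2 → f r ≤ 2) :
    ∑ r ∈ nb G w, f r ≤ aN G w * D + tN G w * 2 := by
  rw [aN_eq]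
  have h := sum_class G w 2 D D D
  calc _ ≤ _ := Finset.sum_le_sum (g := fun r => (if dg G r ≤ 2 then 2 else if isLeaf G r then D else if isK3 G r then D else D)) ?_
    _ = _ := by rw [h]; ring
  intro r hr
  split_ifs with a b c
  · exact h2 r hr a
  all_goals exact hD r hr

theorem bnd_erase {G G1 : SimpleGraph V} {w v : V} (M : V → Finset (Fin (3 * D))) (c : ℕ)
    (hv : v ∈ nb G w) (hs : nb G1 w ⊆ (nb G w).erase v) :
    ((nb G1 w).biUnion M).card + c ≤ ∑ r ∈ nb G w, (if r = v then c else (M r).card) := by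
  rw [← Finset.add_sum_erase _ _ hv]
  simp only [if_true]
  have : ((nb G1 w).biUnion M).card ≤ ∑ r ∈ (nb G w).erase v, (if r = v then c else (M r).card) := by
    refine le_trans Finset.card_biUnion_le ?_
    refine le_trans (Finset.sum_le_sum_of_subset hs) ?_
    refine Finset.sum_le_sum (fun r hr => ?_)
    rw [if_neg (Finset.ne_of_mem_erase hr)]
  omega

theorem fin0 {G : SimpleGraph V} (hd : ∀ p, dg G p ≤ D) : ∀ n, ∀ (R : Finset V)
    (M : V → Finset (Fin (3 * D))), St G R M → R.card = n → (∀ p ∈ R, dg G p ≤ 2) → Good D G := by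
  intro n
  induction n with
  | zero =>
    intro R M h hR _
    rw [Finset.card_eq_zero] at hR
    subst hR
    exact ⟨M, h⟩
  | succ n ih =>
    intro R M h hR h2
    obtain ⟨p, hp⟩ := Finset.card_pos.1 (by omega : 0 < R.card)
    have hs : ∑ q ∈ nb G p, (M q).card ≤ 2 * D + dg G p := by
      have : ∑ q ∈ nb G p, (M q).card ≤ (nb G p).card • D :=
        Finset.sum_le_card_nsmul _ _ _ (fun q _ => h.card_le hd q)
      have h3 : (nb G p).card ≤ 2 := h2 p hp
      rw [smul_eq_mul] at this
      have : (nb G p).card * D ≤ 2 * D := Nat.mul_le_mul_right _ h3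
      omega
    obtain ⟨M', h', _⟩ := h.fill hp (hd p) hs
    refine ih (R.erase p) M' h' ?_ (fun q hq => h2 q (Finset.mem_of_mem_erase hq))
    rw [Finset.card_erase_of_mem hp]; omega

theorem final_fill {G : SimpleGraph V} (hd : ∀ p, dg G p ≤ D) {R : Finset V} 
    {M : V → Finset (Fin (3 * D))} (h : St G R M) (hR : Rtwo G ⊆ R)
    (hs : ∀ p ∈ R, 3 ≤ dg G p → aN G p * D + tN G p * 2 ≤ 2 * D + dg G p) : Good D G := by
  have key : ∀ n, ∀ (R : Finset V) (M : V → Finset (Fin (3 * D))), St G R M → Rtwo G ⊆ R →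
      (R.filter (fun p => 3 ≤ dg G p)).card = n → 
      (∀ p ∈ R, 3 ≤ dg G p → aN G p * D + tN G p * 2 ≤ 2 * D + dg G p) → Good D G := by
    intro n
    induction n with
    | zero =>
      intro R M h _ hc hs
      refine fin0 hd _ R M h rfl ?_
      intro p hp
      by_contra hcon
      have : p ∈ R.filter (fun p => 3 ≤ dg G p) := Finset.mem_filter.2 ⟨hp, by omega⟩
      rw [Finset.card_eq_zero] at hc
      rw [hc] at this
      simp at this
    | succ n ih =>
      intro R M h hR hc hs
      obtain ⟨p, hp⟩ := Finset.card_pos.1 (by omega : 0 < (R.filter (fun p => 3 ≤ dg G p)).card)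
      have hp' := Finset.mem_filter.1 hp
      have hb : ∑ q ∈ nb G p, (M q).card ≤ 2 * D + dg G p := by
        refine le_trans (sum_bd2 (D := D) G p _ (fun r _ => h.card_le hd r) ?_) (hs p hp'.1 hp'.2)
        intro r _ hr
        rw [h.card_tight (hR (mem_Rtwo.2 hr))]; exact hr
      obtain ⟨M', h', _⟩ := h.fill hp'.1 (hd p) hb
      refine ih (R.erase p) M' h' ?_ ?_ (fun q hq => hs q (Finset.mem_of_mem_erase hq))
      · intro q hq
        refine Finset.mem_erase.2 ⟨?_, hR hq⟩
        rintro rfl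
        have := mem_Rtwo.1 hq
        omega
      · rw [Finset.filter_erase, Finset.card_erase_of_mem hp]; omega
  exact key _ R M h hR rfl hs

/-- adding a star at `u` to pendant vertices. -/
theorem star {G : SimpleGraph V} (hd : ∀ p, dg G p ≤ D) {R : Finset V} {u : V} (hu : u ∈ R)
    (T : Finset V) : ∀ (G1 G2 : SimpleGraph V) (M : V → Finset (Fin (3 * D))), St G1 R M → G1 ≤ G →
    (∀ v ∈ T, v ∈ R ∧ G.Adj u v ∧ ¬ G1.Adj u v ∧ (∀ r s, G1.Adj v r → G1.Adj v s → r = s) ∧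
      Disjoint (M u) (M v)) →
    ((nb G1 u).biUnion M).card + 2 * T.card ≤ 2 * D + 1 →
    (∀ a b, G2.Adj a b ↔ G1.Adj a b ∨ (a = u ∧ b ∈ T) ∨ (b = u ∧ a ∈ T)) →
    ∃ M', St G2 R M' ∧ ∀ r, r ≠ u → r ∉ T → M' r = M r := by
  induction T using Finset.induction_on with
  | empty =>
    intro G1 G2 M h _ _ _ hG
    have : G2 = G1 := by
      ext a b
      rw [hG]; simp
    subst this
    exact ⟨M, h, fun _ _ _ => rfl⟩
  | insert v T hv ih =>
    intro G1 G2 M h hle hT hc hG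
    rw [Finset.card_insert_of_notMem hv] at hc
    have hd1 : ∀ p, dg G1 p ≤ D := fun p => (dg_mono hle p).trans (hd p)
    obtain ⟨hvR, huv, nuv, huniq, hdis⟩ := hT v (Finset.mem_insert_self _ _)
    have huvne : u ≠ v := huv.ne
    have c1 : ((nb G1 v).biUnion M).card ≤ D := by
      by_cases hn : nb G1 v = ∅
      · rw [hn]; simp
      · obtain ⟨w, hw⟩ := Finset.nonempty_iff_ne_empty.2 hn
        have : nb G1 v = {w} := by
          ext r
          rw [Finset.mem_singleton]
          constructor
          · intro hr; exact huniq r w (mem_nb.1 hr) (mem_nb.1 hw)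
          · rintro rfl; exact hw
        rw [this, Finset.singleton_biUnion]
        exact h.card_le hd1 w
    have d1 : ∀ v' ∈ insert v T, (M v').card ≤ 1 := by
      intro v' hv'
      obtain ⟨h1, -, -, h2, -⟩ := hT v' hv'
      rw [h.card_tight h1]
      refine Finset.card_le_one.2 (fun r hr s hs => h2 r s (mem_nb.1 hr) (mem_nb.1 hs))
    have c2 : (T.biUnion M).card ≤ T.card := by
      refine le_trans Finset.card_biUnion_le ?_
      refine le_trans (Finset.sum_le_card_nsmul _ _ 1 (fun v' hv' => d1 v' (Finset.mem_insert_of_mem hv'))) ?_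
      simp
    obtain ⟨x, hx⟩ := exists_col (((nb G1 u).biUnion M) ∪ ((nb G1 v).biUnion M) ∪ (T.biUnion M)) (by
      refine lt_of_le_of_lt (Finset.card_union_le _ _) ?_
      have := Finset.card_union_le ((nb G1 u).biUnion M) ((nb G1 v).biUnion M)
      omega)
    simp only [Finset.mem_union, Finset.mem_biUnion, mem_nb, not_or, not_exists, not_and] at hx
    obtain ⟨⟨hx1, hx2⟩, hx3⟩ := hx
    let Gm : SimpleGraph V :=
      { Adj := fun a b => G1.Adj a b ∨ (a = u ∧ b = v) ∨ (a = v ∧ b = u)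
        symm := ⟨fun a b hab => by
          rcases hab with hab | hab | hab
          · exact Or.inl hab.symm
          · exact Or.inr (Or.inr hab.symm)
          · exact Or.inr (Or.inl hab.symm)⟩
        loopless := ⟨fun a hab => by
          rcases hab with hab | ⟨rfl, hab⟩ | ⟨rfl, hab⟩
          · exact G1.loopless.irrefl _ hab
          · exact huvne hab
          · exact huvne hab.symm⟩ }
    have hGm : ∀ a b, Gm.Adj a b ↔ G1.Adj a b ∨ (a = u ∧ b = v) ∨ (a = v ∧ b = u) :=
      fun a b => Iff.rfl
    obtain ⟨M1, h1, e0, e1, e2⟩ := h.add huvne hGm x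
      (fun y hy hy' => absurd hy' (Finset.disjoint_left.1 hdis hy)) hx1 hx2 (Or.inl hu) (Or.inl hvR)
    have hlem : Gm ≤ G := by
      intro a b hab
      rcases hab with hab | ⟨rfl, rfl⟩ | ⟨rfl, rfl⟩
      · exact hle hab
      · exact huv
      · exact huv.symm
    have ne : ∀ v' ∈ T, v' ≠ u ∧ v' ≠ v := by
      intro v' hv'
      refine ⟨(hT v' (Finset.mem_insert_of_mem hv')).2.1.ne', ?_⟩
      rintro rfl; exact hv hv'
    obtain ⟨M2, h2, e3⟩ := ih Gm G2 M1 h1 hlem (by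
      intro v' hv'
      obtain ⟨n1, n2⟩ := ne v' hv'
      obtain ⟨p1, p2, p3, p4, p5⟩ := hT v' (Finset.mem_insert_of_mem hv')
      refine ⟨p1, p2, ?_, ?_, ?_⟩
      · rintro (hh | hh | hh)
        · exact p3 hh
        · exact n2 hh.2
        · exact n1 hh.2
      · intro r s hr hs
        refine p4 r s ?_ ?_
        · rcases hr with hr | hr | hr
          · exact hr
          · exact absurd hr.1 n1
          · exact absurd hr.1 n2
        · rcases hs with hr | hr | hr
          · exact hr
          · exact absurd hr.1 n1
          · exact absurd hr.1 n2
      · rw [e0 v' n1 n2, e1, Finset.disjoint_insert_left]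
        exact ⟨hx3 v' hv', p5⟩) (by
      have hsub : (nb Gm u).biUnion M1 ⊆ (nb G1 u).biUnion M ∪ M1 v := by
        intro y hy
        obtain ⟨r, hr, hyr⟩ := Finset.mem_biUnion.1 hy
        rw [mem_nb] at hr
        rcases hr with hr | hr | hr
        · by_cases hrv : r = v
          · subst hrv; exact Finset.mem_union_right _ hyr
          · rw [e0 r hr.ne' hrv] at hyr
            exact Finset.mem_union_left _ (Finset.mem_biUnion.2 ⟨r, mem_nb.2 hr, hyr⟩)
        · rw [hr.2] at hyr; exact Finset.mem_union_right _ hyr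
        · exact absurd hr.1 huvne
      have hc2 : (M1 v).card ≤ 2 := by
        rw [e2]
        have := Finset.card_insert_le x (M v)
        have := d1 v (Finset.mem_insert_self _ _)
        omega
      have := Finset.card_le_card hsub
      have := Finset.card_union_le ((nb G1 u).biUnion M) (M1 v)
      omega) (by
      intro a b
      rw [hG, hGm]
      simp only [Finset.mem_insert]
      tauto)
    refine ⟨M2, h2, ?_⟩
    intro r hr hrT
    rw [Finset.mem_insert, not_or] at hrT
    rw [e3 r hr hrT.2, e0 r hr hrT.1]

theorem two_nb {G G1 : SimpleGraph V} (hle : G1 ≤ G) {u v : V} (h2 : dg G v ≤ 2) (huv : G.Adj u v)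
    (nuv : ¬ G1.Adj u v) : ∀ r s, G1.Adj v r → G1.Adj v s → r = s := by
  intro r s hr hs
  have hc : ((nb G v).erase u).card ≤ 1 := by
    rw [Finset.card_erase_of_mem (mem_nb.2 huv.symm)]
    change dg G v - 1 ≤ 1
    omega
  have hm : ∀ r, G1.Adj v r → r ∈ (nb G v).erase u := by
    intro r hr
    refine Finset.mem_erase.2 ⟨?_, mem_nb.2 (hle hr)⟩
    rintro rfl; exact nuv hr.symm
  exact Finset.card_le_one.1 hc r (hm r hr) s (hm s hs)

/-- restoring the lower edges at a set `Ks` of vertices. -/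
theorem kstar {G : SimpleGraph V} (hd : ∀ p, dg G p ≤ D) {R : Finset V} (hR : Rtwo G ⊆ R)
    (Ks : Finset V) : ∀ (M : V → Finset (Fin (3 * D))),
    St (dl G (fun a b => a ∈ Ks ∧ dg G b ≤ 2)) R M →
    (∀ u ∈ Ks, u ∈ R ∧ aN G u ≤ 1 ∧ 2 * tN G u ≤ D + 1) →
    (∀ u ∈ Ks, ∀ v, G.Adj u v → dg G v ≤ 2 → v ∉ Ks ∧ Disjoint (M u) (M v) ∧
      ∀ r, G.Adj v r → r ∈ Ks → r = u) →
    ∃ M' : V → Finset (Fin (3 * D)), St G R M' := by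
  induction Ks using Finset.induction_on with
  | empty =>
    intro M h _ _
    have : dl G (fun a b => a ∈ (∅ : Finset V) ∧ dg G b ≤ 2) = G := by
      ext a b; rw [dl_adj]; simp
    rw [this] at h
    exact ⟨M, h⟩
  | insert u Ks hu ih =>
    intro M h h1 h2
    have huu : u ∈ insert u Ks := Finset.mem_insert_self _ _
    obtain ⟨huR, hua, hut⟩ := h1 u huu
    set G1 := dl G (fun a b => a ∈ insert u Ks ∧ dg G b ≤ 2) with hG1
    set G2 := dl G (fun a b => a ∈ Ks ∧ dg G b ≤ 2) with hG2
    have hle : G1 ≤ G := dl_le _ _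
    have hd1 : ∀ p, dg G1 p ≤ D := fun p => (dg_mono hle p).trans (hd p)
    have hT : ∀ v, v ∈ (nb G u).filter (fun r => dg G r ≤ 2) ↔ G.Adj u v ∧ dg G v ≤ 2 := by
      intro v; rw [Finset.mem_filter, mem_nb]
    obtain ⟨M2, s2, e2⟩ := star hd huR ((nb G u).filter (fun r => dg G r ≤ 2)) G1 G2 M h hle (by
      intro v hv
      rw [hT] at hv
      have hn : ¬ G1.Adj u v := by
        rw [hG1, dl_adj]
        intro hh
        exact hh.2.1 ⟨huu, hv.2⟩
      exact ⟨hR (mem_Rtwo.2 hv.2), hv.1, hn, two_nb hle hv.2 hv.1 hn, (h2 u huu v hv.1 hv.2).2.1⟩) (by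
      have hsub : nb G1 u ⊆ (nb G u).filter (fun r => 3 ≤ dg G r) := by
        intro r hr
        rw [mem_nb, hG1, dl_adj] at hr
        rw [Finset.mem_filter, mem_nb]
        refine ⟨hr.1, ?_⟩
        by_contra hcon
        exact hr.2.1 ⟨huu, by omega⟩
      have hc1 : (nb G1 u).card ≤ 1 := (Finset.card_le_card hsub).trans hua
      have : ((nb G1 u).biUnion M).card ≤ (nb G1 u).card * D := by
        refine le_trans Finset.card_biUnion_le ?_
        exact Finset.sum_le_card_nsmul _ _ _ (fun r _ => h.card_le hd1 r)
      have : (nb G1 u).card * D ≤ 1 * D := Nat.mul_le_mul_right _ hc1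
      change _ + 2 * tN G u ≤ _
      omega) (by
      intro a b
      rw [hT, hT, hG1, hG2, dl_adj, dl_adj]
      have hk : ∀ b, G.Adj u b → dg G b ≤ 2 → b ∉ insert u Ks := fun b hb hb' => (h2 u huu b hb hb').1
      constructor
      · rintro ⟨q1, q2, q3⟩
        by_cases ha : a = u ∧ dg G b ≤ 2
        · obtain ⟨rfl, ha⟩ := ha
          exact Or.inr (Or.inl ⟨rfl, q1, ha⟩)
        · by_cases hb : b = u ∧ dg G a ≤ 2
          · obtain ⟨rfl, hb⟩ := hb
            exact Or.inr (Or.inr ⟨rfl, q1.symm, hb⟩)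
          · left
            simp only [Finset.mem_insert]
            refine ⟨q1, ?_, ?_⟩ <;> tauto
      · rintro (⟨q1, q2, q3⟩ | ⟨rfl, q1, q2⟩ | ⟨rfl, q1, q2⟩)
        · simp only [Finset.mem_insert] at q2 q3
          refine ⟨q1, ?_, ?_⟩ <;> tauto
        · have := hk b q1 q2
          simp only [Finset.mem_insert] at this
          exact ⟨q1, fun hh => hu hh.1, fun hh => this (Or.inr hh.1)⟩
        · have := hk a q1 q2
          simp only [Finset.mem_insert] at this
          exact ⟨q1.symm, fun hh => this (Or.inr hh.1), fun hh => hu hh.1⟩)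
    refine ih M2 s2 (fun u' hu' => h1 u' (Finset.mem_insert_of_mem hu')) ?_
    intro u' hu' v hv hv2
    have hne : u' ≠ u := by rintro rfl; exact hu hu'
    obtain ⟨p1, p2, p3⟩ := h2 u' (Finset.mem_insert_of_mem hu') v hv hv2
    rw [Finset.mem_insert, not_or] at p1
    refine ⟨p1.2, ?_, fun r hr hr' => p3 r hr (Finset.mem_insert_of_mem hr')⟩
    have hv3 : v ∉ (nb G u).filter (fun r => dg G r ≤ 2) := by
      rw [hT]
      rintro ⟨q1, _⟩
      exact hne (p3 u q1.symm huu).symm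
    have hu3 : u' ∉ (nb G u).filter (fun r => dg G r ≤ 2) := by
      rw [hT]
      rintro ⟨q1, q2⟩
      exact (h2 u huu u' q1 q2).1 (Finset.mem_insert_of_mem hu')
    rw [e2 u' hne hu3, e2 v p1.1 hv3]
    exact p2

/-- adding a pendant edge coloured by a free colour. -/
theorem pend {G0 G1 : SimpleGraph V} {M0 : V → Finset (Fin (3 * D))} (h : St G0 ∅ M0) {v q : V}
    (hqv : q ≠ v) (hiso : ∀ r, ¬ G0.Adj v r)
    (hG : ∀ a b, G1.Adj a b ↔ G0.Adj a b ∨ (a = q ∧ b = v) ∨ (a = v ∧ b = q))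
    (F : Finset (Fin (3 * D))) (hF : F.card + dg G0 q < D) :
    ∃ M c, St G1 {v} M ∧ c ∉ F ∧ M v = {c} ∧ ∀ r, r ≠ v → M r = M0 r := by
  obtain ⟨c, hc1, hc2, hc3⟩ := h.free (Finset.notMem_empty q) F hF
  obtain ⟨M, hM, _, e, _⟩ := h.reset (G1 := G0) (R := {v}) le_rfl (by simp)
  have hq : q ∉ ({v} : Finset V) := by simpa using hqv
  have hMv : M v = ∅ := by
    rw [Finset.eq_empty_iff_forall_notMem]
    intro x hx
    obtain ⟨r, hr, _⟩ := hM.tight v (by simp) x hx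
    exact hiso r hr
  have e' : ∀ r, r ≠ v → M r = M0 r := fun r hr => e r (by simpa using hr)
  obtain ⟨M', h', f1, f2, f3⟩ := hM.add hqv hG c (by rw [hMv]; simp) (by
    intro r hr
    have : r ≠ v := by rintro rfl; exact hiso _ hr.symm
    rw [e' r this]; exact hc3 r hr) (fun r hr => absurd hr (hiso r))
    (Or.inr (by rw [e' q hqv]; exact hc1)) (Or.inl (by simp))
  refine ⟨M', c, h', hc2, by rw [f3, hMv]; rfl, ?_⟩
  intro r hr
  by_cases hrq : r = q
  · subst hrq
    rw [f2, Finset.insert_eq_of_mem (by rw [e' r hr]; exact hc1), e' r hr]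
  · rw [f1 r hrq hr, e' r hr]

structure Hyp (D : ℕ) (G : SimpleGraph V) : Prop where
  deg : ∀ p, dg G p ≤ D
  dens : ∀ S : Finset V, ∑ p ∈ S, (nb G p ∩ S).card ≤ 3 * S.card
  cub : ¬ Has3RegularSubgraph G

theorem Hyp.mono {G G' : SimpleGraph V} (h : Hyp D G) (hle : G' ≤ G) : Hyp D G' := by
  refine ⟨fun p => (dg_mono hle p).trans (h.deg p), fun S => ?_, ?_⟩
  · refine le_trans (Finset.sum_le_sum (fun p _ => ?_)) (h.dens S)
    exact Finset.card_le_card (Finset.inter_subset_inter_right (nb_mono hle p))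
  · rintro ⟨H, h1, h2⟩
    exact h.cub ⟨H, h1.trans hle, h2⟩

/-- minimal counterexample -/
structure MinC (D : ℕ) (G : SimpleGraph V) : Prop where
  hyp : Hyp D G
  D7 : 7 ≤ D
  bad : ¬ Good D G
  ih : ∀ G' : SimpleGraph V, Hyp D G' → ∑ p, dg G' p < ∑ p, dg G p → Good D G'

theorem MinC.sub {G G' : SimpleGraph V} (h : MinC D G) (hle : G' ≤ G) {u v : V} (a : G.Adj u v)
    (na : ¬ G'.Adj u v) : Good D G' := by
  refine h.ih G' (h.hyp.mono hle) (Finset.sum_lt_sum (fun p _ => dg_mono hle p) ⟨u, Finset.mem_univ _, ?_⟩)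
  refine Finset.card_lt_card ⟨nb_mono hle u, fun hh => na ?_⟩
  exact mem_nb.1 (hh (mem_nb.2 a))

/-- delete all edges at a vertex -/
def dv (G : SimpleGraph V) (v : V) : SimpleGraph V := dl G (fun a _ => a = v)

theorem dv_adj {G : SimpleGraph V} {v a b : V} : (dv G v).Adj a b ↔ G.Adj a b ∧ a ≠ v ∧ b ≠ v :=
  Iff.rfl

theorem dv_le (G : SimpleGraph V) (v : V) : dv G v ≤ G := dl_le _ _

theorem nb_dv (G : SimpleGraph V) {v w : V} (h : w ≠ v) : nb (dv G v) w = (nb G w).erase v := by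
  ext r
  rw [Finset.mem_erase, mem_nb, mem_nb, dv_adj]
  tauto

theorem dg_dv (G : SimpleGraph V) {v w : V} (h : G.Adj w v) : dg (dv G v) w = dg G w - 1 := by
  unfold dg
  rw [nb_dv G h.ne, Finset.card_erase_of_mem (mem_nb.2 h)]

theorem St.iso {G : SimpleGraph V} {R} {M : V → Finset (Fin (3 * D))} (h : St G R M) {v : V}
    (hv : v ∈ R) (hi : ∀ r, ¬ G.Adj v r) : M v = ∅ := by
  rw [Finset.eq_empty_iff_forall_notMem]
  intro x hx
  obtain ⟨r, hr, _⟩ := h.tight v hv x hx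
  exact hi r hr

end

section
variable {V : Type*} [Fintype V] {D : ℕ}

theorem soft1 {G : SimpleGraph V} {p : V} (hd : dg G p ≤ D) (ha : aN G p ≤ 1) :
    aN G p * D + tN G p * 2 ≤ 2 * D + dg G p := by
  have := aN_add_tN G p
  have : aN G p = 0 ∨ aN G p = 1 := by omega
  rcases this with h | h <;> rw [h] <;> omega

theorem soft2 {G : SimpleGraph V} {p : V} (hd : dg G p ≤ D) (ha : aN G p ≤ 2) (ht : tN G p ≤ 2) :
    aN G p * D + tN G p * 2 ≤ 2 * D + dg G p := by
  have h1 := aN_add_tN G p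
  by_cases h : aN G p ≤ 1
  · exact soft1 hd h
  · have h : aN G p = 2 := by omega
    rw [h]; omega

theorem leaf_t {G : SimpleGraph V} {p : V} (h : isLeaf G p) : tN G p = 1 := by
  have := aN_add_tN G p
  have := h.1
  have := h.2
  omega

theorem soft_leaf {G : SimpleGraph V} {p : V} (hd : dg G p ≤ D) (h : isLeaf G p) :
    aN G p * D + tN G p * 2 ≤ 2 * D + dg G p :=
  soft2 hd h.2.le (by rw [leaf_t h]; omega)

theorem one_nb {G : SimpleGraph V} {v q : V} (h : dg G v ≤ 1) (a : G.Adj v q) :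
    ∀ r, G.Adj v r ↔ r = q := by
  intro r
  constructor
  · intro hr
    exact Finset.card_le_one.1 h r (mem_nb.2 hr) q (mem_nb.2 a)
  · rintro rfl; exact a

theorem two_adj {G : SimpleGraph V} {v w u : V} (h : dg G v ≤ 2) (a : G.Adj v w) (b : G.Adj v u)
    (hwu : w ≠ u) : ∀ r, G.Adj v r ↔ r = w ∨ r = u := by
  have hs : ({w, u} : Finset V) ⊆ nb G v := by
    intro r hr
    simp only [Finset.mem_insert, Finset.mem_singleton] at hr
    rcases hr with rfl | rfl
    · exact mem_nb.2 a
    · exact mem_nb.2 b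
  have he : ({w, u} : Finset V) = nb G v := by
    refine Finset.eq_of_subset_of_card_le hs ?_
    rw [Finset.card_pair hwu]; exact h
  intro r
  rw [← mem_nb, ← he]
  simp

theorem big_one {G : SimpleGraph V} {u : V} (h : aN G u = 1) :
    ∃ y, G.Adj u y ∧ 3 ≤ dg G y ∧ ∀ r, G.Adj u r → 3 ≤ dg G r → r = y := by
  unfold aN at h
  obtain ⟨y, hy⟩ := Finset.card_eq_one.1 h
  have h1 : ∀ r, (G.Adj u r ∧ 3 ≤ dg G r) ↔ r = y := by
    intro r
    rw [← Finset.mem_singleton, ← hy, Finset.mem_filter, mem_nb]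
  have := (h1 y).2 rfl
  exact ⟨y, this.1, this.2, fun r a b => (h1 r).1 ⟨a, b⟩⟩

theorem MinC.r0 {G : SimpleGraph V} (h : MinC D G) {v q : V} (a : G.Adj v q) : 2 ≤ dg G v := by
  by_contra hcon
  have hv := one_nb (by omega) a
  have hD := h.D7
  obtain ⟨M0, s0⟩ := h.sub (dv_le G v) a (by rw [dv_adj]; tauto)
  have hq : dg G q ≤ D := h.hyp.deg q
  have hq1 := dg_pos a.symm
  obtain ⟨M, c, s1, -, -, -⟩ := pend (G1 := G) s0 a.ne' (fun r => by rw [dv_adj]; tauto) (by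
    intro a' b'
    rw [dv_adj]
    constructor
    · intro hab
      by_cases h1 : a' = v
      · subst h1
        exact Or.inr (Or.inr ⟨rfl, (hv b').1 hab⟩)
      · by_cases h2 : b' = v
        · subst h2
          exact Or.inr (Or.inl ⟨(hv a').1 hab.symm, rfl⟩)
        · exact Or.inl ⟨hab, h1, h2⟩
    · rintro (hh | ⟨rfl, rfl⟩ | ⟨rfl, rfl⟩)
      · exact hh.1
      · exact a.symm
      · exact a) ∅ (by rw [dg_dv G a.symm]; simp; omega)
  obtain ⟨M2, s2, -⟩ := s1.reset (G1 := G) (R := Rtwo G) le_rfl (by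
    intro r hr
    rw [Finset.mem_singleton] at hr
    subst hr
    exact mem_Rtwo.2 (by omega))
  exact h.bad (final_fill h.hyp.deg s2 (Finset.Subset.refl _) (fun p hp hp3 => by
    have := mem_Rtwo.1 hp; omega))

theorem MinC.a0 {G : SimpleGraph V} (h : MinC D G) {w q : V} (a : G.Adj w q) : 1 ≤ aN G w := by
  by_contra hcon
  have hD := h.D7
  have hw := h.hyp.deg w
  have ha : aN G w = 0 := by omega
  have hat := aN_add_tN G w
  have h2 : ∀ r, G.Adj w r → dg G r ≤ 2 := by
    intro r hr
    by_contra hc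
    have : r ∈ (nb G w).filter (fun r => 3 ≤ dg G r) :=
      Finset.mem_filter.2 ⟨mem_nb.2 hr, by omega⟩
    unfold aN at ha
    rw [Finset.card_eq_zero] at ha
    rw [ha] at this
    simp at this
  obtain ⟨M0, s0⟩ := h.sub (dv_le G w) a (by rw [dv_adj]; tauto)
  obtain ⟨M, s1, -⟩ := s0.reset (G1 := dv G w) (R := insert w (Rtwo G)) le_rfl (by simp)
  have hn : ∀ r, ¬ (dv G w).Adj w r := fun r => by rw [dv_adj]; tauto
  have hMw := s1.iso (Finset.mem_insert_self _ _) hn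
  obtain ⟨M', s2, -⟩ := star h.hyp.deg (Finset.mem_insert_self w (Rtwo G)) (nb G w) (dv G w) G M s1
    (dv_le G w) (by
      intro v hv
      rw [mem_nb] at hv
      refine ⟨Finset.mem_insert_of_mem (mem_Rtwo.2 (h2 v hv)), hv, hn v,
        two_nb (dv_le G w) (h2 v hv) hv (hn v), ?_⟩
      rw [hMw]; simp) (by
      have : nb (dv G w) w = ∅ := by
        rw [Finset.eq_empty_iff_forall_notMem]
        intro r hr
        exact hn r (mem_nb.1 hr)
      rw [this]
      change _ + 2 * dg G w ≤ _
      simp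
      omega) (by
      intro a b
      rw [dv_adj, mem_nb, mem_nb]
      constructor
      · intro hab
        by_cases h1 : a = w
        · subst h1; exact Or.inr (Or.inl ⟨rfl, hab⟩)
        · by_cases h2 : b = w
          · subst h2; exact Or.inr (Or.inr ⟨rfl, hab.symm⟩)
          · exact Or.inl ⟨hab, h1, h2⟩
      · rintro (hh | ⟨rfl, hh⟩ | ⟨rfl, hh⟩)
        · exact hh.1
        · exact hh
        · exact hh.symm)
  refine h.bad (final_fill h.hyp.deg s2 (Finset.subset_insert _ _) ?_)
  intro p hp hp3
  rcases Finset.mem_insert.1 hp with rfl | hp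
  · exact soft1 hw (by omega)
  · have := mem_Rtwo.1 hp; omega

/-- delete one edge -/
def du (G : SimpleGraph V) (u v : V) : SimpleGraph V := dl G (fun a b => a = u ∧ b = v)

theorem du_adj {G : SimpleGraph V} {u v a b : V} :
    (du G u v).Adj a b ↔ G.Adj a b ∧ ¬ (a = u ∧ b = v) ∧ ¬ (b = u ∧ a = v) := Iff.rfl

theorem du_le (G : SimpleGraph V) (u v : V) : du G u v ≤ G := dl_le _ _

theorem du_iff {G : SimpleGraph V} {v w u : V} (hv : ∀ r, G.Adj v r ↔ r = w ∨ r = u) (hwu : w ≠ u)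
    (a b : V) : (du G u v).Adj a b ↔ (dv G v).Adj a b ∨ (a = w ∧ b = v) ∨ (a = v ∧ b = w) := by
  rw [du_adj, dv_adj]
  have hvw : G.Adj v w := (hv w).2 (Or.inl rfl)
  constructor
  · rintro ⟨hab, h1, h2⟩
    by_cases h3 : a = v
    · subst h3
      rcases (hv b).1 hab with rfl | rfl
      · tauto
      · tauto
    · by_cases h4 : b = v
      · subst h4
        rcases (hv a).1 hab.symm with rfl | rfl
        · tauto
        · tauto
      · tauto
  · rintro (⟨h1, h2, h3⟩ | ⟨rfl, rfl⟩ | ⟨rfl, rfl⟩)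
    · tauto
    · exact ⟨hvw.symm, fun hh => hwu hh.1, fun hh => hvw.ne' hh.2⟩
    · exact ⟨hvw, fun hh => hvw.ne' hh.2, fun hh => hwu hh.1⟩

theorem du_iff2 {G : SimpleGraph V} {v u : V} (huv : G.Adj u v) 
    (a b : V) : G.Adj a b ↔ (du G u v).Adj a b ∨ (a = u ∧ b = v) ∨ (a = v ∧ b = u) := by
  rw [du_adj]
  constructor
  · intro hab
    tauto
  · rintro (h | ⟨rfl, rfl⟩ | ⟨rfl, rfl⟩)
    · exact h.1
    · exact huv
    · exact huv.symm

/-- graph with lower edges at `Ks` deleted -/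
def dk (G : SimpleGraph V) (Ks : Finset V) : SimpleGraph V :=
  dl G (fun a b => a ∈ Ks ∧ dg G b ≤ 2)

theorem dk_adj {G : SimpleGraph V} {Ks : Finset V} {a b : V} :
    (dk G Ks).Adj a b ↔ G.Adj a b ∧ ¬ (a ∈ Ks ∧ dg G b ≤ 2) ∧ ¬ (b ∈ Ks ∧ dg G a ≤ 2) := Iff.rfl

theorem dk_le (G : SimpleGraph V) (Ks : Finset V) : dk G Ks ≤ G := dl_le _ _

theorem MinC.k3t {G : SimpleGraph V} (h : MinC D G) {u v w : V} (ha : aN G u = 1) (ht : tN G u ≤ 4)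
    (huv : G.Adj u v) (hv2 : dg G v ≤ 2) (hvw : G.Adj v w) (hwu : w ≠ u) : dg G w = D := by
  by_contra hcon
  have hD := h.D7
  have hdw : dg G w < D := lt_of_le_of_ne (h.hyp.deg w) hcon
  have hv := two_adj hv2 hvw huv.symm hwu
  obtain ⟨y, huy, hy3, hy⟩ := big_one ha
  have hyv : y ≠ v := by rintro rfl; omega
  obtain ⟨M0, s0⟩ := h.sub (dv_le G v) huv (by rw [dv_adj]; tauto)
  have hF : (M0 u ∩ M0 y).card = 1 := s0.sys.one u y (dv_adj.2 ⟨huy, huv.ne, hyv⟩)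
  have hw1 := dg_pos hvw.symm
  obtain ⟨M1, c, s1, hc, hMv, e1⟩ := pend (G1 := du G u v) s0 hvw.ne' (fun r => by rw [dv_adj]; tauto)
    (du_iff hv hwu) (M0 u ∩ M0 y) (by rw [dg_dv G hvw.symm]; omega)
  have hle : dk G {u} ≤ du G u v := by
    intro a b hab
    rw [dk_adj] at hab
    rw [du_adj]
    refine ⟨hab.1, ?_, ?_⟩
    · rintro ⟨rfl, rfl⟩; exact hab.2.1 ⟨by simp, hv2⟩
    · rintro ⟨rfl, rfl⟩; exact hab.2.2 ⟨by simp, hv2⟩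
  obtain ⟨M2, s2, hsub, -, hdis⟩ := s1.reset (R := insert u (Rtwo G)) hle (by
    intro r hr
    rw [Finset.mem_singleton] at hr
    subst hr
    exact Finset.mem_insert_of_mem (mem_Rtwo.2 hv2))
  have huR := Finset.mem_insert_self u (Rtwo G)
  obtain ⟨M3, s3⟩ := kstar h.hyp.deg (Finset.subset_insert u (Rtwo G)) {u} M2 s2 (by
      intro u' hu'
      rw [Finset.mem_singleton] at hu'
      subst hu'
      exact ⟨huR, by omega, by omega⟩) (by
      intro u' hu' v' huv' hv2'
      rw [Finset.mem_singleton] at hu'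
      subst hu'
      refine ⟨by rw [Finset.mem_singleton]; exact huv'.ne', ?_, fun r _ hr => Finset.mem_singleton.1 hr⟩
      by_cases hvv : v' = v
      · subst hvv
        rw [Finset.disjoint_left]
        intro x hx hx'
        have hxc : x = c := by
          have := hsub _ hx'
          rw [hMv, Finset.mem_singleton] at this
          exact this
        subst hxc
        obtain ⟨r, hr, hxr⟩ := s2.tight _ huR x hx
        have hr' := dk_adj.1 hr
        have hr3 : 3 ≤ dg G r := by
          by_contra hc3
          exact hr'.2.1 ⟨by simp, by omega⟩
        have hry := hy r hr'.1 hr3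
        subst hry
        apply hc
        rw [Finset.mem_inter, ← e1 u' huv'.ne, ← e1 r hyv]
        exact ⟨hsub _ hx, hsub _ hxr⟩
      · refine hdis u' v' ?_ ?_ huR
        · rw [du_adj]
          exact ⟨huv', fun hh => hvv hh.2, fun hh => huv'.ne' hh.1⟩
        · rw [dk_adj]
          intro hh
          exact hh.2.1 ⟨by simp, hv2'⟩)
  refine h.bad (final_fill h.hyp.deg s3 (Finset.subset_insert _ _) ?_)
  intro p hp hp3
  rcases Finset.mem_insert.1 hp with rfl | hp
  · exact soft1 (h.hyp.deg _) ha.le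
  · have := mem_Rtwo.1 hp; omega

theorem MinC.k3y {G : SimpleGraph V} (h : MinC D G) {u y : V} (ha : aN G u = 1) (ht : tN G u ≤ 4)
    (huy : G.Adj u y) (hy3 : 3 ≤ dg G y) : D + 1 ≤ dg G y + tN G u := by
  by_contra hcon
  have hD := h.D7
  have hy : ∀ r, G.Adj u r → 3 ≤ dg G r → r = y := by
    obtain ⟨y', huy', hy3', hy'⟩ := big_one ha
    intro r h1 h2
    rw [hy' r h1 h2, hy' y huy hy3]
  obtain ⟨M0, s0⟩ := h.sub (dv_le G u) huy (by rw [dv_adj]; tauto)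
  set F := ((nb G u).filter (fun r => dg G r ≤ 2)).biUnion (fun v => used (dv G u) M0 v) with hF
  have hFc : F.card ≤ tN G u := by
    refine le_trans Finset.card_biUnion_le ?_
    refine le_trans (Finset.sum_le_card_nsmul _ _ 1 ?_) ?_
    · intro v hv
      rw [Finset.mem_filter, mem_nb] at hv
      rw [card_used s0.sys, dg_dv G hv.1.symm]
      omega
    · simp [tN]
  have hy1 := dg_pos huy.symm
  have hdk : ∀ a b, (dk G {u}).Adj a b ↔ (dv G u).Adj a b ∨ (a = y ∧ b = u) ∨ (a = u ∧ b = y) := by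
    intro a b
    rw [dk_adj, dv_adj]
    simp only [Finset.mem_singleton]
    constructor
    · rintro ⟨hab, h1, h2⟩
      by_cases h3 : a = u
      · subst h3
        have : b = y := hy b hab (by by_contra hc; exact h1 ⟨rfl, by omega⟩)
        tauto
      · by_cases h4 : b = u
        · subst h4
          have : a = y := hy a hab.symm (by by_contra hc; exact h2 ⟨rfl, by omega⟩)
          tauto
        · tauto
    · rintro (⟨h1, h2, h3⟩ | ⟨rfl, rfl⟩ | ⟨rfl, rfl⟩)
      · tauto
      · exact ⟨huy.symm, fun hh => huy.ne' hh.1, fun hh => by omega⟩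
      · exact ⟨huy, fun hh => by omega, fun hh => huy.ne' hh.1⟩
  obtain ⟨M1, c, s1, hc, hMu, e1⟩ := pend (G1 := dk G {u}) s0 huy.ne' (fun r => by rw [dv_adj]; tauto)
    hdk F (by rw [dg_dv G huy.symm]; omega)
  have huR := Finset.mem_insert_self u (Rtwo G)
  obtain ⟨M2, s2, hsub, -, -⟩ := s1.reset (G1 := dk G {u}) (R := insert u (Rtwo G)) le_rfl (by
    intro r hr
    rw [Finset.mem_singleton] at hr
    subst hr
    exact huR)
  obtain ⟨M3, s3⟩ := kstar h.hyp.deg (Finset.subset_insert u (Rtwo G)) {u} M2 s2 (by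
      intro u' hu'
      rw [Finset.mem_singleton] at hu'
      subst hu'
      exact ⟨huR, by omega, by omega⟩) (by
      intro u' hu' v' huv' hv2'
      rw [Finset.mem_singleton] at hu'
      subst hu'
      refine ⟨by rw [Finset.mem_singleton]; exact huv'.ne', ?_, fun r _ hr => Finset.mem_singleton.1 hr⟩
      rw [Finset.disjoint_left]
      intro x hx hx'
      have hxc : x = c := by
        have := hsub _ hx
        rw [hMu, Finset.mem_singleton] at this
        exact this
      subst hxc
      apply hc
      rw [hF, Finset.mem_biUnion]
      refine ⟨v', Finset.mem_filter.2 ⟨mem_nb.2 huv', hv2'⟩, mem_used.2 ⟨?_, ?_⟩⟩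
      · rw [← e1 v' huv'.ne']; exact hsub _ hx'
      · obtain ⟨r, hr, hxr⟩ := s2.tight v' (Finset.mem_insert_of_mem (mem_Rtwo.2 hv2')) x hx'
        have hr' := dk_adj.1 hr
        have hru : r ≠ u' := by
          rintro rfl
          exact hr'.2.2 ⟨by simp, hv2'⟩
        exact ⟨r, dv_adj.2 ⟨hr'.1, huv'.ne', hru⟩, by rw [← e1 r hru]; exact hsub _ hxr⟩)
  refine h.bad (final_fill h.hyp.deg s3 (Finset.subset_insert _ _) ?_)
  intro p hp hp3
  rcases Finset.mem_insert.1 hp with rfl | hp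
  · exact soft1 (h.hyp.deg _) ha.le
  · have := mem_Rtwo.1 hp; omega

theorem MinC.sm {G : SimpleGraph V} (h : MinC D G) {v w u : V} (hv2 : dg G v ≤ 2) (hvw : G.Adj v w)
    (hvu : G.Adj v u) (hwu : w ≠ u) (hw3 : 3 ≤ dg G w) (hu3 : 3 ≤ dg G u)
    (aw : aN G w ≤ 2) (tw : tN G w ≤ 2) (au : aN G u ≤ 2) (tu : tN G u ≤ 2) : False := by
  have hD := h.D7
  have hv := two_adj hv2 hvw hvu hwu
  have hd := h.hyp.deg
  have hdw := aN_add_tN G w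
  have hdu := aN_add_tN G u
  obtain ⟨M0, s0⟩ := h.sub (dv_le G v) hvw (by rw [dv_adj]; tauto)
  obtain ⟨M, s1, -⟩ := s0.reset (G1 := dv G v) (R := insert w (insert u (Rtwo G))) le_rfl (by simp)
  have hwR : w ∈ insert w (insert u (Rtwo G)) := by simp
  have huR : u ∈ insert w (insert u (Rtwo G)) := by simp
  have h2R : Rtwo G ⊆ insert w (insert u (Rtwo G)) := fun r hr => by simp [hr]
  have hvR : v ∈ insert w (insert u (Rtwo G)) := h2R (mem_Rtwo.2 hv2)
  have hMv := s1.iso hvR (fun r => by rw [dv_adj]; tauto)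
  have hd1 : ∀ p, dg (dv G v) p ≤ D := fun p => (dg_mono (dv_le G v) p).trans (hd p)
  have hd2 : ∀ p, dg (du G u v) p ≤ D := fun p => (dg_mono (du_le G u v) p).trans (hd p)
  have bw : ((nb (dv G v) w).biUnion M).card + 2 ≤ 2 * D + 4 := by
    refine le_trans (bnd_erase (G := G) M 2 (mem_nb.2 hvw.symm) (by rw [nb_dv G hvw.ne'])) ?_
    refine le_trans (sum_bd2 (D := D) G w _ ?_ ?_) ?_
    · intro r _
      split_ifs
      · omega
      · exact s1.card_le hd1 r
    · intro r _ hr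
      split_ifs
      · omega
      · rw [s1.card_tight (h2R (mem_Rtwo.2 hr))]; exact (dg_mono (dv_le G v) r).trans hr
    · have : aN G w * D ≤ 2 * D := Nat.mul_le_mul_right _ aw
      omega
  have cu : (M u).card ≤ 3 := by
    rw [s1.card_tight huR, dg_dv G hvu.symm]; omega
  obtain ⟨x, hx⟩ := exists_col ((nb (dv G v) w).biUnion M ∪ M u) (by
    have := Finset.card_union_le ((nb (dv G v) w).biUnion M) (M u)
    omega)
  simp only [Finset.mem_union, Finset.mem_biUnion, mem_nb, not_or, not_exists, not_and] at hx
  obtain ⟨M1, s2, e0, e1, e2⟩ := s1.add hvw.ne' (du_iff hv hwu) x (by rw [hMv]; simp) hx.1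
    (fun r hr => absurd hr (by rw [dv_adj]; tauto)) (Or.inl hwR) (Or.inl hvR)
  have bu : ((nb (du G u v) u).biUnion M1).card + 2 ≤ 2 * D + 4 := by
    refine le_trans (bnd_erase (G := G) M1 2 (mem_nb.2 hvu.symm) ?_) ?_
    · intro r hr
      rw [mem_nb, du_adj] at hr
      rw [Finset.mem_erase, mem_nb]
      exact ⟨fun hh => hr.2.1 ⟨rfl, hh⟩, hr.1⟩
    refine le_trans (sum_bd2 (D := D) G u _ ?_ ?_) ?_
    · intro r _
      split_ifs
      · omega
      · exact s2.card_le hd2 r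
    · intro r _ hr
      split_ifs
      · omega
      · rw [s2.card_tight (h2R (mem_Rtwo.2 hr))]; exact (dg_mono (du_le G u v) r).trans hr
    · have : aN G u * D ≤ 2 * D := Nat.mul_le_mul_right _ au
      omega
  have cw : (M1 w).card ≤ 4 := by
    rw [s2.card_tight hwR]; exact (dg_mono (du_le G u v) w).trans (by omega)
  obtain ⟨y, hy⟩ := exists_col ((nb (du G u v) u).biUnion M1 ∪ M1 w) (by
    have := Finset.card_union_le ((nb (du G u v) u).biUnion M1) (M1 w)
    omega)
  simp only [Finset.mem_union, Finset.mem_biUnion, mem_nb, not_or, not_exists, not_and] at hy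
  obtain ⟨M2, s3, -⟩ := s2.add hvu.ne' (du_iff2 hvu.symm) y (by
      intro z hz hz'
      rw [e0 u hwu.symm hvu.ne'] at hz
      rw [e2, hMv] at hz'
      have : z = x := by simpa using hz'
      subst this
      exact absurd hz hx.2) hy.1 (by
      intro r hr
      rw [du_adj] at hr
      rcases (hv r).1 hr.1 with rfl | rfl
      · exact hy.2
      · exact absurd ⟨rfl, rfl⟩ hr.2.2) (Or.inl huR) (Or.inl hvR)
  refine h.bad (final_fill hd s3 h2R ?_)
  intro p hp hp3
  rcases Finset.mem_insert.1 hp with rfl | hp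
  · exact soft2 (hd _) aw tw
  rcases Finset.mem_insert.1 hp with rfl | hp
  · exact soft2 (hd _) au tu
  · have := mem_Rtwo.1 hp; omega

end

section
variable {V : Type*} [Fintype V] {D : ℕ}

theorem pend2 {G0 G1 : SimpleGraph V} {R : Finset V} {M : V → Finset (Fin (3 * D))} (h : St G0 R M)
    {w v1 v2 : V} (hw : w ∉ R) (h1R : v1 ∈ R) (h2R : v2 ∈ R) (h12 : v1 ≠ v2)
    (i1 : ∀ r, ¬ G0.Adj v1 r) (i2 : ∀ r, ¬ G0.Adj v2 r) (hd : dg G0 w + 2 ≤ D)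
    (hG : ∀ a b, G1.Adj a b ↔ G0.Adj a b ∨ ((a = w ∧ b = v1) ∨ (a = v1 ∧ b = w)) ∨
      ((a = w ∧ b = v2) ∨ (a = v2 ∧ b = w))) :
    ∃ e1 e2, e1 ≠ e2 ∧ ∀ f1 f2, ((f1 = e1 ∧ f2 = e2) ∨ (f1 = e2 ∧ f2 = e1)) →
      ∃ M', St G1 R M' ∧ M' v1 = {f1} ∧ M' v2 = {f2} ∧ ∀ r, r ≠ v1 → r ≠ v2 → M' r = M r := by
  obtain ⟨e1, p1, -, p2⟩ := h.free hw ∅ (by simp; omega)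
  obtain ⟨e2, q1, q0, q2⟩ := h.free hw {e1} (by simp; omega)
  have h1w : w ≠ v1 := by rintro rfl; exact hw h1R
  have h2w : w ≠ v2 := by rintro rfl; exact hw h2R
  have hM1 := h.iso h1R i1
  have hM2 := h.iso h2R i2
  refine ⟨e1, e2, fun hh => q0 (by rw [hh]; simp), ?_⟩
  intro f1 f2 hf
  have hfn : f1 ≠ f2 := by
    have : e1 ≠ e2 := fun hh => q0 (by rw [hh]; simp)
    rcases hf with ⟨rfl, rfl⟩ | ⟨rfl, rfl⟩
    · exact this
    · exact this.symm
  have a1 : f1 ∈ M w ∧ ∀ r, G0.Adj w r → f1 ∉ M r := by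
    rcases hf with ⟨rfl, rfl⟩ | ⟨rfl, rfl⟩
    · exact ⟨p1, p2⟩
    · exact ⟨q1, q2⟩
  have a2 : f2 ∈ M w ∧ ∀ r, G0.Adj w r → f2 ∉ M r := by
    rcases hf with ⟨rfl, rfl⟩ | ⟨rfl, rfl⟩
    · exact ⟨q1, q2⟩
    · exact ⟨p1, p2⟩
  let Gm : SimpleGraph V :=
    { Adj := fun a b => G0.Adj a b ∨ (a = w ∧ b = v1) ∨ (a = v1 ∧ b = w)
      symm := ⟨fun a b hab => by
        rcases hab with hab | hab | hab
        · exact Or.inl hab.symm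
        · exact Or.inr (Or.inr hab.symm)
        · exact Or.inr (Or.inl hab.symm)⟩
      loopless := ⟨fun a hab => by
        rcases hab with hab | ⟨rfl, hab⟩ | ⟨rfl, hab⟩
        · exact G0.loopless.irrefl _ hab
        · exact h1w hab
        · exact h1w hab.symm⟩ }
  obtain ⟨M1, s1, b0, b1, b2⟩ := h.add (G2 := Gm) h1w (fun a b => Iff.rfl) f1 (by rw [hM1]; simp)
    a1.2 (fun r hr => absurd hr (i1 r)) (Or.inr a1.1) (Or.inl h1R)
  have bw : M1 w = M w := by rw [b1, Finset.insert_eq_of_mem a1.1]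
  have bv2 : M1 v2 = ∅ := by rw [b0 v2 h2w.symm h12.symm, hM2]
  obtain ⟨M2, s2, c0, c1, c2⟩ := s1.add (G2 := G1) h2w (by
      intro a b
      rw [hG]
      change _ ↔ (G0.Adj a b ∨ (a = w ∧ b = v1) ∨ (a = v1 ∧ b = w)) ∨ _
      tauto) f2 (by rw [bv2]; simp) (by
      rintro r (hr | hr | hr)
      · have hr1 : r ≠ v1 := by rintro rfl; exact i1 _ hr.symm
        rw [b0 r hr.ne' hr1]
        exact a2.2 r hr
      · rw [hr.2, b2, hM1]
        simpa using hfn.symm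
      · exact absurd hr.1 h1w) (by
      rintro r (hr | hr | hr)
      · exact absurd hr (i2 r)
      · exact absurd hr.1 h2w.symm
      · exact absurd hr.1 h12.symm) (Or.inr (by rw [bw]; exact a2.1)) (Or.inl h2R)
  refine ⟨M2, s2, ?_, ?_, ?_⟩
  · rw [c0 v1 h1w.symm h12, b2, hM1]; rfl
  · rw [c2, bv2]; rfl
  · intro r r1 r2
    by_cases hrw : r = w
    · subst hrw
      rw [c1, bw, Finset.insert_eq_of_mem a2.1]
    · rw [c0 r hrw r2, b0 r hrw r1]

theorem hyp_switch {G G' : SimpleGraph V} (h : Hyp D G) {u1 u2 : V} (hu : u1 ≠ u2)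
    (hG : ∀ a b, G'.Adj a b → G.Adj a b ∨ (a = u1 ∧ b = u2) ∨ (a = u2 ∧ b = u1))
    (hd : ∀ p, dg G' p ≤ dg G p) (h1 : dg G u1 ≤ 2) (h2 : dg G u2 ≤ 2) (ha : G'.Adj u1 u2) :
    Hyp D G' := by
  refine ⟨fun p => (hd p).trans (h.deg p), ?_, ?_⟩
  · have base : ∀ S : Finset V, ¬ (u1 ∈ S ∧ u2 ∈ S) → ∑ p ∈ S, (nb G' p ∩ S).card ≤ 3 * S.card := by
      intro S hS
      refine le_trans (Finset.sum_le_sum (fun p hp => ?_)) (h.dens S)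
      refine Finset.card_le_card ?_
      intro r hr
      rw [Finset.mem_inter, mem_nb] at hr ⊢
      refine ⟨?_, hr.2⟩
      rcases hG p r hr.1 with hh | ⟨rfl, rfl⟩ | ⟨rfl, rfl⟩
      · exact hh
      · exact absurd ⟨hp, hr.2⟩ hS
      · exact absurd ⟨hr.2, hp⟩ hS
    intro S
    by_cases hS : u1 ∈ S ∧ u2 ∈ S
    · obtain ⟨s1, s2⟩ := hS
      have s2' : u2 ∈ S.erase u1 := Finset.mem_erase.2 ⟨hu.symm, s2⟩
      set S0 := (S.erase u1).erase u2 with hS0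
      have b := base S0 (by simp [hS0])
      have hc : S.card = S0.card + 2 := by
        rw [hS0, Finset.card_erase_of_mem s2', Finset.card_erase_of_mem s1]
        have : 2 ≤ S.card := by
          rw [← Finset.card_pair hu]
          refine Finset.card_le_card ?_
          intro r hr
          simp only [Finset.mem_insert, Finset.mem_singleton] at hr
          rcases hr with rfl | rfl <;> assumption
        omega
      rw [← Finset.add_sum_erase _ _ s1, ← Finset.add_sum_erase _ _ s2', ← hS0]
      have hle : ∀ p ∈ S0, (nb G' p ∩ S).card ≤ (nb G' p ∩ S0).card +
          ((if G'.Adj u1 p then 1 else 0) + (if G'.Adj u2 p then 1 else 0)) := by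
        intro p hp
        have hsub : nb G' p ∩ S ⊆ (nb G' p ∩ S0) ∪ ((if G'.Adj u1 p then {u1} else ∅) ∪
            (if G'.Adj u2 p then {u2} else ∅)) := by
          intro r hr
          rw [Finset.mem_inter, mem_nb] at hr
          by_cases hr1 : r = u1
          · subst hr1
            rw [if_pos hr.1.symm]; simp
          · by_cases hr2 : r = u2
            · subst hr2
              rw [if_pos hr.1.symm]; simp
            · apply Finset.mem_union_left
              rw [Finset.mem_inter, mem_nb]
              exact ⟨hr.1, Finset.mem_erase.2 ⟨hr2, Finset.mem_erase.2 ⟨hr1, hr.2⟩⟩⟩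
        refine le_trans (Finset.card_le_card hsub) (le_trans (Finset.card_union_le _ _) ?_)
        refine Nat.add_le_add_left (le_trans (Finset.card_union_le _ _) ?_) _
        refine Nat.add_le_add ?_ ?_ <;> split_ifs <;> simp
      have hsum := Finset.sum_le_sum hle
      rw [Finset.sum_add_distrib, Finset.sum_add_distrib] at hsum
      have cnt : ∀ u u', G'.Adj u u' → u' ∉ S0 → dg G' u ≤ 2 →
          ∑ p ∈ S0, (if G'.Adj u p then 1 else 0) ≤ 1 := by
        intro u u' hadj hu' hdu
        rw [← Finset.card_filter]
        have : S0.filter (fun p => G'.Adj u p) ⊆ (nb G' u).erase u' := by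
          intro p hp
          rw [Finset.mem_filter] at hp
          rw [Finset.mem_erase, mem_nb]
          refine ⟨?_, hp.2⟩
          rintro rfl; exact hu' hp.1
        refine le_trans (Finset.card_le_card this) ?_
        rw [Finset.card_erase_of_mem (mem_nb.2 hadj)]
        change dg G' u - 1 ≤ 1
        omega
      have d1 := (hd u1).trans h1
      have d2 := (hd u2).trans h2
      have c1 := cnt u1 u2 ha (by simp [hS0]) d1
      have c2 := cnt u2 u1 ha.symm (by simp [hS0]) d2
      have t1 : (nb G' u1 ∩ S).card ≤ 2 := (Finset.card_le_card Finset.inter_subset_left).trans d1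
      have t2 : (nb G' u2 ∩ S).card ≤ 2 := (Finset.card_le_card Finset.inter_subset_left).trans d2
      omega
    · exact base S hS
  · rintro ⟨H, hle, hne, hreg⟩
    have hno : ∀ u, dg G' u ≤ 2 → u ∉ H.support := by
      intro u hu2 hus
      have := hreg u hus
      have h3 : (H.neighborSet u).ncard ≤ dg G' u := by
        unfold dg
        rw [← Set.ncard_coe_finset]
        refine Set.ncard_le_ncard ?_ (Set.toFinite _)
        intro r hr
        exact mem_nb.2 (hle hr)
      omega
    refine h.cub ⟨H, ?_, hne, hreg⟩
    intro a b hab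
    rcases hG a b (hle hab) with hh | ⟨rfl, rfl⟩ | ⟨rfl, rfl⟩
    · exact hh
    · exact absurd ⟨_, hab⟩ (hno a ((hd a).trans h1))
    · exact absurd ⟨_, hab⟩ (hno a ((hd a).trans h2))

theorem MinC.bigend {G : SimpleGraph V} (h : MinC D G) {v u w : V} (h2 : dg G v ≤ 2) (hvu : G.Adj v u)
    (hvw : G.Adj v w) (huw : u ≠ w) (hu2 : dg G u ≤ 2) : 3 ≤ dg G w := by
  have := h.a0 hvu
  obtain ⟨y, hy⟩ := Finset.card_pos.1 (by unfold aN at this; omega : 0 < ((nb G v).filter (fun r => 3 ≤ dg G r)).card)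
  rw [Finset.mem_filter, mem_nb] at hy
  rcases (two_adj h2 hvu hvw huw y).1 hy.1 with rfl | rfl
  · omega
  · exact hy.2

theorem MinC.other {G : SimpleGraph V} (h : MinC D G) {v u : V} (hvu : G.Adj v u) : 
    ∃ w, G.Adj v w ∧ w ≠ u := by
  have := h.r0 hvu
  obtain ⟨w, hw⟩ := Finset.card_pos.1 (by rw [Finset.card_erase_of_mem (mem_nb.2 hvu)]; change 0 < dg G v - 1; omega : 0 < ((nb G v).erase u).card)
  rw [Finset.mem_erase, mem_nb] at hw
  exact ⟨w, hw.2, hw.1⟩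

set_option maxHeartbeats 2000000 in
theorem MinC.p2 {G : SimpleGraph V} (h : MinC D G) {w v1 v2 u1 u2 : V} (h12 : v1 ≠ v2)
    (w1 : G.Adj w v1) (w2 : G.Adj w v2) (d1 : dg G v1 ≤ 2) (d2 : dg G v2 ≤ 2)
    (a1 : G.Adj v1 u1) (a2 : G.Adj v2 u2) (n1 : u1 ≠ w) (n2 : u2 ≠ w) (f1 : dg G u1 ≤ 2)
    (f2 : dg G u2 ≤ 2) : False := by
  have hD := h.D7
  have hd := h.hyp.deg
  have hw3 := h.bigend d1 a1 w1.symm n1 f1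
  have hv1 := two_adj d1 w1.symm a1 n1.symm
  have hv2 := two_adj d2 w2.symm a2 n2.symm
  have hwR : w ∉ Rtwo G := by rw [mem_Rtwo]; omega
  have m1 : v1 ∈ Rtwo G := mem_Rtwo.2 d1
  have m2 : v2 ∈ Rtwo G := mem_Rtwo.2 d2
  set G0 := dl G (fun a _ => a = v1 ∨ a = v2) with hG0
  have g0 : ∀ a b, G0.Adj a b ↔ G.Adj a b ∧ ¬ (a = v1 ∨ a = v2) ∧ ¬ (b = v1 ∨ b = v2) :=
    fun a b => Iff.rfl
  have i1 : ∀ r, ¬ G0.Adj v1 r := fun r hh => ((g0 _ _).1 hh).2.1 (Or.inl rfl)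
  have i2 : ∀ r, ¬ G0.Adj v2 r := fun r hh => ((g0 _ _).1 hh).2.1 (Or.inr rfl)
  have hdw : dg G0 w + 2 ≤ D := by
    have hs : nb G0 w ⊆ ((nb G w).erase v1).erase v2 := by
      intro r hr
      rw [mem_nb, g0] at hr
      rw [Finset.mem_erase, Finset.mem_erase, mem_nb]
      tauto
    have := Finset.card_le_card hs
    rw [Finset.card_erase_of_mem (Finset.mem_erase.2 ⟨h12.symm, mem_nb.2 w2⟩),
      Finset.card_erase_of_mem (mem_nb.2 w1)] at this
    change dg G0 w ≤ dg G w - 1 - 1 at this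
    have := hd w
    omega
  by_cases hadj : G.Adj v1 v2
  · -- triangle
    have eu1 : v2 = u1 := by
      rcases (hv1 v2).1 hadj with hh | hh
      · exact absurd hh w2.ne'
      · exact hh
    have eu2 : v1 = u2 := by
      rcases (hv2 v1).1 hadj.symm with hh | hh
      · exact absurd hh w1.ne'
      · exact hh
    obtain ⟨M0, s0⟩ := h.sub (dl_le G _ : G0 ≤ G) w1 (fun hh => ((g0 _ _).1 hh).2.2 (Or.inl rfl))
    obtain ⟨M, s1, -⟩ := s0.reset (G1 := G0) (R := Rtwo G) le_rfl (by simp)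
    obtain ⟨e1, e2, he, hp⟩ := pend2 (G1 := du G v1 v2) s1 hwR m1 m2 h12 i1 i2 hdw (by
      intro a b
      rw [du_adj, g0]
      have := w1.ne
      have := w2.ne
      constructor
      · rintro ⟨hab, p1, p2⟩
        by_cases ha : a = v1
        · subst ha
          rcases (hv1 b).1 hab with rfl | rfl
          · exact Or.inr (Or.inl (Or.inr ⟨rfl, rfl⟩))
          · exact absurd ⟨rfl, eu1.symm⟩ p1
        · by_cases ha2 : a = v2
          · subst ha2
            rcases (hv2 b).1 hab with rfl | rfl
            · exact Or.inr (Or.inr (Or.inr ⟨rfl, rfl⟩))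
            · exact absurd ⟨eu2.symm, rfl⟩ p2
          · by_cases hb : b = v1
            · subst hb
              rcases (hv1 a).1 hab.symm with rfl | rfl
              · exact Or.inr (Or.inl (Or.inl ⟨rfl, rfl⟩))
              · exact absurd eu1.symm ha2
            · by_cases hb2 : b = v2
              · subst hb2
                rcases (hv2 a).1 hab.symm with rfl | rfl
                · exact Or.inr (Or.inr (Or.inl ⟨rfl, rfl⟩))
                · exact absurd eu2.symm ha
              · exact Or.inl ⟨hab, not_or.2 ⟨ha, ha2⟩, not_or.2 ⟨hb, hb2⟩⟩
      · rintro (hh | (⟨rfl, rfl⟩ | ⟨rfl, rfl⟩) | (⟨rfl, rfl⟩ | ⟨rfl, rfl⟩))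
        · exact ⟨hh.1, fun q => hh.2.1 (Or.inl q.1), fun q => hh.2.1 (Or.inr q.2)⟩
        · exact ⟨w1, fun hh => w1.ne hh.1, fun hh => w2.ne hh.2⟩
        · exact ⟨w1.symm, fun hh => w2.ne hh.2, fun hh => w1.ne hh.1⟩
        · exact ⟨w2, fun hh => w1.ne hh.1, fun hh => w2.ne hh.2⟩
        · exact ⟨w2.symm, fun hh => h12 hh.1.symm, fun hh => w1.ne hh.1⟩)
    obtain ⟨M1, s2, q1, q2, -⟩ := hp e1 e2 (Or.inl ⟨rfl, rfl⟩)
    have hdd : ∀ p, dg (du G v1 v2) p ≤ D := fun p => (dg_mono (du_le G v1 v2) p).trans (hd p)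
    obtain ⟨x, hx⟩ := exists_col (M1 w) (by have := s2.card_le hdd w; omega)
    obtain ⟨M2, s3, -⟩ := s2.add h12 (du_iff2 hadj) x (by
        rw [q1, q2]
        intro z z1 z2
        rw [Finset.mem_singleton] at z1 z2
        exact absurd (z1.symm.trans z2) he) (by
        intro r hr
        rw [du_adj] at hr
        rcases (hv1 r).1 hr.1 with rfl | rfl
        · exact hx
        · exact absurd ⟨rfl, eu1.symm⟩ hr.2.1) (by
        intro r hr
        rw [du_adj] at hr
        rcases (hv2 r).1 hr.1 with rfl | rfl
        · exact hx
        · exact absurd ⟨eu2.symm, rfl⟩ hr.2.2) (Or.inl m1) (Or.inl m2)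
    exact h.bad (final_fill hd s3 (Finset.Subset.refl _) (fun p hp hp3 => by
      have := mem_Rtwo.1 hp; omega))
  · have u1v2 : u1 ≠ v2 := by rintro rfl; exact hadj a1
    have u2v1 : u2 ≠ v1 := by rintro rfl; exact hadj a2.symm
    have u12 : u1 ≠ u2 := by
      rintro rfl
      have := h.bigend f1 a1.symm a2.symm h12 d1
      omega
    have nu12 : ¬ G.Adj u1 u2 := by
      intro hh
      have := h.bigend f1 a1.symm hh u2v1.symm d1
      omega
    obtain ⟨y1, b1, ny1⟩ := h.other a1.symm
    obtain ⟨y2, b2, ny2⟩ := h.other a2.symm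
    have y13 := h.bigend f1 a1.symm b1 ny1.symm d1
    have y23 := h.bigend f2 a2.symm b2 ny2.symm d2
    have hu1 := two_adj f1 a1.symm b1 ny1.symm
    have hu2 := two_adj f2 a2.symm b2 ny2.symm
    let G' : SimpleGraph V :=
      { Adj := fun a b => G0.Adj a b ∨ (a = u1 ∧ b = u2) ∨ (a = u2 ∧ b = u1)
        symm := ⟨fun a b hab => by
          rcases hab with hab | hab | hab
          · exact Or.inl hab.symm
          · exact Or.inr (Or.inr hab.symm)
          · exact Or.inr (Or.inl hab.symm)⟩
        loopless := ⟨fun a hab => by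
          rcases hab with hab | ⟨rfl, hab⟩ | ⟨rfl, hab⟩
          · exact G0.loopless.irrefl _ hab
          · exact u12 hab
          · exact u12 hab.symm⟩ }
    have hG0G' : G0 ≤ G' := fun a b hab => Or.inl hab
    have hdG' : ∀ p, dg G' p ≤ dg G p := by
      intro p
      by_cases hp1 : p = u1
      · subst hp1
        have hs : nb G' p ⊆ insert u2 ((nb G p).erase v1) := by
          intro r hr
          rw [mem_nb] at hr
          rw [Finset.mem_insert, Finset.mem_erase, mem_nb]
          rcases hr with hr | hr | hr
          · exact Or.inr ⟨fun q => ((g0 _ _).1 hr).2.2 (by simp [q]), ((g0 _ _).1 hr).1⟩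
          · exact Or.inl hr.2
          · exact absurd hr.1 u12
        refine (Finset.card_le_card hs).trans ((Finset.card_insert_le _ _).trans ?_)
        rw [Finset.card_erase_of_mem (mem_nb.2 a1.symm)]
        change dg G p - 1 + 1 ≤ dg G p
        have := dg_pos a1.symm
        omega
      · by_cases hp2 : p = u2
        · subst hp2
          have hs : nb G' p ⊆ insert u1 ((nb G p).erase v2) := by
            intro r hr
            rw [mem_nb] at hr
            rw [Finset.mem_insert, Finset.mem_erase, mem_nb]
            rcases hr with hr | hr | hr
            · exact Or.inr ⟨fun q => ((g0 _ _).1 hr).2.2 (by simp [q]), ((g0 _ _).1 hr).1⟩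
            · exact absurd hr.1 u12.symm
            · exact Or.inl hr.2
          refine (Finset.card_le_card hs).trans ((Finset.card_insert_le _ _).trans ?_)
          rw [Finset.card_erase_of_mem (mem_nb.2 a2.symm)]
          change dg G p - 1 + 1 ≤ dg G p
          have := dg_pos a2.symm
          omega
        · refine Finset.card_le_card ?_
          intro r hr
          rw [mem_nb] at hr ⊢
          rcases hr with hr | hr | hr
          · exact ((g0 _ _).1 hr).1
          · exact absurd hr.1 hp1
          · exact absurd hr.1 hp2
    have hyp' : Hyp D G' := hyp_switch h.hyp u12 (by
      rintro a b (hab | hab)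
      · exact Or.inl ((g0 _ _).1 hab).1
      · exact Or.inr hab) hdG' f1 f2 (Or.inr (Or.inl ⟨rfl, rfl⟩))
    obtain ⟨M0, s0⟩ := h.ih G' hyp' (by
      refine Finset.sum_lt_sum (fun p _ => hdG' p) ⟨v1, Finset.mem_univ _, ?_⟩
      have : nb G' v1 = ∅ := by
        rw [Finset.eq_empty_iff_forall_notMem]
        intro r hr
        rw [mem_nb] at hr
        rcases hr with hr | hr | hr
        · exact i1 r hr
        · exact a1.ne hr.1
        · exact u2v1 hr.1.symm
      have := dg_pos a1
      have : dg G' v1 = 0 := by unfold dg; rw [‹nb G' v1 = ∅›]; rfl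
      omega)
    obtain ⟨M, s1, -, -, hdis⟩ := s0.reset (G1 := G0) (R := Rtwo G) hG0G' (by simp)
    have hdis12 := hdis u1 u2 (Or.inr (Or.inl ⟨rfl, rfl⟩)) (fun hh => nu12 ((g0 _ _).1 hh).1) (mem_Rtwo.2 f1)
    have cd1 : (M u1).card ≤ 1 := by
      rw [s1.card_tight (mem_Rtwo.2 f1)]
      refine Finset.card_le_one.2 (fun r hr s hs => two_nb (dl_le G _ : G0 ≤ G) f1 a1 (i1 u1) r s (mem_nb.1 hr) (mem_nb.1 hs))
    have cd2 : (M u2).card ≤ 1 := by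
      rw [s1.card_tight (mem_Rtwo.2 f2)]
      refine Finset.card_le_one.2 (fun r hr s hs => two_nb (dl_le G _ : G0 ≤ G) f2 a2 (i2 u2) r s (mem_nb.1 hr) (mem_nb.1 hs))
    obtain ⟨e1, e2, he, hp⟩ := pend2 (G1 := dk G {u1, u2}) s1 hwR m1 m2 h12 i1 i2 hdw (by
      intro a b
      rw [dk_adj, g0]
      simp only [Finset.mem_insert, Finset.mem_singleton]
      constructor
      · rintro ⟨hab, p1, p2⟩
        by_cases ha : a = v1
        · subst ha
          rcases (hv1 b).1 hab with rfl | rfl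
          · exact Or.inr (Or.inl (Or.inr ⟨rfl, rfl⟩))
          · exact absurd ⟨Or.inl rfl, d1⟩ p2
        · by_cases ha2 : a = v2
          · subst ha2
            rcases (hv2 b).1 hab with rfl | rfl
            · exact Or.inr (Or.inr (Or.inr ⟨rfl, rfl⟩))
            · exact absurd ⟨Or.inr rfl, d2⟩ p2
          · by_cases hb : b = v1
            · subst hb
              rcases (hv1 a).1 hab.symm with rfl | rfl
              · exact Or.inr (Or.inl (Or.inl ⟨rfl, rfl⟩))
              · exact absurd ⟨Or.inl rfl, d1⟩ p1
            · by_cases hb2 : b = v2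
              · subst hb2
                rcases (hv2 a).1 hab.symm with rfl | rfl
                · exact Or.inr (Or.inr (Or.inl ⟨rfl, rfl⟩))
                · exact absurd ⟨Or.inr rfl, d2⟩ p1
              · exact Or.inl ⟨hab, not_or.2 ⟨ha, ha2⟩, not_or.2 ⟨hb, hb2⟩⟩
      · have key : ∀ a b, G.Adj a b → ¬ (b = v1 ∨ b = v2) → ¬ ((a = u1 ∨ a = u2) ∧ dg G b ≤ 2) := by
          rintro a b hab hb ⟨rfl | rfl, hb2⟩
          · rcases (hu1 b).1 hab with rfl | rfl
            · exact hb (Or.inl rfl)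
            · omega
          · rcases (hu2 b).1 hab with rfl | rfl
            · exact hb (Or.inr rfl)
            · omega
        have key1 : ∀ b, ¬ ((w = u1 ∨ w = u2) ∧ dg G b ≤ 2) := by
          rintro b ⟨hh | hh, _⟩
          · exact n1 hh.symm
          · exact n2 hh.symm
        have key2 : ∀ a, ¬ ((a = u1 ∨ a = u2) ∧ dg G w ≤ 2) := by
          rintro a ⟨_, hh⟩; omega
        rintro (⟨hab, ha, hb⟩ | (⟨rfl, rfl⟩ | ⟨rfl, rfl⟩) | (⟨rfl, rfl⟩ | ⟨rfl, rfl⟩))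
        · exact ⟨hab, key a b hab hb, key b a hab.symm ha⟩
        · exact ⟨w1, key1 _, key2 _⟩
        · exact ⟨w1.symm, key2 _, key1 _⟩
        · exact ⟨w2, key1 _, key2 _⟩
        · exact ⟨w2.symm, key2 _, key1 _⟩)
    have hex : ∃ g1 g2, ((g1 = e1 ∧ g2 = e2) ∨ (g1 = e2 ∧ g2 = e1)) ∧ g1 ∉ M u1 ∧ g2 ∉ M u2 := by
      rw [Finset.disjoint_left] at hdis12
      rw [Finset.card_le_one] at cd1 cd2
      by_cases q1 : e1 ∈ M u1
      · exact ⟨e2, e1, Or.inr ⟨rfl, rfl⟩, fun hh => he (cd1 e1 q1 e2 hh), hdis12 q1⟩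
      · by_cases q2 : e2 ∈ M u2
        · exact ⟨e2, e1, Or.inr ⟨rfl, rfl⟩, fun hh => hdis12 hh q2, fun hh => he (cd2 e1 hh e2 q2)⟩
        · exact ⟨e1, e2, Or.inl ⟨rfl, rfl⟩, q1, q2⟩
    obtain ⟨g1, g2, hg, z1, z2⟩ := hex
    obtain ⟨M1, s2, q1, q2, q3⟩ := hp g1 g2 hg
    have ha1 : ∀ u v, G.Adj u v → dg G v ≤ 2 → dg G u ≤ 2 → aN G u ≤ 1 ∧ 2 * tN G u ≤ D + 1 := by
      intro u v huv hv hu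
      have : 1 ≤ tN G u := Finset.card_pos.2 ⟨v, Finset.mem_filter.2 ⟨mem_nb.2 huv, hv⟩⟩
      have := aN_add_tN G u
      omega
    obtain ⟨M3, s3⟩ := kstar hd (Finset.Subset.refl (Rtwo G)) {u1, u2} M1 s2 (by
        intro u hu
        simp only [Finset.mem_insert, Finset.mem_singleton] at hu
        rcases hu with rfl | rfl
        · exact ⟨mem_Rtwo.2 f1, ha1 u v1 a1.symm d1 f1⟩
        · exact ⟨mem_Rtwo.2 f2, ha1 u v2 a2.symm d2 f2⟩) (by
        intro u hu v huv hv2'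
        simp only [Finset.mem_insert, Finset.mem_singleton] at hu ⊢
        rcases hu with rfl | rfl
        · rcases (hu1 v).1 huv with rfl | rfl
          · refine ⟨by rintro (hh | hh); exacts [a1.ne hh, u2v1 hh.symm], ?_, ?_⟩
            · rw [q1, q3 u a1.ne' u1v2]; simpa using z1
            · intro r hr hr'
              rcases (hv1 r).1 hr with rfl | rfl
              · rcases hr' with hh | hh
                · exact hh
                · exact absurd hh.symm n2
              · rfl
          · omega
        · rcases (hu2 v).1 huv with rfl | rfl
          · refine ⟨by rintro (hh | hh); exacts [u1v2 hh.symm, a2.ne hh], ?_, ?_⟩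
            · rw [q2, q3 u u2v1 a2.ne']; simpa using z2
            · intro r hr hr'
              rcases (hv2 r).1 hr with rfl | rfl
              · rcases hr' with hh | hh
                · exact absurd hh.symm n1
                · exact hh
              · rfl
          · omega)
    exact h.bad (final_fill hd s3 (Finset.Subset.refl _) (fun p hp hp3 => by
      have := mem_Rtwo.1 hp; omega))

end

section
variable {V : Type*} [Fintype V] {D : ℕ}

/-- weighted neighbourhood sum -/
noncomputable def wt (D : ℕ) (G : SimpleGraph V) (x : V) : ℕ :=
  (oN G x + kN G x) * D + bN G x * 3 + tN G x * 2

def NC (D : ℕ) (G : SimpleGraph V) (x : V) : Prop := dg G x + 2 ≤ D ∧ wt D G x ≤ 2 * D + 3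

noncomputable def RS (G : SimpleGraph V) (S : Finset V) : Finset V :=
  Finset.univ.filter (fun r => dg G r ≤ 2 ∨ r ∈ S ∨ (isLeaf G r ∧ ∃ s ∈ S, G.Adj s r))

theorem mem_RS {G : SimpleGraph V} {S : Finset V} {r : V} :
    r ∈ RS G S ↔ dg G r ≤ 2 ∨ r ∈ S ∨ (isLeaf G r ∧ ∃ s ∈ S, G.Adj s r) := by simp [RS]

theorem two_RS {G : SimpleGraph V} {S : Finset V} : Rtwo G ⊆ RS G S :=
  fun r hr => mem_RS.2 (Or.inl (mem_Rtwo.1 hr))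

def soft (D : ℕ) (G : SimpleGraph V) (p : V) : Prop := aN G p * D + tN G p * 2 ≤ 2 * D + dg G p

theorem sum_wt {G G1 : SimpleGraph V} {R : Finset V} {M : V → Finset (Fin (3 * D))}
    (hd : ∀ p, dg G p ≤ D) (hle : G1 ≤ G) (s : St G1 R M) (hR : Rtwo G ⊆ R) {x : V}
    (hl : ∀ r, G.Adj x r → isLeaf G r → r ∈ R) (v : V) (c : ℕ) (hc : c ≤ D)
    (c2 : dg G v ≤ 2 → c ≤ 2) (c3 : isLeaf G v → c ≤ 3) :
    ∑ r ∈ nb G x, (if r = v then c else (M r).card) ≤ wt D G x := by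
  have hd1 : ∀ p, dg G1 p ≤ D := fun p => (dg_mono hle p).trans (hd p)
  refine le_trans (sum_bd (D := D) G x D _ ?_ ?_ ?_ ?_) (le_of_eq (by unfold wt; ring))
  · intro r _
    split_ifs
    · exact hc
    · exact s.card_le hd1 r
  · intro r _ hr
    split_ifs with hh
    · subst hh; exact c2 hr
    · rw [s.card_tight (hR (mem_Rtwo.2 hr))]; exact (dg_mono hle r).trans hr
  · intro r hr hr3
    split_ifs with hh
    · subst hh; exact c3 hr3
    · rw [s.card_tight (hl r (mem_nb.1 hr) hr3)]; exact (dg_mono hle r).trans hr3.1.le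
  · intro r _ _
    split_ifs
    · exact hc
    · exact s.card_le hd1 r

theorem ubd {G G1 : SimpleGraph V} {R : Finset V} {M : V → Finset (Fin (3 * D))}
    (hd : ∀ p, dg G p ≤ D) (hle : G1 ≤ G) (s : St G1 R M) (hR : Rtwo G ⊆ R) {x v : V}
    (hl : ∀ r, G.Adj x r → isLeaf G r → r ∈ R) (hv : G.Adj x v) (nv : ¬ G1.Adj x v) (c : ℕ) (hc : c ≤ D)
    (c2 : dg G v ≤ 2 → c ≤ 2) (c3 : isLeaf G v → c ≤ 3) :
    ((nb G1 x).biUnion M).card + c ≤ wt D G x := by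
  refine le_trans (bnd_erase (G := G) M c (mem_nb.2 hv) ?_) (sum_wt hd hle s hR hl v c hc c2 c3)
  intro r hr
  rw [mem_nb] at hr
  rw [Finset.mem_erase, mem_nb]
  refine ⟨?_, hle hr⟩
  rintro rfl
  exact nv hr

theorem final_fill2 {G : SimpleGraph V} (hd : ∀ p, dg G p ≤ D) : ∀ n, ∀ (R : Finset V)
    (M : V → Finset (Fin (3 * D))), St G R M → Rtwo G ⊆ R → 
    (R.filter (fun p => 3 ≤ dg G p ∧ ¬ soft D G p)).card = n →
    (∀ p ∈ R, 3 ≤ dg G p → soft D G p ∨ (¬ isLeaf G p ∧ (∀ r, G.Adj p r → isLeaf G r → r ∈ R) ∧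
      wt D G p ≤ 2 * D + dg G p)) → Good D G := by
  intro n
  induction n with
  | zero =>
    intro R M h hR hc hs
    refine final_fill hd h hR ?_
    intro p hp hp3
    by_contra hcon
    have : p ∈ R.filter (fun p => 3 ≤ dg G p ∧ ¬ soft D G p) := Finset.mem_filter.2 ⟨hp, hp3, hcon⟩
    rw [Finset.card_eq_zero] at hc
    rw [hc] at this
    simp at this
  | succ n ih =>
    intro R M h hR hc hs
    obtain ⟨p, hp⟩ := Finset.card_pos.1 (by omega : 0 < (R.filter (fun p => 3 ≤ dg G p ∧ ¬ soft D G p)).card)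
    obtain ⟨hpR, hp3, hps⟩ := Finset.mem_filter.1 hp
    obtain hh | ⟨hpl, hpn, hpw⟩ := hs p hpR hp3
    · exact absurd hh hps
    have hb : ∑ q ∈ nb G p, (M q).card ≤ 2 * D + dg G p := by
      refine le_trans (le_trans (le_of_eq ?_) (sum_wt hd le_rfl h hR hpn p 0 (by omega) (by omega) (by omega))) hpw
      refine Finset.sum_congr rfl (fun r hr => ?_)
      rw [if_neg (mem_nb.1 hr).ne']
    obtain ⟨M', h', _⟩ := h.fill hpR (hd p) hb
    refine ih (R.erase p) M' h' ?_ ?_ ?_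
    · intro q hq
      refine Finset.mem_erase.2 ⟨?_, hR hq⟩
      rintro rfl
      have := mem_Rtwo.1 hq
      omega
    · rw [Finset.filter_erase, Finset.card_erase_of_mem hp]; omega
    · intro q hq hq3
      obtain hh | ⟨a, b, c⟩ := hs q (Finset.mem_of_mem_erase hq) hq3
      · exact Or.inl hh
      · refine Or.inr ⟨a, fun r hr hrl => Finset.mem_erase.2 ⟨?_, b r hr hrl⟩, c⟩
        rintro rfl
        exact hpl hrl

theorem final_S {G : SimpleGraph V} (hd : ∀ p, dg G p ≤ D) {S : Finset V}
    {M : V → Finset (Fin (3 * D))} (h : St G (RS G S) M)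
    (hs : ∀ p ∈ S, 3 ≤ dg G p → soft D G p ∨ wt D G p ≤ 2 * D + dg G p) : Good D G := by
  refine final_fill2 hd _ _ M h two_RS rfl ?_
  intro p hp hp3
  by_cases hl : isLeaf G p
  · exact Or.inl (soft_leaf (hd p) hl)
  rcases mem_RS.1 hp with hh | hh | hh
  · omega
  · rcases hs p hh hp3 with h1 | h1
    · exact Or.inl h1
    · exact Or.inr ⟨hl, fun r hr hrl => mem_RS.2 (Or.inr (Or.inr ⟨hrl, p, hh, hr⟩)), h1⟩
  · exact absurd hh.1 hl

theorem leaf_str {G : SimpleGraph V} {u x v : V} (hu : isLeaf G u) (hx : G.Adj u x) (hx3 : 3 ≤ dg G x)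
    (hv : G.Adj u v) (hv2 : dg G v ≤ 2) : ∃ y, y ≠ x ∧ G.Adj u y ∧ 3 ≤ dg G y ∧
      ∀ r, G.Adj u r → r = x ∨ r = y ∨ r = v := by
  have ha := hu.2
  unfold aN at ha
  have ht := leaf_t hu
  unfold tN at ht
  have hxm : x ∈ (nb G u).filter (fun r => 3 ≤ dg G r) := Finset.mem_filter.2 ⟨mem_nb.2 hx, hx3⟩
  have := Finset.card_erase_of_mem hxm
  rw [ha] at this
  obtain ⟨y, hy⟩ := Finset.card_eq_one.1 this
  have hym : y ∈ ((nb G u).filter (fun r => 3 ≤ dg G r)).erase x := by rw [hy]; simp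
  rw [Finset.mem_erase, Finset.mem_filter, mem_nb] at hym
  refine ⟨y, hym.1, hym.2.1, hym.2.2, ?_⟩
  intro r hr
  by_cases h2 : dg G r ≤ 2
  · right; right
    exact Finset.card_le_one.1 ht.le r (Finset.mem_filter.2 ⟨mem_nb.2 hr, h2⟩) v
      (Finset.mem_filter.2 ⟨mem_nb.2 hv, hv2⟩)
  · by_cases hrx : r = x
    · exact Or.inl hrx
    · right; left
      have : r ∈ ((nb G u).filter (fun r => 3 ≤ dg G r)).erase x := by
        rw [Finset.mem_erase, Finset.mem_filter, mem_nb]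
        exact ⟨hrx, hr, by omega⟩
      rw [hy] at this
      simpa using this

theorem card_union3 {A B C : Finset (Fin (3 * D))} {a b c : ℕ} (ha : A.card ≤ a) (hb : B.card ≤ b)
    (hc : C.card ≤ c) : (A ∪ B ∪ C).card ≤ a + b + c := by
  have := Finset.card_union_le (A ∪ B) C
  have := Finset.card_union_le A B
  omega

theorem MinC.l1 {G : SimpleGraph V} (h : MinC D G) {u x v w : V} (hu : isLeaf G u) (hx : G.Adj u x)
    (hx3 : 3 ≤ dg G x) (hnc : NC D G x) (huv : G.Adj u v) (hv2 : dg G v ≤ 2) (hvw : G.Adj v w)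
    (hwu : w ≠ u) : D ≤ dg G w + 1 := by
  by_contra hcon
  have hD := h.D7
  have hd := h.hyp.deg
  have hv := two_adj hv2 hvw huv.symm hwu
  obtain ⟨y, hyx, huy, hy3, hun⟩ := leaf_str hu hx hx3 huv hv2
  have hxv : x ≠ v := by rintro rfl; omega
  have hyv : y ≠ v := by rintro rfl; omega
  obtain ⟨M0, s0⟩ := h.sub (dv_le G v) huv (by rw [dv_adj]; tauto)
  have f1 : (M0 u ∩ M0 x).card = 1 := s0.sys.one u x (dv_adj.2 ⟨hx, huv.ne, hxv⟩)
  have f2 : (M0 u ∩ M0 y).card = 1 := s0.sys.one u y (dv_adj.2 ⟨huy, huv.ne, hyv⟩)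
  have f3 := Finset.card_union_le (M0 u ∩ M0 x) (M0 u ∩ M0 y)
  have hw1 := dg_pos hvw.symm
  obtain ⟨M1, c, s1, hc, hMv, e1⟩ := pend (G1 := du G u v) s0 hvw.ne' (fun r => by rw [dv_adj]; tauto)
    (du_iff hv hwu) ((M0 u ∩ M0 x) ∪ (M0 u ∩ M0 y)) (by rw [dg_dv G hvw.symm]; omega)
  have hvR : v ∈ RS G {x} := mem_RS.2 (Or.inl hv2)
  have huR : u ∈ RS G {x} := mem_RS.2 (Or.inr (Or.inr ⟨hu, x, by simp, hx.symm⟩))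
  have hxR : x ∈ RS G {x} := mem_RS.2 (Or.inr (Or.inl (by simp)))
  obtain ⟨M2, s2, hsub, -, -⟩ := s1.reset (G1 := du G u v) (R := RS G {x}) le_rfl (by
    intro r hr
    rw [Finset.mem_singleton] at hr
    subst hr
    exact hvR)
  have hle := du_le G u v
  have hd2 : ∀ p, dg (du G u v) p ≤ D := fun p => (dg_mono hle p).trans (hd p)
  have cx : (M2 x).card ≤ D - 2 := by
    rw [s2.card_tight hxR]
    have := dg_mono hle x
    have := hnc.1
    omega
  obtain ⟨η, hη⟩ := exists_col (M2 x ∪ M2 y ∪ M2 w) (by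
    have := card_union3 cx (s2.card_le hd2 y) (s2.card_le hd2 w)
    omega)
  simp only [Finset.mem_union, not_or] at hη
  obtain ⟨⟨η1, η2⟩, η3⟩ := hη
  have hun' : ∀ r, (du G u v).Adj u r → r = x ∨ r = y := by
    intro r hr
    rw [du_adj] at hr
    rcases hun r hr.1 with hh | hh | hh
    · exact Or.inl hh
    · exact Or.inr hh
    · exact absurd ⟨rfl, hh⟩ hr.2.1
  obtain ⟨M3, s3, -⟩ := s2.add huv.ne (du_iff2 huv) η (by
      intro z hz hz'
      exfalso
      have hzc : z = c := by
        have := hsub _ hz'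
        rw [hMv, Finset.mem_singleton] at this
        exact this
      subst hzc
      obtain ⟨r, hr, hzr⟩ := s2.tight u huR z hz
      apply hc
      rw [Finset.mem_union, Finset.mem_inter, Finset.mem_inter, ← e1 u huv.ne, ← e1 x hxv, ← e1 y hyv]
      rcases hun' r hr with rfl | rfl
      · exact Or.inl ⟨hsub _ hz, hsub _ hzr⟩
      · exact Or.inr ⟨hsub _ hz, hsub _ hzr⟩) (by
      intro r hr
      rcases hun' r hr with rfl | rfl
      · exact η1
      · exact η2) (by
      intro r hr
      rw [du_adj] at hr
      rcases (hv r).1 hr.1 with rfl | rfl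
      · exact η3
      · exact absurd ⟨rfl, rfl⟩ hr.2.2) (Or.inl huR) (Or.inl hvR)
  refine h.bad (final_S hd s3 ?_)
  intro p hp hp3
  rw [Finset.mem_singleton] at hp
  subst hp
  have := hnc.2
  exact Or.inr (by omega)

theorem dv_one {H : SimpleGraph V} {v w : V} (hv : ∀ r, H.Adj v r ↔ r = w) (a b : V) :
    H.Adj a b ↔ (dv H v).Adj a b ∨ (a = w ∧ b = v) ∨ (a = v ∧ b = w) := by
  rw [dv_adj]
  constructor
  · intro hab
    by_cases h1 : a = v
    · subst h1
      exact Or.inr (Or.inr ⟨rfl, (hv b).1 hab⟩)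
    · by_cases h2 : b = v
      · subst h2
        exact Or.inr (Or.inl ⟨(hv a).1 hab.symm, rfl⟩)
      · exact Or.inl ⟨hab, h1, h2⟩
  · rintro (hh | ⟨rfl, rfl⟩ | ⟨rfl, rfl⟩)
    · exact hh.1
    · exact ((hv _).2 rfl).symm
    · exact (hv _).2 rfl

theorem MinC.c5 {G : SimpleGraph V} (h : MinC D G) {u x y v w : V} (hu : isLeaf G u) (hx : G.Adj u x)
    (hx3 : 3 ≤ dg G x) (hnx : NC D G x) (hy : G.Adj u y) (hy3 : 3 ≤ dg G y) (hny : NC D G y) (hxy : x ≠ y)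
    (huv : G.Adj u v) (hv2 : dg G v ≤ 2) (hvw : G.Adj v w)
    (hwu : w ≠ u) : False := by
  have hD := h.D7
  have hd := h.hyp.deg
  have hv := two_adj hv2 hvw huv.symm hwu
  obtain ⟨y', hyx, huy, hy3', hun⟩ := leaf_str hu hx hx3 huv hv2
  have hyy : y = y' := by
    rcases hun y hy with hh | hh | hh
    · exact absurd hh.symm hxy
    · exact hh
    · subst hh; omega
  subst hyy
  have hxv : x ≠ v := by rintro rfl; omega
  have hyv : y ≠ v := by rintro rfl; omega
  obtain ⟨M0, s0⟩ := h.sub (dv_le G v) huv (by rw [dv_adj]; tauto)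
  have hw1 := dg_pos hvw.symm
  obtain ⟨M1, c, s1, -, hMv, e1⟩ := pend (G1 := du G u v) s0 hvw.ne' (fun r => by rw [dv_adj]; tauto)
    (du_iff hv hwu) ∅ (by rw [dg_dv G hvw.symm]; have := hd w; simp; omega)
  have hvR : v ∈ RS G {x, y} := mem_RS.2 (Or.inl hv2)
  have huR : u ∈ RS G {x, y} := mem_RS.2 (Or.inr (Or.inr ⟨hu, x, by simp, hx.symm⟩))
  have hxR : x ∈ RS G {x, y} := mem_RS.2 (Or.inr (Or.inl (by simp)))
  have hyR : y ∈ RS G {x, y} := mem_RS.2 (Or.inr (Or.inl (by simp)))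
  have hlx : ∀ r, G.Adj x r → isLeaf G r → r ∈ RS G {x, y} := fun r hr hrl =>
    mem_RS.2 (Or.inr (Or.inr ⟨hrl, x, by simp, hr⟩))
  have hly : ∀ r, G.Adj y r → isLeaf G r → r ∈ RS G {x, y} := fun r hr hrl =>
    mem_RS.2 (Or.inr (Or.inr ⟨hrl, y, by simp, hr⟩))
  obtain ⟨M2, s2, hsub, -, -⟩ := s1.reset (G1 := dv G u) (R := RS G {x, y}) (by
    intro a b hab
    rw [dv_adj] at hab
    rw [du_adj]
    exact ⟨hab.1, fun hh => hab.2.1 hh.1, fun hh => hab.2.2 hh.1⟩) (by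
    intro r hr
    rw [Finset.mem_singleton] at hr
    subst hr
    exact hvR)
  have i2 : ∀ r, ¬ (dv G u).Adj u r := fun r => by rw [dv_adj]; tauto
  have hMu := s2.iso huR i2
  have cv : (M2 v).card ≤ 1 := by
    rw [s2.card_tight hvR, dg_dv G huv.symm]; omega
  have cy : (M2 y).card ≤ D - 2 := by
    rw [s2.card_tight hyR]
    have := dg_mono (dv_le G u) y
    have := hny.1
    omega
  have bx := ubd hd (dv_le G u) s2 two_RS hlx hx.symm (fun hh => i2 x hh.symm) 3 (by omega)
    (by have := hu.1; omega) (fun _ => le_rfl)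
  have hnx2 := hnx.2
  have hny2 := hny.2
  have hnx1 := hnx.1
  have hny1 := hny.1
  obtain ⟨α, hα⟩ := exists_col ((nb (dv G u) x).biUnion M2 ∪ M2 y ∪ M2 v) (by
    have := card_union3 (le_refl ((nb (dv G u) x).biUnion M2).card) cy cv
    omega)
  simp only [Finset.mem_union, Finset.mem_biUnion, mem_nb, not_or, not_exists, not_and] at hα
  obtain ⟨⟨α1, α2⟩, α3⟩ := hα
  let G3 : SimpleGraph V := dl G (fun a b => a = u ∧ (b = v ∨ b = y))
  have g3 : ∀ a b, G3.Adj a b ↔ G.Adj a b ∧ ¬ (a = u ∧ (b = v ∨ b = y)) ∧ ¬ (b = u ∧ (a = v ∨ a = y)) :=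
    fun a b => Iff.rfl
  have h3le : G3 ≤ G := dl_le _ _
  have hu3 : ∀ r, G3.Adj u r → r = x := by
    intro r hr
    rw [g3] at hr
    rcases hun r hr.1 with hh | hh | hh
    · exact hh
    · exact absurd ⟨rfl, Or.inr hh⟩ hr.2.1
    · exact absurd ⟨rfl, Or.inl hh⟩ hr.2.1
  have hG3 : ∀ a b, G3.Adj a b ↔ (dv G u).Adj a b ∨ (a = x ∧ b = u) ∨ (a = u ∧ b = x) := by
    intro a b
    constructor
    · intro hab
      by_cases h1 : a = u
      · subst h1; exact Or.inr (Or.inr ⟨rfl, hu3 b hab⟩)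
      · by_cases h2 : b = u
        · subst h2; exact Or.inr (Or.inl ⟨hu3 a hab.symm, rfl⟩)
        · exact Or.inl (dv_adj.2 ⟨hab.1, h1, h2⟩)
    · rintro (hh | ⟨rfl, rfl⟩ | ⟨rfl, rfl⟩)
      · rw [dv_adj] at hh
        exact (g3 _ _).2 ⟨hh.1, fun q => hh.2.1 q.1, fun q => hh.2.2 q.1⟩
      · refine (g3 _ _).2 ⟨hx.symm, fun q => hx.ne' q.1, ?_⟩
        rintro ⟨-, hh | hh⟩
        · exact hxv hh
        · exact hxy hh
      · refine (g3 _ _).2 ⟨hx, ?_, fun q => hx.ne' q.1⟩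
        rintro ⟨-, hh | hh⟩
        · exact hxv hh
        · exact hxy hh
  obtain ⟨M3, s3, a0, a1, a2⟩ := s2.add (G2 := G3) hx.ne' hG3 α (by rw [hMu]; simp) α1
    (fun r hr => absurd hr (i2 r)) (Or.inl hxR) (Or.inl huR)
  have ny3 : ¬ G3.Adj y u := by
    rw [g3]; intro hh; exact hh.2.2 ⟨rfl, Or.inr rfl⟩
  have by3 := ubd hd h3le s3 two_RS hly hy.symm ny3 3 (by omega)
    (by have := hu.1; omega) (fun _ => le_rfl)
  have cx3 : (M3 x).card ≤ D - 2 := by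
    rw [s3.card_tight hxR]
    have := dg_mono h3le x
    omega
  have ev : M3 v = M2 v := a0 v hxv.symm huv.ne'
  obtain ⟨β, hβ⟩ := exists_col ((nb G3 y).biUnion M3 ∪ M3 x ∪ M3 v) (by
    rw [← ev] at cv
    have := card_union3 (le_refl ((nb G3 y).biUnion M3).card) cx3 cv
    omega)
  simp only [Finset.mem_union, Finset.mem_biUnion, mem_nb, not_or, not_exists, not_and] at hβ
  obtain ⟨⟨β1, β2⟩, β3⟩ := hβ
  have hG4 : ∀ a b, (du G u v).Adj a b ↔ G3.Adj a b ∨ (a = y ∧ b = u) ∨ (a = u ∧ b = y) := by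
    intro a b
    rw [du_adj, g3]
    constructor
    · rintro ⟨hab, q1, q2⟩
      by_cases h1 : a = u ∧ b = y
      · exact Or.inr (Or.inr h1)
      · by_cases h2 : a = y ∧ b = u
        · exact Or.inr (Or.inl h2)
        · refine Or.inl ⟨hab, ?_, ?_⟩
          · rintro ⟨z1, z2 | z2⟩
            · exact q1 ⟨z1, z2⟩
            · exact h1 ⟨z1, z2⟩
          · rintro ⟨z1, z2 | z2⟩
            · exact q2 ⟨z1, z2⟩
            · exact h2 ⟨z2, z1⟩
    · rintro (hh | ⟨rfl, rfl⟩ | ⟨rfl, rfl⟩)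
      · exact ⟨hh.1, fun q => hh.2.1 ⟨q.1, Or.inl q.2⟩, fun q => hh.2.2 ⟨q.1, Or.inl q.2⟩⟩
      · exact ⟨hy.symm, fun q => hy.ne' q.1, fun q => hyv q.2⟩
      · exact ⟨hy, fun q => hyv q.2, fun q => hy.ne' q.1⟩
  have eu : M3 u = {α} := by rw [a2, hMu]; rfl
  have ey : M3 y = M2 y := a0 y hxy.symm hy.ne'
  obtain ⟨M4, s4, b0, b1, b2⟩ := s3.add (G2 := du G u v) hy.ne' hG4 β (by
      rw [eu, ey]
      intro z hz hz'
      rw [Finset.mem_singleton] at hz'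
      subst hz'
      exact absurd hz α2) β1 (by
      intro r hr
      rw [hu3 r hr]; exact β2) (Or.inl hyR) (Or.inl huR)
  have hle := du_le G u v
  have hd2 : ∀ p, dg (du G u v) p ≤ D := fun p => (dg_mono hle p).trans (hd p)
  have cx4 : (M4 x).card ≤ D - 2 := by
    rw [s4.card_tight hxR]
    have := dg_mono hle x
    omega
  obtain ⟨η, hη⟩ := exists_col (M4 x ∪ M4 y ∪ M4 w) (by
    have := card_union3 cx4 (s4.card_le hd2 y) (s4.card_le hd2 w)
    omega)
  simp only [Finset.mem_union, not_or] at hη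
  obtain ⟨⟨η1, η2⟩, η3⟩ := hη
  obtain ⟨M5, s5, -⟩ := s4.add huv.ne (du_iff2 huv) η (by
      rw [b2, eu, b0 v hyv.symm huv.ne']
      intro z hz hz'
      exfalso
      rw [Finset.mem_insert, Finset.mem_singleton] at hz
      rcases hz with rfl | rfl
      · exact β3 hz'
      · rw [ev] at hz'; exact α3 hz') (by
      intro r hr
      rw [du_adj] at hr
      rcases hun r hr.1 with rfl | rfl | rfl
      · exact η1
      · exact η2
      · exact absurd ⟨rfl, rfl⟩ hr.2.1) (by
      intro r hr
      rw [du_adj] at hr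
      rcases (hv r).1 hr.1 with rfl | rfl
      · exact η3
      · exact absurd ⟨rfl, rfl⟩ hr.2.2) (Or.inl huR) (Or.inl hvR)
  refine h.bad (final_S hd s5 ?_)
  intro p hp hp3
  rw [Finset.mem_insert, Finset.mem_singleton] at hp
  rcases hp with rfl | rfl
  · exact Or.inr (by omega)
  · exact Or.inr (by omega)

end

section
variable {V : Type*} [Fintype V] {D : ℕ}

def light (G : SimpleGraph V) (w : V) : Prop := (oN G w = 1 ∧ bN G w ≤ 1) ∨ (oN G w = 0 ∧ bN G w ≤ 3)

theorem light_wt {G : SimpleGraph V} {w : V} (hl : light G w) (hk : kN G w = 0) (hD : 7 ≤ D) (hd : dg G w ≤ D) :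
    wt D G w ≤ 2 * D + dg G w := by
  have h1 := aN_add_tN G w
  have h2 := aN_eq G w
  unfold wt
  rw [hk]
  rcases hl with ⟨a, b⟩ | ⟨a, b⟩ <;> rw [a] <;> omega

theorem MinC.sbc {G : SimpleGraph V} (h : MinC D G) {w v u : V} (hl : light G w) (hk : kN G w = 0)
    (hwv : G.Adj w v) (hv2 : dg G v ≤ 2) (hvu : G.Adj v u) (huw : u ≠ w) (hu1 : aN G u = 1)
    (hut : tN G u ≤ 4) : False := by
  have hD := h.D7
  have hd := h.hyp.deg
  have hv := two_adj hv2 hwv.symm hvu huw.symm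
  have hdw := h.k3t hu1 hut hvu.symm hv2 hwv.symm huw.symm
  have hu3 : u ∈ RS G {w, u} := mem_RS.2 (Or.inr (Or.inl (by simp)))
  have hwR : w ∈ RS G {w, u} := mem_RS.2 (Or.inr (Or.inl (by simp)))
  have hvR : v ∈ RS G {w, u} := mem_RS.2 (Or.inl hv2)
  have hlw : ∀ r, G.Adj w r → isLeaf G r → r ∈ RS G {w, u} := fun r hr hrl =>
    mem_RS.2 (Or.inr (Or.inr ⟨hrl, w, by simp, hr⟩))
  obtain ⟨M0, s0⟩ := h.sub (dv_le G v) hwv (by rw [dv_adj]; tauto)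
  have hle : dv (dk G {u}) v ≤ dv G v := by
    intro a b hab
    rw [dv_adj] at hab ⊢
    exact ⟨dk_le _ _ hab.1, hab.2⟩
  have hleG := hle.trans (dv_le G v)
  obtain ⟨M, s1, -, -, hdis⟩ := s0.reset (R := RS G {w, u}) hle (by simp)
  have iv : ∀ r, ¬ (dv (dk G {u}) v).Adj v r := fun r => by rw [dv_adj]; tauto
  have hMv := s1.iso hvR iv
  have cu : (M u).card ≤ 1 := by
    rw [s1.card_tight hu3, ← hu1]
    refine Finset.card_le_card ?_
    intro r hr
    rw [mem_nb, dv_adj, dk_adj] at hr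
    rw [Finset.mem_filter, mem_nb]
    refine ⟨hr.1.1, ?_⟩
    by_contra hc
    exact hr.1.2.1 ⟨by simp, by omega⟩
  have bw := ubd hd hleG s1 two_RS hlw hwv (fun hh => iv w hh.symm) 2 (by omega) (fun _ => le_rfl) (by omega)
  obtain ⟨x, hx⟩ := exists_col ((nb (dv (dk G {u}) v) w).biUnion M ∪ M u) (by
    have := Finset.card_union_le ((nb (dv (dk G {u}) v) w).biUnion M) (M u)
    have h1 := aN_add_tN G w
    have h2 := aN_eq G w
    unfold wt at bw
    rw [hk] at bw
    rcases hl with ⟨a, b⟩ | ⟨a, b⟩ <;> rw [a] at bw <;> omega)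
  simp only [Finset.mem_union, Finset.mem_biUnion, mem_nb, not_or, not_exists, not_and] at hx
  have hvk : ∀ r, (dk G {u}).Adj v r ↔ r = w := by
    intro r
    rw [dk_adj]
    constructor
    · intro hr
      rcases (hv r).1 hr.1 with rfl | rfl
      · rfl
      · exact absurd ⟨by simp, hv2⟩ hr.2.2
    · rintro rfl
      refine ⟨hwv.symm, fun hh => ?_, fun hh => ?_⟩
      · omega
      · exact huw (Finset.mem_singleton.1 hh.1).symm
  obtain ⟨M1, s2, e0, e1, e2⟩ := s1.add (G2 := dk G {u}) hwv.ne (dv_one hvk) x (by rw [hMv]; simp) hx.1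
    (fun r hr => absurd hr (iv r)) (Or.inl hwR) (Or.inl hvR)
  have eu : M1 u = M u := e0 u huw hvu.ne'
  obtain ⟨M3, s3⟩ := kstar hd two_RS {u} M1 s2 (by
      intro u' hu'
      rw [Finset.mem_singleton] at hu'
      subst hu'
      exact ⟨hu3, by omega, by omega⟩) (by
      intro u' hu' v' huv' hv2'
      rw [Finset.mem_singleton] at hu'
      subst hu'
      refine ⟨by rw [Finset.mem_singleton]; exact huv'.ne', ?_, fun r _ hr => Finset.mem_singleton.1 hr⟩
      rw [eu]
      by_cases hvv : v' = v
      · subst hvv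
        rw [e2, hMv]
        simpa using hx.2
      · have : v' ≠ w := by rintro rfl; omega
        rw [e0 v' this hvv]
        refine hdis u' v' ?_ ?_ hu3
        · rw [dv_adj]
          exact ⟨huv', hvu.ne', hvv⟩
        · rw [dv_adj, dk_adj]
          intro hh
          exact hh.1.2.1 ⟨by simp, hv2'⟩)
  refine h.bad (final_S hd s3 ?_)
  intro p hp hp3
  rw [Finset.mem_insert, Finset.mem_singleton] at hp
  rcases hp with rfl | rfl
  · exact Or.inr (light_wt hl hk hD (hd _))
  · exact Or.inl (soft1 (hd _) hu1.le)

theorem MinC.sd {G : SimpleGraph V} (h : MinC D G) {w v u : V} (hl : light G w) (hk : kN G w = 0)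
    (hwv : G.Adj w v) (hv2 : dg G v ≤ 2) (hvu : G.Adj v u) (huw : u ≠ w) (hu : isLeaf G u) :
    oN G w = 1 ∧ bN G w = 1 ∧ dg G w = D := by
  by_contra hcon
  have hD := h.D7
  have hd := h.hyp.deg
  have hv := two_adj hv2 hwv.symm hvu huw.symm
  have ha := hu.2
  obtain ⟨x1, hx1⟩ := Finset.card_pos.1 (by unfold aN at ha; omega : 0 < ((nb G u).filter (fun r => 3 ≤ dg G r)).card)
  rw [Finset.mem_filter, mem_nb] at hx1
  obtain ⟨y1, hyx, huy, hy3, hun⟩ := leaf_str hu hx1.1 hx1.2 hvu.symm hv2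
  have hxv : x1 ≠ v := by rintro rfl; omega
  have hyv : y1 ≠ v := by rintro rfl; omega
  have hu3 : u ∈ RS G {w, u} := mem_RS.2 (Or.inr (Or.inl (by simp)))
  have hwR : w ∈ RS G {w, u} := mem_RS.2 (Or.inr (Or.inl (by simp)))
  have hvR : v ∈ RS G {w, u} := mem_RS.2 (Or.inl hv2)
  have hlw : ∀ r, G.Adj w r → isLeaf G r → r ∈ RS G {w, u} := fun r hr hrl =>
    mem_RS.2 (Or.inr (Or.inr ⟨hrl, w, by simp, hr⟩))
  obtain ⟨M0, s0⟩ := h.sub (dv_le G v) hwv (by rw [dv_adj]; tauto)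
  have hle := dv_le G v
  obtain ⟨M, s1, -, -, hdis⟩ := s0.reset (G1 := dv G v) (R := RS G {w, u}) le_rfl (by simp)
  have hd1 : ∀ p, dg (dv G v) p ≤ D := fun p => (dg_mono hle p).trans (hd p)
  have iv : ∀ r, ¬ (dv G v).Adj v r := fun r => by rw [dv_adj]; tauto
  have hMv := s1.iso hvR iv
  have cw : (M w).card ≤ D - 1 := by
    rw [s1.card_tight hwR, dg_dv G hwv]
    have := hd w
    omega
  have cu : (M u).card ≤ 2 := by
    rw [s1.card_tight hu3, dg_dv G hvu.symm]
    have := hu.1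
    omega
  obtain ⟨η, hη⟩ := exists_col (M x1 ∪ M y1 ∪ M w) (by
    have := card_union3 (s1.card_le hd1 x1) (s1.card_le hd1 y1) cw
    omega)
  simp only [Finset.mem_union, not_or] at hη
  obtain ⟨⟨η1, η2⟩, η3⟩ := hη
  have bw := ubd hd hle s1 two_RS hlw hwv (fun hh => iv w hh.symm) 2 (by omega) (fun _ => le_rfl) (by omega)
  obtain ⟨x, hx⟩ := exists_col ((nb (dv G v) w).biUnion M ∪ M u ∪ {η}) (by
    have := card_union3 (le_refl ((nb (dv G v) w).biUnion M).card) cu (Finset.card_singleton η).le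
    have h1 := aN_add_tN G w
    have h2 := aN_eq G w
    have h3 := hd w
    unfold wt at bw
    rw [hk] at bw
    rcases hl with ⟨a, b⟩ | ⟨a, b⟩ <;> rw [a] at bw hcon <;> omega)
  simp only [Finset.mem_union, Finset.mem_biUnion, mem_nb, not_or, not_exists, not_and, Finset.mem_singleton] at hx
  obtain ⟨⟨x1', x2⟩, x3⟩ := hx
  obtain ⟨M1, s2, e0, e1, e2⟩ := s1.add (G2 := du G u v) hwv.ne (du_iff hv huw.symm) x (by rw [hMv]; simp) x1'
    (fun r hr => absurd hr (iv r)) (Or.inl hwR) (Or.inl hvR)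
  have eu : M1 u = M u := e0 u huw hvu.ne'
  have ηw : η ∉ M1 w := by
    rw [e1, Finset.mem_insert]
    rintro (hh | hh)
    · exact x3 hh.symm
    · exact η3 hh
  have ηr : ∀ r, r ≠ v → η ∉ M r → η ∉ M1 r := by
    intro r hr hη
    by_cases hrw : r = w
    · subst hrw; exact ηw
    · rw [e0 r hrw hr]; exact hη
  obtain ⟨M2, s3, -⟩ := s2.add hvu.ne' (du_iff2 hvu.symm) η (by
      rw [eu, e2, hMv]
      intro z hz hz'
      have : z = x := by simpa using hz'
      subst this
      exact absurd hz x2) (by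
      intro r hr
      rw [du_adj] at hr
      rcases hun r hr.1 with rfl | rfl | rfl
      · exact ηr _ hxv η1
      · exact ηr _ hyv η2
      · exact absurd ⟨rfl, rfl⟩ hr.2.1) (by
      intro r hr
      rw [du_adj] at hr
      rcases (hv r).1 hr.1 with rfl | rfl
      · exact ηw
      · exact absurd ⟨rfl, rfl⟩ hr.2.2) (Or.inl hu3) (Or.inl hvR)
  refine h.bad (final_S hd s3 ?_)
  intro p hp hp3
  rw [Finset.mem_insert, Finset.mem_singleton] at hp
  rcases hp with rfl | rfl
  · exact Or.inr (light_wt hl hk hD (hd _))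
  · exact Or.inl (soft_leaf (hd _) hu)

theorem MinC.sa {G : SimpleGraph V} (h : MinC D G) {w : V} (hl : light G w) (hw3 : 3 ≤ dg G w)
    (hnk : ¬ isK3 G w) : kN G w = 0 := by
  by_contra hcon
  have hD := h.D7
  have hd := h.hyp.deg
  set Ks := (nb G w).filter (fun r => isK3 G r) with hKs
  have hKm : ∀ r, r ∈ Ks ↔ G.Adj w r ∧ isK3 G r := by
    intro r; rw [hKs, Finset.mem_filter, mem_nb]
  have hk1 : 1 ≤ kN G w := by omega
  obtain ⟨k0, hk0⟩ := Finset.card_pos.1 (show 0 < Ks.card from hk1)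
  obtain ⟨wk, hk0'⟩ := (hKm _).1 hk0
  have hwKs : w ∉ Ks := by rw [hKm]; exact fun hh => hnk hh.2
  set R := RS G {w} ∪ Ks with hR
  have hwR : w ∈ R := Finset.mem_union_left _ (mem_RS.2 (Or.inr (Or.inl (by simp))))
  have h2R : Rtwo G ⊆ R := fun r hr => Finset.mem_union_left _ (two_RS hr)
  have hKR : Ks ⊆ R := Finset.subset_union_right
  have hlw : ∀ r, G.Adj w r → isLeaf G r → r ∈ R := fun r hr hrl =>
    Finset.mem_union_left _ (mem_RS.2 (Or.inr (Or.inr ⟨hrl, w, by simp, hr⟩)))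
  obtain ⟨M0, s0⟩ := h.sub (dv_le G k0) wk (by rw [dv_adj]; tauto)
  have hle : dv (dk G Ks) k0 ≤ dv G k0 := by
    intro a b hab
    rw [dv_adj] at hab ⊢
    exact ⟨dk_le _ _ hab.1, hab.2⟩
  have hleG := hle.trans (dv_le G k0)
  obtain ⟨M, s1, -, -, hdis⟩ := s0.reset (R := R) hle (by simp)
  have ik : ∀ r, ¬ (dv (dk G Ks) k0).Adj k0 r := fun r => by rw [dv_adj]; tauto
  have hMk := s1.iso (hKR hk0) ik
  have hd1 : ∀ p, dg (dv (dk G Ks) k0) p ≤ D := fun p => (dg_mono hleG p).trans (hd p)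
  have hd2 : ∀ p, dg (dk G Ks) p ≤ D := fun p => (dg_mono (dk_le _ _) p).trans (hd p)
  have ckd : ∀ r ∈ Ks, dg (dk G Ks) r ≤ 1 := by
    intro r hr
    rw [← ((hKm r).1 hr).2.2]
    refine Finset.card_le_card ?_
    intro q hq
    rw [mem_nb, dk_adj] at hq
    rw [Finset.mem_filter, mem_nb]
    refine ⟨hq.1, ?_⟩
    by_contra hc
    exact hq.2.1 ⟨hr, by omega⟩
  -- sum bound
  have sb : ∀ (G' : SimpleGraph V) (M' : V → Finset (Fin (3 * D))), G' ≤ dk G Ks → St G' R M' → ∀ z,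
      ∑ r ∈ nb G w, (if r = z then min 1 (M' r).card else (M' r).card) + 0 ≤
        oN G w * D + bN G w * 3 + kN G w * 1 + tN G w * 2 := by
    intro G' M' hG' s z
    have hGG := hG'.trans (dk_le G Ks)
    have hx : ∀ r, (if r = z then min 1 (M' r).card else (M' r).card) ≤ (M' r).card := by
      intro r; split_ifs
      · exact min_le_right _ _
      · exact le_rfl
    refine sum_bd (D := D) G w 1 _ ?_ ?_ ?_ ?_
    · intro r _
      exact (hx r).trans (s.card_le (fun p => (dg_mono hGG p).trans (hd p)) r)
    · intro r _ hr
      refine (hx r).trans ?_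
      rw [s.card_tight (h2R (mem_Rtwo.2 hr))]; exact (dg_mono hGG r).trans hr
    · intro r hr hrl
      refine (hx r).trans ?_
      rw [s.card_tight (hlw r (mem_nb.1 hr) hrl)]; exact (dg_mono hGG r).trans hrl.1.le
    · intro r hr hrk
      refine (hx r).trans ?_
      have hrK : r ∈ Ks := (hKm r).2 ⟨mem_nb.1 hr, hrk⟩
      rw [s.card_tight (hKR hrK)]; exact (dg_mono hG' r).trans (ckd r hrK)
  have hdvk : dv (dk G Ks) k0 ≤ dk G Ks := dv_le _ _
  have bw : ((nb (dv (dk G Ks) k0) w).biUnion M).card + 1 ≤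
      oN G w * D + bN G w * 3 + kN G w * 1 + tN G w * 2 := by
    refine le_trans (bnd_erase (G := G) M 1 (mem_nb.2 wk) ?_) ?_
    · intro r hr
      rw [mem_nb] at hr
      rw [Finset.mem_erase, mem_nb]
      refine ⟨?_, hleG hr⟩
      rintro rfl
      exact ik _ hr.symm
    · refine sum_bd (D := D) G w 1 _ ?_ ?_ ?_ ?_
      · intro r _
        split_ifs
        · omega
        · exact s1.card_le hd1 r
      · intro r _ hr
        split_ifs
        · omega
        · rw [s1.card_tight (h2R (mem_Rtwo.2 hr))]; exact (dg_mono hleG r).trans hr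
      · intro r hr hrl
        split_ifs
        · omega
        · rw [s1.card_tight (hlw r (mem_nb.1 hr) hrl)]; exact (dg_mono hleG r).trans hrl.1.le
      · intro r hr hrk
        split_ifs
        · omega
        · have hrK : r ∈ Ks := (hKm r).2 ⟨mem_nb.1 hr, hrk⟩
          rw [s1.card_tight (hKR hrK)]; exact (dg_mono hdvk r).trans (ckd r hrK)
  set L := (nb G k0).filter (fun r => dg G r ≤ 2) with hL
  have hLc : (L.biUnion M).card ≤ 2 := by
    refine le_trans Finset.card_biUnion_le ?_
    refine le_trans (Finset.sum_le_card_nsmul _ _ 1 ?_) ?_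
    · intro v hv
      rw [hL, Finset.mem_filter, mem_nb] at hv
      rw [s1.card_tight (h2R (mem_Rtwo.2 hv.2))]
      have := dg_mono hle v
      rw [dg_dv G hv.1.symm] at this
      omega
    · have h1 := aN_add_tN G k0
      have h2 := hk0'.1
      have h3 := hk0'.2
      unfold tN at h1
      rw [← hL] at h1
      simp; omega
  have h1 := aN_add_tN G w
  have h2 := aN_eq G w
  have h3 := hd w
  obtain ⟨x, hx⟩ := exists_col ((nb (dv (dk G Ks) k0) w).biUnion M ∪ L.biUnion M) (by
    have := Finset.card_union_le ((nb (dv (dk G Ks) k0) w).biUnion M) (L.biUnion M)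
    rcases hl with ⟨a, b⟩ | ⟨a, b⟩ <;> rw [a] at bw <;> omega)
  simp only [Finset.mem_union, not_or] at hx
  obtain ⟨x1, x2⟩ := hx
  have hone : ∀ r, G.Adj k0 r → 3 ≤ dg G r → r = w := by
    obtain ⟨y', huy', hy3', hy'⟩ := big_one hk0'.2
    intro r h1 h2
    rw [hy' r h1 h2, hy' w wk.symm hw3]
  have hkk : ∀ r, (dk G Ks).Adj k0 r ↔ r = w := by
    intro r
    rw [dk_adj]
    constructor
    · intro hr
      exact hone r hr.1 (by by_contra hc; exact hr.2.1 ⟨hk0, by omega⟩)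
    · rintro rfl
      exact ⟨wk.symm, fun hh => by omega, fun hh => hwKs hh.1⟩
  obtain ⟨M1, s2, e0, e1, e2⟩ := s1.add (G2 := dk G Ks) wk.ne (dv_one hkk) x (by rw [hMk]; simp) (by
      intro r hr hxr
      exact x1 (Finset.mem_biUnion.2 ⟨r, mem_nb.2 hr, hxr⟩))
    (fun r hr => absurd hr (ik r)) (Or.inl hwR) (Or.inl (hKR hk0))
  have nbw : nb (dk G Ks) w = nb G w := by
    ext r
    rw [mem_nb, mem_nb, dk_adj]
    constructor
    · exact fun hh => hh.1
    · exact fun hh => ⟨hh, fun q => hwKs q.1, fun q => by omega⟩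
  have dgw : dg (dk G Ks) w = dg G w := by unfold dg; rw [nbw]
  obtain ⟨M2, s3, f0⟩ := s2.fill hwR (hd2 w) (by
    rw [nbw, dgw]
    have sb1 := sb (dk G Ks) M1 le_rfl s2 w
    have : ∑ r ∈ nb G w, (if r = w then min 1 (M1 r).card else (M1 r).card) = ∑ r ∈ nb G w, (M1 r).card := by
      refine Finset.sum_congr rfl (fun r hr => ?_)
      rw [if_neg (mem_nb.1 hr).ne']
    rw [this] at sb1
    rcases hl with ⟨a, b⟩ | ⟨a, b⟩ <;> rw [a] at sb1 <;> omega)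
  have h2R' : Rtwo G ⊆ R.erase w := by
    intro r hr
    refine Finset.mem_erase.2 ⟨?_, h2R hr⟩
    rintro rfl
    have := mem_Rtwo.1 hr
    omega
  obtain ⟨M3, s4⟩ := kstar hd h2R' Ks M2 s3 (by
      intro u hu
      have hu' := ((hKm u).1 hu).2
      have h1 := hu'.1
      have h2 := hu'.2
      have h3 := aN_add_tN G u
      refine ⟨Finset.mem_erase.2 ⟨?_, hKR hu⟩, by omega, by omega⟩
      rintro rfl; exact hwKs hu) (by
      intro u hu v huv hv2
      have hu' := ((hKm u).1 hu).2
      have hu1 := hu'.1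
      have hu2 := hu'.2
      have hu3 := aN_add_tN G u
      have huw : u ≠ w := by rintro rfl; exact hwKs hu
      have hvw : v ≠ w := by rintro rfl; omega
      have hvk : v ≠ k0 := by rintro rfl; have := hk0'.1; omega
      refine ⟨?_, ?_, ?_⟩
      · intro hh
        have := ((hKm v).1 hh).2.1
        omega
      · rw [f0 u huw, f0 v hvw, e0 v hvw hvk]
        by_cases huk : u = k0
        · subst huk
          rw [e2, hMk]
          have : x ∉ M v := fun hh => x2 (Finset.mem_biUnion.2 ⟨v, Finset.mem_filter.2 ⟨mem_nb.2 huv, hv2⟩, hh⟩)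
          simpa using this
        · rw [e0 u huw huk]
          refine hdis u v (dv_adj.2 ⟨huv, huk, hvk⟩) ?_ (hKR hu)
          rw [dv_adj, dk_adj]
          intro hh
          exact hh.1.2.1 ⟨hu, hv2⟩
      · intro r hr hrK
        by_contra hru
        have := h.k3t hu2 (by omega) huv hv2 hr hru
        have := ((hKm r).1 hrK).2.1
        omega)
  refine h.bad (final_fill hd s4 h2R' ?_)
  intro p hp hp3
  obtain ⟨hpw, hp⟩ := Finset.mem_erase.1 hp
  rcases Finset.mem_union.1 hp with hp | hp
  · rcases mem_RS.1 hp with hh | hh | hh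
    · omega
    · exact absurd (Finset.mem_singleton.1 hh) hpw
    · exact soft_leaf (hd p) hh.1
  · exact soft1 (hd p) ((hKm p).1 hp).2.2.le

end

section
variable {V : Type*} [Fintype V] {D : ℕ}

noncomputable def PN (D : ℕ) (G : SimpleGraph V) (u : V) : ℕ :=
  ((nb G u).filter (fun r => 3 ≤ dg G r ∧ ¬ NC D G r)).card

def isK (G : SimpleGraph V) (u : V) : Prop := aN G u = 1 ∧ tN G u ≤ 3

noncomputable def eT (D : ℕ) (G : SimpleGraph V) (p u : V) : ℤ :=
  if dg G p ≤ 2 then 0 else if dg G u ≤ 2 then 6 else if isK G p then 2 else if isK G u then 4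
  else if isLeaf G p then 2 * PN D G p else if isLeaf G u then 6 - 2 * PN D G u else 3

noncomputable def gT (D : ℕ) (G : SimpleGraph V) (p q : V) : ℤ :=
  if dg G p ≤ 2 then 0 else if dg G q ≤ 2 then ∑ u ∈ (nb G q).erase p, eT D G p u
  else if isK3 G q then 4 else if isLeaf G q ∧ ¬ NC D G p then 2 else 0

noncomputable def FT (D : ℕ) (G : SimpleGraph V) (p : V) : ℤ :=
  6 * dg G p - 18 - ∑ q ∈ nb G p, (gT D G p q - gT D G q p)

theorem gT_two {G : SimpleGraph V} {v p u : V} (hv2 : dg G v ≤ 2) (hp : G.Adj v p) (hu : G.Adj v u)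
    (hpu : p ≠ u) : gT D G p v = eT D G p u := by
  have hv := two_adj hv2 hp hu hpu
  have : (nb G v).erase p = {u} := by
    ext r
    rw [Finset.mem_erase, mem_nb, hv, Finset.mem_singleton]
    constructor
    · rintro ⟨a, b | b⟩
      · exact absurd b a
      · exact b
    · rintro rfl; exact ⟨hpu.symm, Or.inr rfl⟩
  unfold gT
  rw [this, Finset.sum_singleton, if_pos hv2]
  split_ifs with h1
  · unfold eT; rw [if_pos h1]
  · rfl

theorem gT_from_two {G : SimpleGraph V} {v p : V} (hv2 : dg G v ≤ 2) : gT D G v p = 0 := by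
  unfold gT; rw [if_pos hv2]

/-- parameters of a two-vertex adjacent to a two-vertex -/
theorem MinC.two_two {G : SimpleGraph V} (h : MinC D G) {u v : V} (hu2 : dg G u ≤ 2) (huv : G.Adj u v)
    (hv2 : dg G v ≤ 2) : aN G u = 1 ∧ tN G u ≤ 1 := by
  have h1 := h.a0 huv
  have h2 := aN_add_tN G u
  have h3 : 1 ≤ tN G u := Finset.card_pos.2 ⟨v, Finset.mem_filter.2 ⟨mem_nb.2 huv, hv2⟩⟩
  omega

theorem MinC.e_sum {G : SimpleGraph V} (h : MinC D G) {v p u : V} (hv2 : dg G v ≤ 2) (hp : G.Adj v p)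
    (hu : G.Adj v u) (hpu : p ≠ u) : eT D G p u + eT D G u p = 6 := by
  have hD := h.D7
  have hK : ∀ p u, G.Adj v p → G.Adj v u → p ≠ u → isK G p → isK G u → False := by
    intro p u hp hu hpu k1 k2
    have := h.k3t k1.1 (by have := k1.2; omega) hp.symm hv2 hu hpu.symm
    have := aN_add_tN G u
    have := k2.1
    have := k2.2
    omega
  unfold eT
  by_cases p2 : dg G p ≤ 2
  · have : ¬ dg G u ≤ 2 := by
      have := h.bigend hv2 hp hu hpu p2
      omega
    simp [p2, this]
  by_cases u2 : dg G u ≤ 2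
  · simp [p2, u2]
  by_cases kp : isK G p
  · have ku : ¬ isK G u := hK p u hp hu hpu kp
    simp [p2, u2, kp, ku]
  by_cases ku : isK G u
  · simp [p2, u2, kp, ku]
  by_cases lp : isLeaf G p
  · have lu : ¬ isLeaf G u := by
      intro lu
      refine h.sm hv2 hp hu hpu (by omega) (by omega) lp.2.le ?_ lu.2.le ?_
      · rw [leaf_t lp]; omega
      · rw [leaf_t lu]; omega
    simp [p2, u2, kp, ku, lp, lu]
  by_cases lu : isLeaf G u
  · simp [p2, u2, kp, ku, lp, lu]
  simp [p2, u2, kp, ku, lp, lu]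

theorem MinC.F_two {G : SimpleGraph V} (h : MinC D G) {v q : V} (a : G.Adj v q) (hv2 : dg G v ≤ 2) :
    FT D G v = 0 := by
  obtain ⟨w, hw, hwq⟩ := h.other a
  have hv := two_adj hv2 a hw hwq.symm
  have hnb : nb G v = {q, w} := by
    ext r
    rw [mem_nb, hv]; simp
  have hdg : dg G v = 2 := by
    have := h.r0 a
    omega
  unfold FT
  rw [hnb, Finset.sum_pair hwq.symm, gT_from_two hv2, gT_from_two hv2, gT_two hv2 a hw hwq.symm,
    gT_two hv2 hw a hwq, hdg]
  have := h.e_sum hv2 a hw hwq.symm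
  push_cast
  linarith

theorem sumZ (G : SimpleGraph V) (w : V) (f : V → ℤ) (x2 x3 xk xo : ℤ)
    (h2 : ∀ r, G.Adj w r → dg G r ≤ 2 → f r ≤ x2) (h3 : ∀ r, G.Adj w r → isLeaf G r → f r ≤ x3)
    (hk : ∀ r, G.Adj w r → isK3 G r → f r ≤ xk)
    (ho : ∀ r, G.Adj w r → 3 ≤ dg G r → ¬ isLeaf G r → ¬ isK3 G r → f r ≤ xo) :
    ∑ r ∈ nb G w, f r ≤ oN G w * xo + bN G w * x3 + kN G w * xk + tN G w * x2 := by
  have key : ∀ r ∈ nb G w, f r ≤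
      (if 3 ≤ dg G r ∧ ¬ isLeaf G r ∧ ¬ isK3 G r then xo else 0) + (if isLeaf G r then x3 else 0)
      + (if isK3 G r then xk else 0) + (if dg G r ≤ 2 then x2 else 0) := by
    intro r hr
    rw [mem_nb] at hr
    by_cases c1 : dg G r ≤ 2
    · have c2 : ¬ isLeaf G r := fun h => by have := h.1; omega
      have c3 : ¬ isK3 G r := fun h => by have := h.1; omega
      have c4 : ¬ 3 ≤ dg G r := by omega
      simpa [c1, c2, c3, c4] using h2 r hr c1
    · have c4 : 3 ≤ dg G r := by omega
      by_cases c2 : isLeaf G r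
      · have c3 : ¬ isK3 G r := fun h => by have := h.2; have := c2.2; omega
        simpa [c1, c2, c3, c4] using h3 r hr c2
      · by_cases c3 : isK3 G r
        · simpa [c1, c2, c3, c4] using hk r hr c3
        · simpa [c1, c2, c3, c4] using ho r hr c4 c2 c3
  refine (Finset.sum_le_sum key).trans (le_of_eq ?_)
  simp only [Finset.sum_add_distrib, ← Finset.sum_filter, Finset.sum_const, nsmul_eq_mul]
  rfl

/-- transfers between big vertices -/
theorem gT_big {G : SimpleGraph V} {p q : V} (hp : 3 ≤ dg G p) (hq : 3 ≤ dg G q) :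
    gT D G p q = if isK3 G q then 4 else if isLeaf G q ∧ ¬ NC D G p then 2 else 0 := by
  unfold gT
  rw [if_neg (by omega), if_neg (by omega)]

theorem MinC.k3nb {G : SimpleGraph V} (h : MinC D G) {p q : V} (hp : 3 ≤ dg G p) (a : G.Adj p q)
    (hq : isK3 G q) : D ≤ dg G p + 1 := by
  have h1 := aN_add_tN G q
  have h2 := hq.1
  have h3 := hq.2
  have := h.k3y hq.2 (by omega) a.symm hp
  omega

theorem MinC.F_K {G : SimpleGraph V} (h : MinC D G) {w : V} (hw : 3 ≤ dg G w) (hk : isK G w) :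
    0 ≤ FT D G w := by
  have hD := h.D7
  have h1 := aN_add_tN G w
  have k1 := hk.1
  have k2 := hk.2
  have hbig : ∀ r, G.Adj w r → 3 ≤ dg G r → 5 ≤ dg G r := by
    intro r hr hr3
    have := h.k3y k1 (by omega) hr hr3
    omega
  have hnl : ¬ isLeaf G w := fun hl => by have := hl.2; omega
  set c : ℤ := if isK3 G w then -4 else 0 with hc
  have hb : ∀ r, G.Adj w r → 3 ≤ dg G r → gT D G w r - gT D G r w ≤ c := by
    intro r hr hr3
    have h5 := hbig r hr hr3
    rw [gT_big hw hr3, gT_big hr3 hw]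
    have n1 : ¬ isK3 G r := fun q => by have := q.1; omega
    have n2 : ¬ isLeaf G r := fun q => by have := q.1; omega
    by_cases hk3 : isK3 G w <;> simp [hc, n1, n2, hk3, hnl]
  have hs := sumZ G w (fun r => gT D G w r - gT D G r w) 2 c c c (by
      intro v hv hv2
      rw [gT_from_two hv2]
      obtain ⟨u, hu, huw⟩ := h.other hv.symm
      rw [gT_two hv2 hv.symm hu huw.symm]
      have hu2 : ¬ dg G u ≤ 2 := by
        intro hu2
        obtain ⟨z1, z2⟩ := h.two_two hu2 hu.symm hv2
        have := h.k3t z1 (by omega) hu.symm hv2 hv.symm huw.symm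
        omega
      unfold eT
      rw [if_neg (by omega), if_neg hu2, if_pos hk]
      norm_num) (fun r hr hl => hb r hr hl.1.ge) (fun r hr hl => hb r hr hl.1.ge) (fun r hr h3 _ _ => hb r hr h3)
  have h2 := aN_eq G w
  have h4 : (oN G w : ℤ) * c + bN G w * c + kN G w * c = c := by
    have : (oN G w : ℤ) + bN G w + kN G w = 1 := by exact_mod_cast (by omega : oN G w + bN G w + kN G w = 1)
    linear_combination c * this
  unfold FT
  have hk3 : isK3 G w ↔ dg G w = 3 := ⟨fun q => q.1, fun q => ⟨q, k1⟩⟩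
  by_cases h3 : dg G w = 3
  · have : c = -4 := by rw [hc, if_pos (hk3.2 h3)]
    omega
  · have : c = 0 := by rw [hc, if_neg (fun q => h3 (hk3.1 q))]
    omega

theorem b_pos {G : SimpleGraph V} {w r : V} (a : G.Adj w r) (hl : isLeaf G r) : 1 ≤ bN G w :=
  Finset.card_pos.2 ⟨r, Finset.mem_filter.2 ⟨mem_nb.2 a, hl⟩⟩

theorem MinC.nc3 {G : SimpleGraph V} (h : MinC D G) {w r : V} (hw : dg G w = 3) (a : G.Adj w r)
    (hl : isLeaf G r) : NC D G w := by
  have hD := h.D7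
  have h1 := b_pos a hl
  have h2 := aN_add_tN G w
  have h3 := aN_eq G w
  refine ⟨by omega, ?_⟩
  unfold wt
  have : oN G w + kN G w = 0 ∨ oN G w + kN G w = 1 ∨ oN G w + kN G w = 2 := by omega
  rcases this with hh | hh | hh <;> rw [hh] <;> omega

theorem MinC.F_leaf {G : SimpleGraph V} (h : MinC D G) {w : V} (hl : isLeaf G w) :
    0 ≤ FT D G w := by
  have hD := h.D7
  have hw := hl.1
  have hnk3 : ¬ isK3 G w := fun q => by have := q.2; have := hl.2; omega
  have hnk : ¬ isK G w := fun q => by have := q.1; have := hl.2; omega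
  have key : ∀ r ∈ nb G w, gT D G w r - gT D G r w ≤ (if dg G r ≤ 2 then 2 * (PN D G w : ℤ) else 0) +
      (if 3 ≤ dg G r ∧ ¬ NC D G r then -2 else 0) := by
    intro r hr
    rw [mem_nb] at hr
    by_cases hr2 : dg G r ≤ 2
    · rw [gT_from_two hr2, if_pos hr2, if_neg (by omega)]
      obtain ⟨u, hu, huw⟩ := h.other hr.symm
      rw [gT_two hr2 hr.symm hu huw.symm]
      have hu2 : ¬ dg G u ≤ 2 := by
        intro hu2
        obtain ⟨z1, z2⟩ := h.two_two hu2 hu.symm hr2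
        have := h.k3t z1 (by omega) hu.symm hr2 hr.symm huw.symm
        omega
      have huk : ¬ isK G u := by
        intro q
        have := h.k3t q.1 (by have := q.2; omega) hu.symm hr2 hr.symm huw.symm
        omega
      unfold eT
      rw [if_neg (by omega), if_neg hu2, if_neg hnk, if_neg huk, if_pos hl]
      simp
    · rw [gT_big (by omega) (by omega), gT_big (by omega) (by omega), if_neg hr2]
      have n1 : ¬ isK3 G r := fun q => by have := h.k3nb (by omega) hr q; omega
      have n2 : ¬ (isLeaf G r ∧ ¬ NC D G w) := fun q => q.2 (h.nc3 hw hr q.1)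
      rw [if_neg n1, if_neg n2, if_neg hnk3]
      have n3 : 3 ≤ dg G r := by omega
      by_cases hn : NC D G r <;> simp [hn, hl, n3]
  have hs := Finset.sum_le_sum key
  simp only [Finset.sum_add_distrib, ← Finset.sum_filter, Finset.sum_const, nsmul_eq_mul] at hs
  have ht := leaf_t hl
  change _ ≤ (tN G w : ℤ) * _ + (PN D G w : ℤ) * _ at hs
  rw [ht] at hs
  unfold FT
  rw [hw]
  push_cast at hs ⊢
  simp only [Finset.sum_sub_distrib] at hs ⊢
  linarith

theorem MinC.F_three {G : SimpleGraph V} (h : MinC D G) {w : V} (hw : dg G w = 3) (ha : aN G w = 3) :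
    0 ≤ FT D G w := by
  have hD := h.D7
  have h1 := aN_add_tN G w
  have hnk3 : ¬ isK3 G w := fun q => by have := q.2; omega
  have hnl : ¬ isLeaf G w := fun q => by have := q.2; omega
  have hb : ∀ r, G.Adj w r → 3 ≤ dg G r → gT D G w r - gT D G r w ≤ 0 := by
    intro r hr hr3
    rw [gT_big (by omega) hr3, gT_big hr3 (by omega)]
    have n1 : ¬ isK3 G r := fun q => by have := h.k3nb (by omega) hr q; omega
    have n2 : ¬ (isLeaf G r ∧ ¬ NC D G w) := fun q => q.2 (h.nc3 hw hr q.1)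
    rw [if_neg n1, if_neg n2, if_neg hnk3, if_neg (fun q => hnl q.1)]
    norm_num
  have hs := sumZ G w (fun r => gT D G w r - gT D G r w) 0 0 0 0 (by
    intro r hr hr2
    have : 1 ≤ tN G w := Finset.card_pos.2 ⟨r, Finset.mem_filter.2 ⟨mem_nb.2 hr, hr2⟩⟩
    omega) (fun r hr hl => hb r hr hl.1.ge) (fun r hr hl => hb r hr hl.1.ge) (fun r hr h3 _ _ => hb r hr h3)
  unfold FT
  rw [hw]
  push_cast
  simp only [mul_zero, add_zero] at hs
  linarith

/-- leaves send at least one unit back -/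
theorem MinC.P_one {G : SimpleGraph V} (h : MinC D G) {u v : V} (hl : isLeaf G u) (huv : G.Adj u v)
    (hv2 : dg G v ≤ 2) : 1 ≤ PN D G u := by
  have ha := hl.2
  obtain ⟨x1, hx1⟩ := Finset.card_pos.1 (by unfold aN at ha; omega : 0 < ((nb G u).filter (fun r => 3 ≤ dg G r)).card)
  rw [Finset.mem_filter, mem_nb] at hx1
  obtain ⟨y1, hyx, huy, hy3, hun⟩ := leaf_str hl hx1.1 hx1.2 huv hv2
  obtain ⟨w, hw, hwu⟩ := h.other huv.symm
  by_contra hcon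
  have h0 : PN D G u = 0 := by omega
  unfold PN at h0
  rw [Finset.card_eq_zero, Finset.filter_eq_empty_iff] at h0
  have n1 : NC D G x1 := by
    by_contra hh
    exact h0 (mem_nb.2 hx1.1) ⟨hx1.2, hh⟩
  have n2 : NC D G y1 := by
    by_contra hh
    exact h0 (mem_nb.2 huy) ⟨hy3, hh⟩
  exact h.c5 hl hx1.1 hx1.2 n1 huy hy3 n2 hyx.symm huv hv2 hw hwu

theorem MinC.P_two {G : SimpleGraph V} (h : MinC D G) {u v w : V} (hl : isLeaf G u) (huv : G.Adj u v)
    (hv2 : dg G v ≤ 2) (hw : G.Adj v w) (hwu : w ≠ u) (hd : dg G w + 2 ≤ D) : 2 ≤ PN D G u := by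
  have ha := hl.2
  rw [← ha]
  refine Finset.card_le_card ?_
  intro r hr
  rw [Finset.mem_filter] at hr ⊢
  refine ⟨hr.1, hr.2, fun hn => ?_⟩
  have := h.l1 hl (mem_nb.1 hr.1) hr.2 hn huv hv2 hw hwu
  omega

/-- value of a thread for a rich vertex -/
theorem MinC.slot {G : SimpleGraph V} (h : MinC D G) {w v u : V} (hw : 4 ≤ dg G w) (hnk : ¬ isK G w)
    (hwv : G.Adj w v) (hv2 : dg G v ≤ 2) (hu : G.Adj v u) (huw : u ≠ w) :
    gT D G w v = (if dg G u ≤ 2 then (6:ℤ) else if isK G u then 4 else if isLeaf G u then 6 - 2 * (PN D G u : ℤ) else 3) := by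
  rw [gT_two hv2 hwv.symm hu huw.symm]
  unfold eT
  have hnl : ¬ isLeaf G w := fun q => by have := q.1; omega
  rw [if_neg (by omega : ¬ dg G w ≤ 2), if_neg hnk, if_neg hnl]

theorem MinC.rich_sum {G : SimpleGraph V} (h : MinC D G) {w : V} (hw : 4 ≤ dg G w) (x2 c : ℤ) (v0 : V)
    (hc : 0 ≤ c) (x3 : ℤ) (hx : (¬ NC D G w → 2 ≤ x3) ∧ 0 ≤ x3)
    (h2 : ∀ v, G.Adj w v → dg G v ≤ 2 → gT D G w v ≤ x2 + if v = v0 then c else 0) :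
    6 * dg G w - 18 - (bN G w * x3 + kN G w * 4 + tN G w * x2) - c ≤ FT D G w := by
  have hnl : ¬ isLeaf G w := fun q => by have := q.1; omega
  have hnk3 : ¬ isK3 G w := fun q => by have := q.1; omega
  have z : ∀ r, G.Adj w r → 3 ≤ dg G r → gT D G r w = 0 := by
    intro r hr hr3
    rw [gT_big hr3 (by omega), if_neg hnk3, if_neg (fun q => hnl q.1)]
  have i0 : ∀ r, 0 ≤ (if r = v0 then c else (0 : ℤ)) := by
    intro r; split_ifs
    · exact hc
    · exact le_rfl
  have hs := sumZ G w (fun r => gT D G w r - gT D G r w - if r = v0 then c else 0) x2 x3 4 0 (by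
      intro r hr hr2
      have := h2 r hr hr2
      simp only [gT_from_two hr2]
      linarith) (by
      intro r hr hl
      have := i0 r
      have n1 : ¬ isK3 G r := fun q => by have := q.2; have := hl.2; omega
      have hl3 := hl.1
      simp only [z r hr hl.1.ge]
      rw [gT_big (by omega) hl.1.ge, if_neg n1]
      by_cases q : isLeaf G r ∧ ¬ NC D G w
      · rw [if_pos q]; have := hx.1 q.2; linarith
      · rw [if_neg q]; have := hx.2; linarith) (by
      intro r hr hk
      have := i0 r
      simp only [z r hr hk.1.ge]
      rw [gT_big (by omega) hk.1.ge, if_pos hk]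
      linarith) (by
      intro r hr hr3 hl hk
      have := i0 r
      simp only [z r hr hr3]
      rw [gT_big (by omega) hr3, if_neg hk, if_neg (fun q => hl q.1)]
      linarith)
  rw [Finset.sum_sub_distrib] at hs
  have hi : ∑ r ∈ nb G w, (if r = v0 then c else 0) ≤ c := by
    rw [Finset.sum_ite_eq']
    split_ifs
    · exact le_rfl
    · exact hc
  unfold FT
  linarith

end

section
variable {V : Type*} [Fintype V] {D : ℕ}

theorem MinC.slot_two {G : SimpleGraph V} (h : MinC D G) {w v u : V}
    (hwv : G.Adj w v) (hv2 : dg G v ≤ 2) (hu : G.Adj v u) (huw : u ≠ w) (hu2 : dg G u ≤ 2) :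
    dg G w = D := by
  have := h.two_two hu2 hu.symm hv2
  exact h.k3t this.1 (by omega) hu.symm hv2 hwv.symm huw.symm

theorem MinC.rich_low {G : SimpleGraph V} (h : MinC D G) {w : V} (hw : 4 ≤ dg G w) (hnk : ¬ isK G w)
    (hd : dg G w + 2 ≤ D) :
    0 ≤ FT D G w ∧ (FT D G w = 0 → (aN G w = 1 ∧ tN G w ≤ 4) ∨ (aN G w = 2 ∧ tN G w = 2)) := by
  have hD := h.D7
  have hk : kN G w = 0 := by
    by_contra hne
    obtain ⟨r, hr⟩ := Finset.card_pos.1 (Nat.pos_of_ne_zero hne)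
    rw [Finset.mem_filter, mem_nb] at hr
    have := h.k3nb (by omega) hr.1 hr.2
    omega
  have hslot : ∀ v, G.Adj w v → dg G v ≤ 2 → gT D G w v ≤ 3 + if v = w then 0 else 0 := by
    intro v hwv hv2
    obtain ⟨u, hu, huw⟩ := h.other hwv.symm
    rw [h.slot hw hnk hwv hv2 hu huw]
    have e1 : ¬ dg G u ≤ 2 := fun q => by
      have := h.slot_two hwv hv2 hu huw q
      omega
    have e2 : ¬ isK G u := fun q => by
      have := h.k3t q.1 (by have := q.2; omega) hu.symm hv2 hwv.symm huw.symm
      omega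
    rw [if_neg e1, if_neg e2]
    simp only [ite_self, add_zero]
    split_ifs with e3
    · have := h.P_two e3 hu.symm hv2 hwv.symm huw.symm hd
      omega
    · exact le_rfl
  have hs := h.rich_sum hw 3 0 w le_rfl (if NC D G w then 0 else 2)
    ⟨fun q => by rw [if_neg q], by split_ifs <;> norm_num⟩ hslot
  have e1 := aN_add_tN G w
  have e2 := aN_eq G w
  obtain ⟨q, hwq⟩ := Finset.card_pos.1 (by unfold dg at hw; omega : 0 < (nb G w).card)
  have e3 := h.a0 (mem_nb.1 hwq)
  have hb1 : oN G w = 0 → bN G w = 1 → 5 ≤ tN G w := by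
    intro a b
    by_contra hh
    obtain ⟨r, hr⟩ := Finset.card_pos.1 (by unfold bN at b; omega : 0 < ((nb G w).filter (fun r => isLeaf G r)).card)
    rw [Finset.mem_filter, mem_nb] at hr
    have h3 := hr.2.1
    have := h.k3y (by omega) (by omega) hr.1 h3.ge
    omega
  have hk1 : aN G w = 1 → 4 ≤ tN G w := by
    intro a
    by_contra hh
    exact hnk ⟨a, by omega⟩
  by_cases hN : NC D G w
  · rw [if_pos hN] at hs
    simp only [mul_zero, zero_add, hk] at hs
    push_cast at hs
    refine ⟨by omega, by omega⟩
  · rw [if_neg hN] at hs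
    have hN' : 2 * D + 3 < wt D G w := by
      by_contra hh
      exact hN ⟨hd, by omega⟩
    unfold wt at hN'
    rw [hk] at hs e2 hN'
    push_cast at hs
    rcases Nat.lt_or_ge (oN G w) 3 with ho | ho
    · interval_cases ho' : oN G w
      · refine ⟨by omega, by omega⟩
      · refine ⟨by omega, by omega⟩
      · refine ⟨by omega, by omega⟩
    · refine ⟨by omega, by omega⟩

theorem MinC.rich_high {G : SimpleGraph V} (h : MinC D G) {w : V} (hw : 4 ≤ dg G w) (hnk : ¬ isK G w)
    (hd : D ≤ dg G w + 1) : 0 < FT D G w := by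
  have hD := h.D7
  have hdD := h.hyp.deg w
  have e1 := aN_add_tN G w
  have e2 := aN_eq G w
  obtain ⟨q, hwq⟩ := Finset.card_pos.1 (by unfold dg at hw; omega : 0 < (nb G w).card)
  have e3 := h.a0 (mem_nb.1 hwq)
  have hx : (¬ NC D G w → (2:ℤ) ≤ 2) ∧ (0:ℤ) ≤ 2 := ⟨fun _ => le_rfl, by norm_num⟩
  by_cases hl : light G w
  · have hk := h.sa hl (by omega) (fun q => by have := q.1; omega)
    by_cases hex : oN G w = 1 ∧ bN G w = 1 ∧ dg G w = D
    · have hslot : ∀ v, G.Adj w v → dg G v ≤ 2 → gT D G w v ≤ 4 + if v = w then 0 else 0 := by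
        intro v hwv hv2
        obtain ⟨u, hu, huw⟩ := h.other hwv.symm
        rw [h.slot hw hnk hwv hv2 hu huw]
        have e1 : ¬ dg G u ≤ 2 := fun q => by
          have := h.two_two q hu.symm hv2
          exact h.sbc hl hk hwv hv2 hu huw this.1 (by omega)
        rw [if_neg e1]
        simp only [ite_self, add_zero]
        split_ifs with e2 e3
        · exact le_rfl
        · have := h.P_one e3 hu.symm hv2
          omega
        · norm_num
      have hs := h.rich_sum hw 4 0 w le_rfl 2 hx hslot
      rw [hk] at hs
      obtain ⟨a, b, c⟩ := hex
      rw [a, b, hk] at e2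
      rw [b] at hs
      push_cast at hs
      omega
    · have hslot : ∀ v, G.Adj w v → dg G v ≤ 2 → gT D G w v ≤ 3 + if v = w then 0 else 0 := by
        intro v hwv hv2
        obtain ⟨u, hu, huw⟩ := h.other hwv.symm
        rw [h.slot hw hnk hwv hv2 hu huw]
        have e1 : ¬ dg G u ≤ 2 := fun q => by
          have := h.two_two q hu.symm hv2
          exact h.sbc hl hk hwv hv2 hu huw this.1 (by omega)
        have e2 : ¬ isK G u := fun q =>
          h.sbc hl hk hwv hv2 hu huw q.1 (by have := q.2; omega)
        have e3 : ¬ isLeaf G u := fun q => hex (h.sd hl hk hwv hv2 hu huw q)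
        rw [if_neg e1, if_neg e2, if_neg e3]
        simp
      have hs := h.rich_sum hw 3 0 w le_rfl 2 hx hslot
      rw [hk] at hs e2
      push_cast at hs
      have hk1 : aN G w = 1 → 4 ≤ tN G w := by
        intro a
        by_contra hh
        exact hnk ⟨a, by omega⟩
      omega
  · -- non light
    have hcap : ∀ v, G.Adj w v → dg G v ≤ 2 → ∀ u, G.Adj v u → u ≠ w → 3 ≤ dg G u → gT D G w v ≤ 4 := by
      intro v hwv hv2 u hu huw hu3
      rw [h.slot hw hnk hwv hv2 hu huw]
      rw [if_neg (by omega)]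
      split_ifs with e2 e3
      · exact le_rfl
      · have := h.P_one e3 hu.symm hv2
        omega
      · norm_num
    have hnl : ¬ ((oN G w = 1 ∧ bN G w ≤ 1) ∨ (oN G w = 0 ∧ bN G w ≤ 3)) := hl
    by_cases hp : ∃ v u, G.Adj w v ∧ dg G v ≤ 2 ∧ G.Adj v u ∧ u ≠ w ∧ dg G u ≤ 2
    · obtain ⟨v0, u0, a1, a2, a3, a4, a5⟩ := hp
      have hdw := h.slot_two a1 a2 a3 a4 a5
      have hslot : ∀ v, G.Adj w v → dg G v ≤ 2 → gT D G w v ≤ 4 + if v = v0 then 2 else 0 := by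
        intro v hwv hv2
        obtain ⟨u, hu, huw⟩ := h.other hwv.symm
        by_cases hu2 : dg G u ≤ 2
        · have : v = v0 := by
            by_contra hne
            exact h.p2 hne hwv a1 hv2 a2 hu a3 huw a4 hu2 a5
          rw [if_pos this, h.slot hw hnk hwv hv2 hu huw, if_pos hu2]
          norm_num
        · have := hcap v hwv hv2 u hu huw (by omega)
          split_ifs <;> linarith
      have hs := h.rich_sum hw 4 2 v0 (by norm_num) 2 hx hslot
      omega
    · have hslot : ∀ v, G.Adj w v → dg G v ≤ 2 → gT D G w v ≤ 4 + if v = w then 0 else 0 := by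
        intro v hwv hv2
        obtain ⟨u, hu, huw⟩ := h.other hwv.symm
        have := hcap v hwv hv2 u hu huw (by
          by_contra hh
          exact hp ⟨v, u, hwv, hv2, hu, huw, by omega⟩)
        simpa using this
      have hs := h.rich_sum hw 4 0 w le_rfl 2 hx hslot
      omega

theorem MinC.F_cls {G : SimpleGraph V} (h : MinC D G) {w : V} (hw : 3 ≤ dg G w) :
    0 ≤ FT D G w ∧
    (FT D G w = 0 → dg G w = 3 ∨ (aN G w = 1 ∧ tN G w ≤ 4) ∨ (aN G w = 2 ∧ tN G w = 2)) := by
  have e1 := aN_add_tN G w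
  obtain ⟨q, hwq⟩ := Finset.card_pos.1 (by unfold dg at hw; omega : 0 < (nb G w).card)
  have e3 := h.a0 (mem_nb.1 hwq)
  by_cases hk : isK G w
  · have := hk.1
    have := hk.2
    exact ⟨h.F_K hw hk, fun _ => by omega⟩
  by_cases h3 : dg G w = 3
  · refine ⟨?_, fun _ => Or.inl h3⟩
    have : aN G w = 1 ∨ aN G w = 2 ∨ aN G w = 3 := by omega
    rcases this with a | a | a
    · exact absurd ⟨a, by omega⟩ hk
    · exact h.F_leaf ⟨h3, a⟩
    · exact h.F_three h3 a
  · by_cases hd : dg G w + 2 ≤ D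
    · have := h.rich_low (by omega) hk hd
      exact ⟨this.1, fun z => Or.inr (this.2 z)⟩
    · have := h.rich_high (by omega) hk (by omega)
      exact ⟨this.le, fun z => by omega⟩

theorem MinC.F_nonneg {G : SimpleGraph V} (h : MinC D G) {w q : V} (a : G.Adj w q) : 0 ≤ FT D G w := by
  by_cases h2 : dg G w ≤ 2
  · exact (h.F_two a h2).ge
  · exact (h.F_cls (by omega)).1

theorem FT_sum {G : SimpleGraph V} (h : Hyp D G) :
    ∑ p ∈ Finset.univ.filter (fun p => 1 ≤ dg G p), FT D G p ≤ 0 := by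
  set S := Finset.univ.filter (fun p => 1 ≤ dg G p) with hS
  have hsub : ∀ p, nb G p ∩ S = nb G p := by
    intro p
    rw [Finset.inter_eq_left]
    intro q hq
    rw [hS, Finset.mem_filter]
    exact ⟨Finset.mem_univ _, dg_pos (mem_nb.1 hq).symm⟩
  have hd := h.dens S
  simp only [hsub] at hd
  have hsw : ∑ p ∈ S, ∑ q ∈ nb G p, gT D G q p = ∑ p ∈ S, ∑ q ∈ nb G p, gT D G p q := by
    refine Finset.sum_comm' ?_
    intro p q
    rw [mem_nb, mem_nb]
    simp only [hS, Finset.mem_filter, Finset.mem_univ, true_and]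
    constructor
    · rintro ⟨a, b⟩; exact ⟨b.symm, dg_pos b.symm⟩
    · rintro ⟨a, b⟩; exact ⟨dg_pos a.symm, a.symm⟩
  unfold FT
  simp only [Finset.sum_sub_distrib, hsw, sub_self, sub_zero, ← Finset.mul_sum, Finset.sum_const]
  have hd' : ∑ p ∈ S, (dg G p : ℤ) ≤ 3 * S.card := by exact_mod_cast hd
  rw [nsmul_eq_mul]
  linarith

theorem MinC.F_zero {G : SimpleGraph V} (h : MinC D G) {w q : V} (a : G.Adj w q) : FT D G w = 0 := by
  have h0 : ∀ p ∈ Finset.univ.filter (fun p => 1 ≤ dg G p), 0 ≤ FT D G p := by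
    intro p hp
    rw [Finset.mem_filter] at hp
    obtain ⟨r, hr⟩ := Finset.card_pos.1 hp.2
    exact h.F_nonneg (mem_nb.1 hr)
  have h1 := le_antisymm (FT_sum h.hyp) (Finset.sum_nonneg h0)
  exact (Finset.sum_eq_zero_iff_of_nonneg h0).1 h1 w (Finset.mem_filter.2 ⟨Finset.mem_univ _, dg_pos a⟩)

theorem MinC.no_D {G : SimpleGraph V} (h : MinC D G) {w : V} (hd : dg G w = D) : False := by
  have hD := h.D7
  obtain ⟨q, hwq⟩ := Finset.card_pos.1 (by unfold dg at hd; omega : 0 < (nb G w).card)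
  have := (h.F_cls (w := w) (by omega)).2 (h.F_zero (mem_nb.1 hwq))
  have := aN_add_tN G w
  omega

theorem MinC.no_two {G : SimpleGraph V} (h : MinC D G) {v p : V} (hp : G.Adj v p) (hv2 : dg G v ≤ 2) :
    False := by
  obtain ⟨u, hu, hup⟩ := h.other hp
  have key : ∀ p u, G.Adj v p → G.Adj v u → u ≠ p → 3 ≤ dg G p ∧ aN G p = 2 ∧ tN G p ≤ 2 := by
    intro p u hp hu hup
    have hp3 : 3 ≤ dg G p := by
      by_contra hh
      exact h.no_D (h.slot_two hu.symm hv2 hp hup.symm (by omega))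
    have c := (h.F_cls hp3).2 (h.F_zero hp.symm)
    have e1 := aN_add_tN G p
    have e3 := h.a0 hp.symm
    have e4 : 1 ≤ tN G p := Finset.card_pos.2 ⟨v, Finset.mem_filter.2 ⟨mem_nb.2 hp.symm, hv2⟩⟩
    have : ¬ (aN G p = 1 ∧ tN G p ≤ 4) := fun q =>
      h.no_D (h.k3t q.1 q.2 hp.symm hv2 hu hup)
    omega
  have k1 := key p u hp hu hup
  have k2 := key u p hu hp hup.symm
  exact h.sm hv2 hp hu hup.symm k1.1 k2.1 k1.2.1.le k1.2.2 k2.2.1.le k2.2.2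

theorem MinC.three {G : SimpleGraph V} (h : MinC D G) {v p : V} (hp : G.Adj v p) : dg G v = 3 := by
  have h3 : 3 ≤ dg G v := by
    by_contra hh
    exact h.no_two hp (by omega)
  have c := (h.F_cls h3).2 (h.F_zero hp)
  have e1 := aN_add_tN G v
  have e4 : tN G v = 0 := by
    by_contra hh
    obtain ⟨r, hr⟩ := Finset.card_pos.1 (Nat.pos_of_ne_zero hh)
    rw [Finset.mem_filter, mem_nb] at hr
    exact h.no_two hr.1.symm hr.2
  omega

theorem nbset_ncard (G : SimpleGraph V) (v : V) : (G.neighborSet v).ncard = dg G v := by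
  unfold dg
  rw [← Set.ncard_coe_finset]
  congr 1
  ext r
  simp [mem_nb]

theorem MinC.false {G : SimpleGraph V} (h : MinC D G) : False := by
  by_cases he : ∃ v p, G.Adj v p
  · obtain ⟨v, p, hvp⟩ := he
    refine h.hyp.cub ⟨G, le_rfl, ⟨v, p, hvp⟩, ?_⟩
    rintro w ⟨q, hq⟩
    rw [nbset_ncard]
    exact h.three hq
  · push Not at he
    obtain ⟨A, hA⟩ := Finset.exists_subset_card_eq (s := (Finset.univ : Finset (Fin (3 * D)))) (n := D)
      (by simp; omega)
    exact h.bad ⟨fun _ => A, ⟨⟨fun p q a => absurd a (he p q), fun p q r x a => absurd a (he p q)⟩,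
      fun _ _ => hA.2, fun p hp => absurd hp (Finset.notMem_empty p)⟩⟩

theorem good_of_hyp (hD : 7 ≤ D) : ∀ (n : ℕ) (G : SimpleGraph V), ∑ p, dg G p = n → Hyp D G → Good D G := by
  intro n
  induction n using Nat.strong_induction_on with
  | _ n ih =>
    intro G hn hG
    by_contra hb
    exact MinC.false ⟨hG, hD, hb, fun G' h' hlt => ih _ (hn ▸ hlt) G' rfl h'⟩

theorem Good.color {G : SimpleGraph V} (hD : 7 ≤ D) (h : Good D G) : HasStrongColoring G (3 * D) := by
  obtain ⟨M, hM⟩ := h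
  have hS := hM.sys
  have hex : ∀ e : Sym2 V, ∃ c : Fin (3 * D), e ∈ G.edgeSet → ∀ v ∈ e, c ∈ M v := by
    intro e
    by_cases he : e ∈ G.edgeSet
    · induction e using Sym2.ind with
      | _ a b =>
        have := hS.one a b he
        obtain ⟨c, hc⟩ := Finset.card_pos.1 (by omega : 0 < (M a ∩ M b).card)
        rw [Finset.mem_inter] at hc
        refine ⟨c, fun _ v hv => ?_⟩
        rcases Sym2.mem_iff.1 hv with rfl | rfl
        · exact hc.1
        · exact hc.2
    · exact ⟨⟨0, by omega⟩, fun q => absurd q he⟩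
  choose C hC using hex
  refine ⟨C, ?_⟩
  have share : ∀ e ∈ G.edgeSet, ∀ e' ∈ G.edgeSet, e ≠ e' → ∀ v, v ∈ e → v ∈ e' → C e ≠ C e' := by
    intro e he e' he' hne v hv hv' heq
    obtain ⟨a, rfl⟩ := hv
    obtain ⟨b, rfl⟩ := hv'
    have hab : a ≠ b := fun q => hne (by rw [q])
    refine hS.inj v a b (C s(v, a)) he he' hab (hC _ he v (Sym2.mem_mk_left _ _))
      (hC _ he a (Sym2.mem_mk_right _ _)) ?_
    rw [heq]
    exact hC _ he' b (Sym2.mem_mk_right _ _)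
  rintro e he e' he' ⟨hne, hsh | ⟨f, hf, ⟨v, hve, hvf⟩, w, hwe, hwf⟩⟩
  · obtain ⟨v, h1, h2⟩ := hsh
    exact share e he e' he' hne v h1 h2
  · by_cases h1 : v ∈ e'
    · exact share e he e' he' hne v hve h1
    · intro heq
      have hvw : v ≠ w := fun q => h1 (q ▸ hwe)
      have hf' : f = s(v, w) := (Sym2.mem_and_mem_iff hvw).1 ⟨hvf, hwf⟩
      subst hf'
      obtain ⟨a, rfl⟩ := hve
      by_cases haw : a = w
      · subst haw
        exact share _ he e' he' hne a (Sym2.mem_mk_right _ _) hwe heq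
      · refine hS.inj v a w (C s(v, a)) he hf haw (hC _ he v (Sym2.mem_mk_left _ _))
          (hC _ he a (Sym2.mem_mk_right _ _)) ?_
        rw [heq]
        exact hC _ he' w hwe

theorem edges_in (G : SimpleGraph V) (S : Finset V) :
    ∑ p ∈ S, (nb G p ∩ S).card = 2 * {e ∈ G.edgeSet | ∀ v ∈ e, v ∈ S}.ncard := by
  let H : SimpleGraph V :=
    { Adj := fun a b => G.Adj a b ∧ a ∈ S ∧ b ∈ S
      symm := ⟨fun a b h => ⟨h.1.symm, h.2.2, h.2.1⟩⟩
      loopless := ⟨fun a h => G.loopless.irrefl a h.1⟩ }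
  have h1 := H.sum_degrees_eq_twice_card_edges
  have h2 : ∀ p, H.degree p = if p ∈ S then (nb G p ∩ S).card else 0 := by
    intro p
    rw [← SimpleGraph.card_neighborFinset_eq_degree]
    split_ifs with hp
    · congr 1
      ext q
      rw [SimpleGraph.mem_neighborFinset, Finset.mem_inter, mem_nb]
      exact ⟨fun q => ⟨q.1, q.2.2⟩, fun q => ⟨q.1, hp, q.2⟩⟩
    · rw [Finset.card_eq_zero]
      ext q
      rw [SimpleGraph.mem_neighborFinset]
      exact ⟨fun q => absurd q.2.1 hp, fun q => absurd q (Finset.notMem_empty _)⟩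
  have h3 : {e ∈ G.edgeSet | ∀ v ∈ e, v ∈ S} = (H.edgeFinset : Set (Sym2 V)) := by
    rw [SimpleGraph.coe_edgeFinset]
    ext e
    induction e using Sym2.ind with
    | _ a b =>
      simp only [Set.mem_setOf_eq, SimpleGraph.mem_edgeSet, Sym2.mem_iff]
      constructor
      · rintro ⟨x, y⟩; exact ⟨x, y a (Or.inl rfl), y b (Or.inr rfl)⟩
      · rintro ⟨x, y, z⟩
        refine ⟨x, ?_⟩
        rintro v (rfl | rfl)
        · exact y
        · exact z
  rw [h3, Set.ncard_coe_finset, ← h1]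
  simp only [h2]
  rw [← Finset.sum_filter]
  congr 1
  ext p
  simp

theorem dens_of_mad {G : SimpleGraph V} (hm : mad G ≤ 3) (S : Finset V) :
    ∑ p ∈ S, (nb G p ∩ S).card ≤ 3 * S.card := by
  rcases S.eq_empty_or_nonempty with rfl | hne
  · simp
  have hbdd : BddAbove {x : ℝ | ∃ A : Finset V, A.Nonempty ∧
    x = 2 * ({e ∈ G.edgeSet | ∀ v ∈ e, v ∈ A}.ncard : ℝ) / (A.card : ℝ)} := by
    refine Set.Finite.bddAbove (Set.Finite.subset (Set.finite_range
      (fun A : Finset V => 2 * ({e ∈ G.edgeSet | ∀ v ∈ e, v ∈ A}.ncard : ℝ) / (A.card : ℝ))) ?_)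
    rintro x ⟨A, _, rfl⟩
    exact ⟨A, rfl⟩
  have h1 : 2 * ({e ∈ G.edgeSet | ∀ v ∈ e, v ∈ S}.ncard : ℝ) / (S.card : ℝ) ≤ 3 :=
    (le_csSup hbdd ⟨S, hne, rfl⟩).trans hm
  have hc : (0 : ℝ) < S.card := by exact_mod_cast Finset.card_pos.2 hne
  rw [div_le_iff₀ hc] at h1
  rw [edges_in]
  exact_mod_cast h1

end

/-- If `Δ ≥ 7` and `G` has no 3-regular subgraph, maximum degree at most `Δ` and
maximum average degree at most `3`, then `χ'_s(G) ≤ 3Δ`. -/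
theorem strong_chromatic_index_mad_le_three_no_cubic {V : Type*} [Fintype V] (Δ : ℕ)
    (hΔ : 7 ≤ Δ) (G : SimpleGraph V) (hcubic : ¬ Has3RegularSubgraph G)
    (hdeg : G.maxDegree ≤ Δ) (hmad : mad G ≤ 3) :
    strongChromaticIndex G ≤ 3 * Δ := by
  have hH : Hyp Δ G := by
    refine ⟨fun p => ?_, dens_of_mad hmad, hcubic⟩
    refine le_trans ?_ ((G.degree_le_maxDegree p).trans hdeg)
    rw [← nbset_ncard, ← SimpleGraph.card_neighborFinset_eq_degree, ← Set.ncard_coe_finset,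
      SimpleGraph.coe_neighborFinset]
  exact Nat.sInf_le ((good_of_hyp hΔ _ G rfl hH).color hΔ)

end StrongEC
end

section
/- Let Δ ≥ 4 be an integer and let K'_Δ(4) be the graph obtained from the complete graph on vertex set {v₁, v₂, v₃, v₄} by subdividing the edge v₃v₄ with a new vertex u and then attaching Δ − 3 new pendant vertices of degree 1 to each of v₁, v₂, v₃. Then K'_Δ(4) has maximum degree Δ, Mad(K'_Δ(4)) = 14/5, and χ'_s(K'_Δ(4)) = 3Δ − 2. -/
open scoped Classical

namespace StrongEC

/-- The auxiliary relation for `K'_Δ(4)`.  The five left vertices are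
`v₁ = 0, v₂ = 1, v₃ = 2, v₄ = 3` and the subdivision vertex `u = 4`; the edge `v₃v₄` of
`K₄` is subdivided by `u`, and each of `v₁, v₂, v₃` gets `Δ - 3` pendant vertices. -/
def kpRel (Δ : ℕ) :
    (Fin 5 ⊕ Fin 3 × Fin (Δ - 3)) → (Fin 5 ⊕ Fin 3 × Fin (Δ - 3)) → Prop
  | Sum.inl a, Sum.inl b =>
      s(a, b) ∈ ({s(0, 1), s(0, 2), s(0, 3), s(1, 2), s(1, 3), s(2, 4), s(3, 4)} :
        Finset (Sym2 (Fin 5)))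
  | Sum.inl a, Sum.inr p => a.val = p.1.val
  | _, _ => False

/-- The graph `K'_Δ(4)`: `K₄` with the edge `v₃v₄` subdivided by a new vertex `u`, and
`Δ - 3` pendant vertices attached to each of `v₁, v₂, v₃`. -/
def KP (Δ : ℕ) : SimpleGraph (Fin 5 ⊕ Fin 3 × Fin (Δ - 3)) :=
  SimpleGraph.fromRel (kpRel Δ)

/-- The seven edges of the subdivided `K₄`. -/
def core : Finset (Sym2 (Fin 5)) :=
  {s(0, 1), s(0, 2), s(0, 3), s(1, 2), s(1, 3), s(2, 4), s(3, 4)}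

/-- The vertex of the core to which a pendant vertex is attached. -/
def emb (i : Fin 3) : Fin 5 := Fin.castLE (by norm_num) i

/-- The pendant edge at a pendant vertex. -/
def pend_s11 {n : ℕ} (p : Fin 3 × Fin n) : Sym2 (Fin 5 ⊕ Fin 3 × Fin n) :=
  s(Sum.inl (emb p.1), Sum.inr p)

theorem core_irrefl : ∀ a : Fin 5, s(a, a) ∉ core := by decide

theorem adj_ll (Δ : ℕ) (a b : Fin 5) :
    (KP Δ).Adj (Sum.inl a) (Sum.inl b) ↔ s(a, b) ∈ core := by
  have h : s(b, a) = s(a, b) := Sym2.eq_swap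
  have : (KP Δ).Adj (Sum.inl a) (Sum.inl b) ↔
      (Sum.inl a : Fin 5 ⊕ Fin 3 × Fin (Δ - 3)) ≠ Sum.inl b ∧
        (s(a, b) ∈ core ∨ s(b, a) ∈ core) := Iff.rfl
  rw [this, h, or_self]
  refine ⟨fun h => h.2, fun h => ⟨?_, h⟩⟩
  rintro heq
  cases heq
  exact core_irrefl _ h

theorem adj_lr (Δ : ℕ) (a : Fin 5) (p : Fin 3 × Fin (Δ - 3)) :
    (KP Δ).Adj (Sum.inl a) (Sum.inr p) ↔ a = emb p.1 := by
  have : (KP Δ).Adj (Sum.inl a) (Sum.inr p) ↔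
      (Sum.inl a : Fin 5 ⊕ Fin 3 × Fin (Δ - 3)) ≠ Sum.inr p ∧
        (a.val = p.1.val ∨ False) := Iff.rfl
  rw [this]
  simp [emb, Fin.ext_iff]

theorem adj_rr (Δ : ℕ) (p q : Fin 3 × Fin (Δ - 3)) :
    ¬ (KP Δ).Adj (Sum.inr p) (Sum.inr q) := by
  have : (KP Δ).Adj (Sum.inr p) (Sum.inr q) ↔
      (Sum.inr p : Fin 5 ⊕ Fin 3 × Fin (Δ - 3)) ≠ Sum.inr q ∧
        (False ∨ False) := Iff.rfl
  rw [this]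
  simp

theorem mem_edge (Δ : ℕ) (e : Sym2 (Fin 5 ⊕ Fin 3 × Fin (Δ - 3))) :
    e ∈ (KP Δ).edgeSet ↔ (∃ c ∈ core, c.map Sum.inl = e) ∨ ∃ p, pend_s11 p = e := by
  constructor
  · induction e using Sym2.ind with
    | _ x y =>
      rw [SimpleGraph.mem_edgeSet]
      rcases x with a | p <;> rcases y with b | q
      · rw [adj_ll]
        intro h
        exact Or.inl ⟨_, h, by simp⟩
      · rw [adj_lr]
        rintro rfl
        exact Or.inr ⟨q, rfl⟩
      · rw [SimpleGraph.adj_comm, adj_lr]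
        rintro rfl
        exact Or.inr ⟨p, Sym2.eq_swap⟩
      · intro h
        exact absurd h (adj_rr _ _ _)
  · rintro (⟨c, hc, rfl⟩ | ⟨p, rfl⟩)
    · induction c using Sym2.ind with
      | _ x y =>
        rw [Sym2.map_mk, SimpleGraph.mem_edgeSet]
        exact (adj_ll _ _ _).2 hc
    · exact (adj_lr _ _ _).2 rfl

theorem pend_inj {n : ℕ} : Function.Injective (pend_s11 (n := n)) := by
  intro p q h
  have h' : emb p.1 = emb q.1 ∧ p = q := by simpa [pend_s11] using h
  exact h'.2

theorem mapinl_inj {n : ℕ} :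
    Function.Injective (Sym2.map (Sum.inl : Fin 5 → Fin 5 ⊕ Fin 3 × Fin n)) :=
  Sym2.map.injective Sum.inl_injective

theorem map_ne_pend {n : ℕ} (c : Sym2 (Fin 5)) (p : Fin 3 × Fin n) :
    c.map Sum.inl ≠ pend_s11 p := by
  induction c using Sym2.ind with
  | _ x y => simp [pend_s11]

/-- The edge set as a finset. -/
noncomputable def edges (n : ℕ) : Finset (Sym2 (Fin 5 ⊕ Fin 3 × Fin n)) :=
  core.image (Sym2.map Sum.inl) ∪ Finset.univ.image pend_s11

theorem coe_edges (Δ : ℕ) : (KP Δ).edgeSet = (edges (Δ - 3) : Set _) := by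
  ext e
  rw [mem_edge]
  simp [edges]

theorem card_edges (n : ℕ) : (edges n).card = 7 + 3 * n := by
  rw [edges, Finset.card_union_of_disjoint, Finset.card_image_of_injective _ mapinl_inj,
    Finset.card_image_of_injective _ pend_inj]
  · have : core.card = 7 := by decide
    simp [this]
  · rw [Finset.disjoint_left]
    intro e h1 h2
    simp only [Finset.mem_image] at h1 h2
    obtain ⟨c, -, rfl⟩ := h1
    obtain ⟨p, -, hp⟩ := h2
    exact map_ne_pend _ _ hp.symm

theorem core_core : ∀ a b c d : Fin 5, s(a, b) ∈ core → s(c, d) ∈ core →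
    (a = c ∨ s(a, c) ∈ core) ∨ (a = d ∨ s(a, d) ∈ core) ∨
      (b = c ∨ s(b, c) ∈ core) ∨ (b = d ∨ s(b, d) ∈ core) := by decide

theorem core_pend : ∀ (a b : Fin 5) (i : Fin 3), s(a, b) ∈ core →
    (a = emb i ∨ s(a, emb i) ∈ core) ∨ (b = emb i ∨ s(b, emb i) ∈ core) := by decide

theorem pend_pend : ∀ i j : Fin 3, emb i = emb j ∨ s(emb i, emb j) ∈ core := by decide

theorem conflict_of (Δ : ℕ) (e e' : Sym2 (Fin 5 ⊕ Fin 3 × Fin (Δ - 3))) (hne : e ≠ e')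
    (a b : Fin 5) (ha : Sum.inl a ∈ e) (hb : Sum.inl b ∈ e')
    (h : a = b ∨ s(a, b) ∈ core) : Conflict (KP Δ) e e' := by
  refine ⟨hne, ?_⟩
  rcases h with rfl | h
  · exact Or.inl ⟨_, ha, hb⟩
  · exact Or.inr ⟨s(Sum.inl a, Sum.inl b), (adj_ll _ _ _).2 h,
      ⟨_, ha, Sym2.mem_mk_left _ _⟩, ⟨_, hb, Sym2.mem_mk_right _ _⟩⟩

theorem conflict_symm {V : Type*} {G : SimpleGraph V} {e e' : Sym2 V}
    (h : Conflict G e e') : Conflict G e' e := by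
  obtain ⟨hne, h⟩ := h
  refine ⟨hne.symm, ?_⟩
  rcases h with ⟨v, h1, h2⟩ | ⟨f, hf, h1, h2⟩
  · exact Or.inl ⟨v, h2, h1⟩
  · exact Or.inr ⟨f, hf, h2, h1⟩

theorem conflict_cp (Δ : ℕ) (c : Sym2 (Fin 5)) (hc : c ∈ core) (p : Fin 3 × Fin (Δ - 3)) :
    Conflict (KP Δ) (c.map Sum.inl) (pend_s11 p) := by
  have hne := map_ne_pend c p
  induction c using Sym2.ind with
  | _ a b =>
    rcases core_pend a b p.1 hc with h | h
    · exact conflict_of Δ _ _ hne _ _ (by simp) (by simp [pend_s11]) h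
    · exact conflict_of Δ _ _ hne _ _ (by simp) (by simp [pend_s11]) h

theorem all_conflict (Δ : ℕ) (e e' : Sym2 (Fin 5 ⊕ Fin 3 × Fin (Δ - 3)))
    (he : e ∈ (KP Δ).edgeSet) (he' : e' ∈ (KP Δ).edgeSet) (hne : e ≠ e') :
    Conflict (KP Δ) e e' := by
  rw [mem_edge] at he he'
  rcases he with ⟨c, hc, rfl⟩ | ⟨p, rfl⟩ <;> rcases he' with ⟨d, hd, rfl⟩ | ⟨q, rfl⟩
  · induction c using Sym2.ind with
    | _ a b =>
    induction d using Sym2.ind with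
    | _ a' b' =>
    rcases core_core a b a' b' hc hd with h | h | h | h <;>
    exact conflict_of Δ _ _ hne _ _ (by simp) (by simp) h
  · exact conflict_cp Δ c hc q
  · exact conflict_symm (conflict_cp Δ d hd p)
  · exact conflict_of Δ _ _ hne _ _ (by simp [pend_s11]) (by simp [pend_s11]) (pend_pend p.1 q.1)

theorem index_eq (Δ : ℕ) (hΔ : 4 ≤ Δ) : strongChromaticIndex (KP Δ) = 3 * Δ - 2 := by
  have hcard : (edges (Δ - 3)).card = 3 * Δ - 2 := by rw [card_edges]; omega
  apply le_antisymm
  · apply Nat.sInf_le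
    have f := (edges (Δ - 3)).equivFinOfCardEq hcard
    refine ⟨fun e => if h : e ∈ edges (Δ - 3) then f ⟨e, h⟩ else ⟨0, by omega⟩, ?_⟩
    intro e he e' he' hc
    rw [coe_edges, Finset.mem_coe] at he he'
    simp only [he, he', dif_pos]
    intro h
    exact hc.1 (congrArg Subtype.val (f.injective h))
  · refine le_csInf ⟨3 * Δ - 2, ?_⟩ ?_
    · have f := (edges (Δ - 3)).equivFinOfCardEq hcard
      refine ⟨fun e => if h : e ∈ edges (Δ - 3) then f ⟨e, h⟩ else ⟨0, by omega⟩, ?_⟩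
      intro e he e' he' hc
      rw [coe_edges, Finset.mem_coe] at he he'
      simp only [he, he', dif_pos]
      intro h
      exact hc.1 (congrArg Subtype.val (f.injective h))
    · rintro k ⟨C, hC⟩
      rw [← hcard]
      have : Set.InjOn C (edges (Δ - 3) : Set _) := by
        intro e he e' he' h
        by_contra hne
        rw [← coe_edges] at he he'
        exact hC e he e' he' (all_conflict Δ e e' he he' hne) h
      have := Finset.card_le_card_of_injOn C (t := Finset.univ)
        (fun _ _ => Finset.mem_univ _) this
      simpa using this

theorem core_density : ∀ S : Finset (Fin 5),
    5 * (core.filter (fun c => c ∈ S.sym2)).card ≤ 7 * S.card := by decide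

theorem mad_upper (Δ : ℕ) (A : Finset (Fin 5 ⊕ Fin 3 × Fin (Δ - 3))) :
    5 * ({e ∈ (KP Δ).edgeSet | ∀ v ∈ e, v ∈ A}.ncard) ≤ 7 * A.card := by
  have hsub : {e ∈ (KP Δ).edgeSet | ∀ v ∈ e, v ∈ A} ⊆
      (((core.filter (fun c => c ∈ A.toLeft.sym2)).image (Sym2.map Sum.inl) ∪
        A.toRight.image pend_s11 : Finset (Sym2 (Fin 5 ⊕ Fin 3 × Fin (Δ - 3)))) : Set _) := by
    rintro e ⟨he, hA⟩
    rw [Finset.mem_coe, Finset.mem_union]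
    rcases (mem_edge Δ e).1 he with ⟨c, hc, rfl⟩ | ⟨p, rfl⟩
    · left
      refine Finset.mem_image_of_mem _ (Finset.mem_filter.2 ⟨hc, ?_⟩)
      rw [Finset.mem_sym2_iff]
      intro a ha
      rw [Finset.mem_toLeft]
      exact hA _ (Sym2.mem_map.2 ⟨a, ha, rfl⟩)
    · right
      refine Finset.mem_image_of_mem _ ?_
      rw [Finset.mem_toRight]
      exact hA _ (by simp [pend_s11])
  have h1 := Set.ncard_le_ncard hsub (Finset.finite_toSet _)
  rw [Set.ncard_coe_finset] at h1
  have h2 := h1.trans (Finset.card_union_le _ _)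
  rw [Finset.card_image_of_injective _ mapinl_inj,
    Finset.card_image_of_injective _ pend_inj] at h2
  have h3 := core_density A.toLeft
  have h4 := A.card_toLeft_add_card_toRight
  omega

theorem mad_eq (Δ : ℕ) : mad (KP Δ) = 14 / 5 := by
  have hup : ∀ x ∈ {x : ℝ | ∃ A : Finset (Fin 5 ⊕ Fin 3 × Fin (Δ - 3)), A.Nonempty ∧
    x = 2 * ({e ∈ (KP Δ).edgeSet | ∀ v ∈ e, v ∈ A}.ncard : ℝ) / (A.card : ℝ)},
      x ≤ 14 / 5 := by
    rintro x ⟨A, hA, rfl⟩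
    have hpos : (0 : ℝ) < A.card := by exact_mod_cast hA.card_pos
    rw [div_le_iff₀ hpos]
    have : (5 : ℝ) * ({e ∈ (KP Δ).edgeSet | ∀ v ∈ e, v ∈ A}.ncard : ℝ) ≤ 7 * A.card := by
      exact_mod_cast mad_upper Δ A
    linarith
  apply le_antisymm
  · refine csSup_le ⟨_, {Sum.inl 0}, by simp, rfl⟩ hup
  · refine le_csSup_of_le ⟨_, hup⟩ ⟨Finset.univ.image Sum.inl, ⟨Sum.inl 0, by simp⟩, rfl⟩ ?_
    have hc : (Finset.univ.image (Sum.inl : Fin 5 → Fin 5 ⊕ Fin 3 × Fin (Δ - 3))).card = 5 := by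
      rw [Finset.card_image_of_injective _ Sum.inl_injective]; simp
    have hsub : ((core.image (Sym2.map Sum.inl) :
        Finset (Sym2 (Fin 5 ⊕ Fin 3 × Fin (Δ - 3)))) : Set _) ⊆
        {e ∈ (KP Δ).edgeSet | ∀ v ∈ e, v ∈ (Finset.univ.image
          (Sum.inl : Fin 5 → Fin 5 ⊕ Fin 3 × Fin (Δ - 3)))} := by
      intro e he
      rw [Finset.mem_coe, Finset.mem_image] at he
      obtain ⟨c, hc, rfl⟩ := he
      refine ⟨(mem_edge _ _).2 (Or.inl ⟨c, hc, rfl⟩), ?_⟩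
      intro v hv
      obtain ⟨a, -, rfl⟩ := Sym2.mem_map.1 hv
      simp
    have h1 := Set.ncard_le_ncard hsub (Set.toFinite _)
    rw [Set.ncard_coe_finset, Finset.card_image_of_injective _ mapinl_inj,
      show core.card = 7 by decide] at h1
    rw [hc, le_div_iff₀ (by norm_num)]
    have h2 : (7 : ℝ) ≤ ({e ∈ (KP Δ).edgeSet | ∀ v ∈ e, v ∈ (Finset.univ.image
          (Sum.inl : Fin 5 → Fin 5 ⊕ Fin 3 × Fin (Δ - 3)))}.ncard : ℝ) := by
      exact_mod_cast h1
    push_cast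
    linarith

theorem core_deg : ∀ a : Fin 5,
    (Finset.univ.filter (fun b => s(a, b) ∈ core)).card ≤ 3 := by decide

theorem degree_inl (Δ : ℕ) (a : Fin 5) : (KP Δ).degree (Sum.inl a) =
    (Finset.univ.filter (fun b => s(a, b) ∈ core)).card +
      (Finset.univ.filter (fun p : Fin 3 × Fin (Δ - 3) => a = emb p.1)).card := by
  rw [← Finset.card_disjSum, ← SimpleGraph.card_neighborFinset_eq_degree]
  congr 1
  ext x
  rw [SimpleGraph.mem_neighborFinset]
  rcases x with b | p
  · rw [adj_ll]; simp
  · rw [adj_lr]; simp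

theorem pend_count (n : ℕ) (i : Fin 3) :
    (Finset.univ.filter (fun p : Fin 3 × Fin n => emb i = emb p.1)).card = n := by
  have : (Finset.univ.filter (fun p : Fin 3 × Fin n => emb i = emb p.1)) =
      ({i} : Finset (Fin 3)) ×ˢ (Finset.univ : Finset (Fin n)) := by
    ext ⟨j, q⟩
    simp [emb, eq_comm]
  rw [this, Finset.card_product]
  simp

theorem degree_inr (Δ : ℕ) (p : Fin 3 × Fin (Δ - 3)) : (KP Δ).degree (Sum.inr p) ≤ 1 := by
  rw [← SimpleGraph.card_neighborFinset_eq_degree, Finset.card_le_one]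
  intro x hx y hy
  rw [SimpleGraph.mem_neighborFinset, SimpleGraph.adj_comm] at hx hy
  rcases x with a | q
  · rcases y with b | q
    · rw [adj_lr] at hx hy
      rw [hx, hy]
    · exact absurd hy (adj_rr _ _ _)
  · exact absurd hx (adj_rr _ _ _)

theorem maxDegree_eq (Δ : ℕ) (hΔ : 4 ≤ Δ) : (KP Δ).maxDegree = Δ := by
  apply le_antisymm
  · apply SimpleGraph.maxDegree_le_of_forall_degree_le
    rintro (a | p)
    · rw [degree_inl]
      have h1 := core_deg a
      have h2 : (Finset.univ.filter
          (fun p : Fin 3 × Fin (Δ - 3) => a = emb p.1)).card ≤ Δ - 3 := by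
        by_cases h : ∃ i, a = emb i
        · obtain ⟨i, rfl⟩ := h
          rw [pend_count]
        · rw [Finset.filter_false_of_mem]
          · simp
          · exact fun p _ hp => h ⟨p.1, hp⟩
      omega
    · exact (degree_inr Δ p).trans (by omega)
  · refine le_trans ?_ ((KP Δ).degree_le_maxDegree (Sum.inl (emb 0)))
    rw [degree_inl, pend_count,
      show (Finset.univ.filter (fun b => s(emb 0, b) ∈ core)).card = 3 by decide]
    omega

/-- For `Δ ≥ 4`, the graph `K'_Δ(4)` has maximum degree `Δ`, maximum average degree
`14/5`, and strong chromatic index `3Δ - 2`. -/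
theorem KP_properties (Δ : ℕ) (hΔ : 4 ≤ Δ) :
    (KP Δ).maxDegree = Δ ∧ mad (KP Δ) = 14 / 5 ∧
      strongChromaticIndex (KP Δ) = 3 * Δ - 2 := by
  exact ⟨maxDegree_eq Δ hΔ, mad_eq Δ, index_eq Δ hΔ⟩

end StrongEC
end
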